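/- For every t ≥ 1, the space J^{w,Co₀}_{*,Λ,t} of Conway invariant weak Jacobi forms of integral weight and index t is a free module of rank s(t) over M_*(SL₂(ℤ)) = ℂ[E₄,E₆]; the q⁰-terms of any set of free generators are ℂ-linear combinations of the basic Conway orbits of index t and are linearly independent over ℂ; and J^{Co₀}_{*,Λ,t} is also a free module of the same rank s(t) over ℂ[E₄,E₆]. -/

import Mathlib

open Complex Matrix UpperHalfPlane
open scoped Manifold MatrixGroups Real Topology BigOperators

noncomputable section

/-- Vectors of the rank-24 lattice (coordinates w.r.t. a fixed basis). -/
abbrev LV := Fin 24 → ℤ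

/-- Complexified vectors. -/
abbrev CV := Fin 24 → ℂ

/-- The bilinear form attached to a Gram matrix `B`. -/
def pairZ (B : Matrix (Fin 24) (Fin 24) ℤ) (v u : LV) : ℤ := v ⬝ᵥ B.mulVec u

/-- The complex bilinear extension of the form. -/
def pairC (B : Matrix (Fin 24) (Fin 24) ℤ) (z w : CV) : ℂ :=
  z ⬝ᵥ ((B.map (Int.cast : ℤ → ℂ)).mulVec w)

/-- Inclusion of lattice vectors into complexified vectors. -/
def liftC (v : LV) : CV := fun i => (v i : ℂ)

/-- `B` is a Gram matrix of the Leech lattice: even, unimodular, positive definite of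
rank 24, with no vectors of norm 2 (no roots). -/
def IsLeech (B : Matrix (Fin 24) (Fin 24) ℤ) : Prop :=
  B.IsSymm ∧ B.det = 1 ∧ (∀ v : LV, v ≠ 0 → 0 < pairZ B v v) ∧
    (∀ v : LV, Even (pairZ B v v)) ∧ (∀ v : LV, pairZ B v v ≠ 2)

/-- The automorphism group `Co₀ = Aut(Λ)` of the lattice, as a set of integral matrices. -/
def ConwayGroup (B : Matrix (Fin 24) (Fin 24) ℤ) : Set (Matrix (Fin 24) (Fin 24) ℤ) :=
  {σ | IsUnit σ.det ∧ σᵀ * B * σ = B}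

/-- Action of an integral matrix on complexified vectors. -/
def actC (σ : Matrix (Fin 24) (Fin 24) ℤ) (z : CV) : CV :=
  (σ.map (Int.cast : ℤ → ℂ)).mulVec z

/-- `e(x) = exp(2πix)`. -/
def eC (x : ℂ) : ℂ := Complex.exp (2 * (Real.pi : ℂ) * Complex.I * x)

/-- The Fourier term `qⁿ ζ^ℓ`. -/
def fterm (B : Matrix (Fin 24) (Fin 24) ℤ) (n : ℕ) (ℓ : LV) (τ : UpperHalfPlane) (z : CV) : ℂ :=
  eC ((n : ℂ) * (τ : ℂ)) * eC (pairC B (liftC ℓ) z)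

/-- Lower-left entry of `A ∈ SL(2,ℤ)`, as a complex number. -/
def slc (A : SL(2, ℤ)) : ℂ := ((A : Matrix (Fin 2) (Fin 2) ℤ) 1 0 : ℤ)

/-- Lower-right entry of `A ∈ SL(2,ℤ)`, as a complex number. -/
def sld (A : SL(2, ℤ)) : ℂ := ((A : Matrix (Fin 2) (Fin 2) ℤ) 1 1 : ℤ)

/-- The automorphy factor `cτ + d`. -/
def jfactor (A : SL(2, ℤ)) (τ : UpperHalfPlane) : ℂ := slc A * (τ : ℂ) + sld A

/-- `φ : ℍ × (Λ⊗ℂ) → ℂ` is a Conway invariant weak Jacobi form of weight `k` and index `t`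
with Fourier coefficients `f`. -/
structure IsJacobiFormWith (B : Matrix (Fin 24) (Fin 24) ℤ) (k : ℤ) (t : ℕ)
    (φ : UpperHalfPlane → CV → ℂ) (f : ℕ → LV → ℂ) : Prop where
  holo_tau : ∀ z : CV, MDifferentiable 𝓘(ℂ) 𝓘(ℂ) fun τ : UpperHalfPlane => φ τ z
  holo_z : ∀ τ : UpperHalfPlane, Differentiable ℂ (φ τ)
  conway_invar : ∀ σ ∈ ConwayGroup B, ∀ (τ : UpperHalfPlane) (z : CV), φ τ (actC σ z) = φ τ z
  quasi_periodic : ∀ (x y : LV) (τ : UpperHalfPlane) (z : CV),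
    φ τ (z + (τ : ℂ) • liftC x + liftC y) =
      Complex.exp (-(t : ℂ) * (Real.pi : ℂ) * Complex.I * (pairZ B x x : ℂ) * (τ : ℂ)
        - 2 * (t : ℂ) * (Real.pi : ℂ) * Complex.I * pairC B (liftC x) z) * φ τ z
  modular : ∀ (A : SL(2, ℤ)) (τ : UpperHalfPlane) (z : CV),
    φ (A • τ) ((jfactor A τ)⁻¹ • z) =
      (jfactor A τ) ^ k *
        Complex.exp ((t : ℂ) * (Real.pi : ℂ) * Complex.I * slc A * pairC B z z / jfactor A τ) *
        φ τ z
  expansion : ∀ (τ : UpperHalfPlane) (z : CV),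
    HasSum (fun p : ℕ × LV => f p.1 p.2 * fterm B p.1 p.2 τ z) (φ τ z)

/-- Conway invariant weak Jacobi forms. -/
def IsWeakJacobiForm (B : Matrix (Fin 24) (Fin 24) ℤ) (k : ℤ) (t : ℕ)
    (φ : UpperHalfPlane → CV → ℂ) : Prop :=
  ∃ f, IsJacobiFormWith B k t φ f

/-- Conway invariant holomorphic Jacobi forms. -/
def IsHolJacobiForm (B : Matrix (Fin 24) (Fin 24) ℤ) (k : ℤ) (t : ℕ)
    (φ : UpperHalfPlane → CV → ℂ) : Prop :=
  ∃ f, IsJacobiFormWith B k t φ f ∧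
    ∀ (n : ℕ) (ℓ : LV), 2 * (n : ℤ) * t - pairZ B ℓ ℓ < 0 → f n ℓ = 0

/-- Modular forms of weight `k` on `SL₂(ℤ)`; the ring of all of them is `ℂ[E₄,E₆]`. -/
abbrev MForm (k : ℤ) := ModularForm (CongruenceSubgroup.Gamma 1) k

/-- The family `φ i` (of weights `w i`) freely generates the module of all forms satisfying
`P` over the ring `M_*(SL₂(ℤ)) = ℂ[E₄,E₆]` of modular forms on `SL₂(ℤ)`. -/
def FreelyGenerates (P : ℤ → (UpperHalfPlane → CV → ℂ) → Prop) {n : ℕ}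
    (w : Fin n → ℤ) (φ : Fin n → UpperHalfPlane → CV → ℂ) : Prop :=
  (∀ i, P (w i) (φ i)) ∧
  ∀ (k : ℤ) (ψ : UpperHalfPlane → CV → ℂ), P k ψ →
    ∃! g : (i : Fin n) → MForm (k - w i),
      ∀ (τ : UpperHalfPlane) (z : CV), ψ τ z = ∑ i, (g i) τ * φ i τ z

/-- The point `(aτ+b)/d` of the upper half-plane (for `a, d > 0`). -/
def heckePt (a d b : ℕ) (τ : UpperHalfPlane) : UpperHalfPlane :=
  if h : 0 < ((((a : ℂ) * (τ : ℂ) + (b : ℂ)) / (d : ℂ)).im) then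
    ⟨((a : ℂ) * (τ : ℂ) + (b : ℂ)) / (d : ℂ), h⟩ else τ

/-- The Hecke operator `T₋(m)` on Jacobi forms of weight `k`. -/
def heckeOp (k : ℤ) (m : ℕ) (φ : UpperHalfPlane → CV → ℂ) : UpperHalfPlane → CV → ℂ :=
  fun τ z => (m : ℂ)⁻¹ * ∑ d ∈ m.divisors, ∑ b ∈ Finset.range d,
    ((m / d : ℕ) : ℂ) ^ k * φ (heckePt (m / d) d b τ) (((m / d : ℕ) : ℂ) • z)

/-- The Jacobi theta function `Θ_Λ = A₁` of the lattice. -/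
def thetaLeech (B : Matrix (Fin 24) (Fin 24) ℤ) : UpperHalfPlane → CV → ℂ := fun τ z =>
  ∑' ℓ : LV, Complex.exp ((Real.pi : ℂ) * Complex.I * (pairZ B ℓ ℓ : ℂ) * (τ : ℂ)
    + 2 * (Real.pi : ℂ) * Complex.I * pairC B (liftC ℓ) z)

/-- `σ_k(n) = Σ_{d ∣ n} d^k`. -/
def sigmaNat (k n : ℕ) : ℕ := ∑ d ∈ n.divisors, d ^ k

/-- `A_t = σ₁₁(t)⁻¹ (A₁ | T₋(t))`, a holomorphic Jacobi form of weight 12 and index `t`. -/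
def Aform (B : Matrix (Fin 24) (Fin 24) ℤ) (t : ℕ) : UpperHalfPlane → CV → ℂ := fun τ z =>
  ((sigmaNat 11 t : ℂ))⁻¹ * heckeOp 12 t (thetaLeech B) τ z

/-- The quasimodular Eisenstein series `E₂`. -/
def E2 : UpperHalfPlane → ℂ := fun τ =>
  1 - 24 * ∑' n : ℕ, (sigmaNat 1 (n + 1) : ℂ) * eC (((n : ℂ) + 1) * (τ : ℂ))

/-- The discriminant cusp form `Δ(τ) = q ∏ (1-qⁿ)^24`. -/
def DeltaForm : UpperHalfPlane → ℂ := fun τ =>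
  eC (τ : ℂ) * ∏' n : ℕ, (1 - eC (((n : ℂ) + 1) * (τ : ℂ))) ^ 24

/-- `aτ`. -/
def scaleH (a : ℕ) (τ : UpperHalfPlane) : UpperHalfPlane := heckePt a 1 0 τ

/-- `(τ+j)/t`. -/
def sliceH (t j : ℕ) (τ : UpperHalfPlane) : UpperHalfPlane := heckePt 1 t j τ

/-- `f₂(τ) = (tE₂(tτ) - E₂(τ))/(t-1)`, a modular form of weight 2 on `Γ₀(t)`. -/
def f2w (t : ℕ) (τ : UpperHalfPlane) : ℂ := ((t : ℂ) * E2 (scaleH t τ) - E2 τ) / ((t : ℂ) - 1)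

/-- `B_t`, a holomorphic Jacobi form of weight 14 and index `t` (for `t` prime). -/
def Bform (B : Matrix (Fin 24) (Fin 24) ℤ) (t : ℕ) : UpperHalfPlane → CV → ℂ := fun τ z =>
  ((t : ℂ) ^ 12 / ((t : ℂ) ^ 12 - 1)) *
    (f2w t τ * thetaLeech B (scaleH t τ) ((t : ℂ) • z)
      - (t : ℂ) ^ (-13 : ℤ) *
        ∑ j ∈ Finset.range t, f2w t (sliceH t j τ) * thetaLeech B (sliceH t j τ) z)

/-- Fourier coefficients of `E₂`. -/
def e2coeff : ℕ → ℂ := fun m => if m = 0 then 1 else -24 * (sigmaNat 1 m : ℂ)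

/-- Fourier coefficients of the image `H_k(φ)` of the modified heat operator applied to a
Jacobi form of weight `k` and index `t` with Fourier coefficients `f`:
`H_k(φ) = 𝓗(φ) + ((12-k)/12)E₂φ` where `𝓗` multiplies `f(n,ℓ)` by `n - (ℓ,ℓ)/(2t)`. -/
def heatCoeff (B : Matrix (Fin 24) (Fin 24) ℤ) (k : ℤ) (t : ℕ) (f : ℕ → LV → ℂ) :
    ℕ → LV → ℂ := fun n ℓ =>
  ((n : ℂ) - (pairZ B ℓ ℓ : ℂ) / (2 * (t : ℂ))) * f n ℓ +
    ((12 - k : ℤ) : ℂ) / 12 * ∑ m ∈ Finset.range (n + 1), e2coeff m * f (n - m) ℓ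

/-- The function with Fourier coefficients `f`. -/
def fourierSeries (B : Matrix (Fin 24) (Fin 24) ℤ) (f : ℕ → LV → ℂ) :
    UpperHalfPlane → CV → ℂ := fun τ z =>
  ∑' p : ℕ × LV, f p.1 p.2 * fterm B p.1 p.2 τ z

/-- The family `Φ m = Φ_{12,m}` of Fourier–Jacobi coefficients of the Borcherds form `Φ₁₂`
at the Leech cusp:
`Δ(τ)·exp(−Σ_{m≥1}((Δ⁻¹A₁)|T₋(m))(τ,𝔷)e^{2πimω}) = Σ_{m≥0} Φ_{12,m}(τ,𝔷)e^{2πimω}`. -/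
def IsFJExpansionOfPhi12 (B : Matrix (Fin 24) (Fin 24) ℤ)
    (Φ : ℕ → UpperHalfPlane → CV → ℂ) : Prop :=
  ∀ (τ ω : UpperHalfPlane) (z : CV),
    HasSum (fun m : ℕ => Φ m τ z * eC ((m : ℂ) * (ω : ℂ)))
      (DeltaForm τ * Complex.exp
        (- ∑' m : ℕ, heckeOp 0 (m + 1) (fun σ w => thetaLeech B σ w / DeltaForm σ) τ z *
            eC (((m : ℂ) + 1) * (ω : ℂ))))

/-- `S_t`: the set of lattice vectors of minimal norm in their coset modulo `tΛ`. -/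
def minimalSet (B : Matrix (Fin 24) (Fin 24) ℤ) (t : ℕ) : Set LV :=
  {v | ∀ u : LV, (∃ w : LV, u = v + (t : ℤ) • w) → pairZ B v v ≤ pairZ B u u}

/-- `v` and `u` are conjugate modulo `tΛ` up to the Conway group. -/
def conjModT (B : Matrix (Fin 24) (Fin 24) ℤ) (t : ℕ) (v u : LV) : Prop :=
  ∃ σ ∈ ConwayGroup B, ∃ w : LV, v - σ.mulVec u = (t : ℤ) • w

/-- `s(t) = |(S_t/Co₀)/tΛ|`. -/
def sRank (B : Matrix (Fin 24) (Fin 24) ℤ) (t : ℕ) : ℕ :=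
  Nat.card (Quot (fun v u : minimalSet B t => conjModT B t v.1 u.1))

/-- `R` is a system of representatives for `(S_t/Co₀)/tΛ` (of minimal length). -/
def IsRepSystem (B : Matrix (Fin 24) (Fin 24) ℤ) (t : ℕ) (R : Finset LV) : Prop :=
  (↑R ⊆ minimalSet B t) ∧ ∀ v ∈ minimalSet B t, ∃! r, r ∈ R ∧ conjModT B t v r

/-- The Conway orbit of a lattice vector. -/
def orbitOf (B : Matrix (Fin 24) (Fin 24) ℤ) (v : LV) : Set LV :=
  {u | ∃ σ ∈ ConwayGroup B, u = σ.mulVec v}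

/-- `O` is a Conway orbit of Leech vectors of type `x` (i.e. norm `2x`) with `c` elements. -/
def OrbitData (B : Matrix (Fin 24) (Fin 24) ℤ) (O : Set LV) (x c : ℕ) : Prop :=
  (∃ v : LV, O = orbitOf B v) ∧ (∀ v ∈ O, pairZ B v v = 2 * (x : ℤ)) ∧ Nat.card O = c

/-- `W` is a `d`-dimensional subspace of the space of functions `ℍ × (Λ⊗ℂ) → ℂ`. -/
def SpanDimIs (W : (UpperHalfPlane → CV → ℂ) → Prop) (d : ℕ) : Prop :=
  ∃ φ : Fin d → UpperHalfPlane → CV → ℂ, (∀ i, W (φ i)) ∧ LinearIndependent ℂ φ ∧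
    ∀ ψ, W ψ → ∃ c : Fin d → ℂ, ψ = ∑ i, c i • φ i

/-!
*Upper bound.* The `q⁰`-term of a form of index `t` is supported on `S_t`, and its coefficients
are constant on the `s(t)` classes of `S_t`. If there were more than `s(t)` independent forms, some
combination of them, homogenized by modular forms, would have vanishing `q⁰`-term; dividing it by
`Δ` lowers the total weight of the family and keeps it independent. This cannot go on forever,
because weights of nonzero forms are bounded below.

*Freeness.* `E₄, E₆` is a regular sequence on each of the two graded modules, so forms that are
independent modulo `(E₄, E₆)` are independent; by the upper bound a maximal such family is finite,
and since weights are bounded below it generates.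

*Lower bound.* Multiplication by a power of `Δ` turns weak forms into holomorphic ones, so in both
cases it is enough to bound from below the dimension of the space of restrictions `ψ(i, ·)` of weak
forms. Let `∑ aᵢ² = t`, `∑ aᵢ bᵢ = 0` and `∑ bᵢ² = 0`. The Taylor coefficients in `s` of
`∏ᵢ Θ(τ, aᵢ 𝔷 + s bᵢ y)`, averaged over `y ∈ Co₀ · y₀`, are then weak Jacobi forms of index `t`. By
finite dimensionality the sum of the Taylor series at `τ = i` is again a combination of
restrictions. A suitable choice of `a, b, y₀` produces the averages of `Θ(i, 𝔷 + v/t)^t` over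
`Co₀ · v`, and these span at least `s(t)` dimensions by the linear independence of the characters
of `Λ/tΛ`.
-/

section ExponentialCharacter

lemma eC_add (x y : ℂ) : eC (x + y) = eC x * eC y := by
  rw [eC, eC, eC, ← Complex.exp_add, mul_add]

lemma eC_zero : eC 0 = 1 := by simp [eC]

lemma eC_ne_zero (x : ℂ) : eC x ≠ 0 := Complex.exp_ne_zero _

lemma eC_neg (x : ℂ) : eC (-x) = (eC x)⁻¹ := by
  rw [eC, eC, ← Complex.exp_neg, mul_neg]

lemma eC_sum {ι : Type*} (s : Finset ι) (f : ι → ℂ) :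
    eC (∑ i ∈ s, f i) = ∏ i ∈ s, eC (f i) := by
  simp only [eC, Finset.mul_sum, Complex.exp_sum]

lemma eC_nat_mul (n : ℕ) (x : ℂ) : eC (n * x) = eC x ^ n := by
  rw [eC, eC, ← Complex.exp_nat_mul]
  ring_nf

lemma eC_eq_one_iff {x : ℂ} : eC x = 1 ↔ ∃ n : ℤ, x = n := by
  rw [eC, Complex.exp_eq_one_iff]
  refine exists_congr fun n => ?_
  rw [mul_comm, mul_left_inj' two_pi_I_ne_zero]

lemma eC_intCast (n : ℤ) : eC n = 1 := eC_eq_one_iff.mpr ⟨n, rfl⟩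

lemma norm_eC (x : ℂ) : ‖eC x‖ = Real.exp (-2 * π * x.im) := by
  rw [eC, Complex.norm_exp]
  congr 1
  simp

lemma differentiable_eC : Differentiable ℂ eC := by
  unfold eC
  fun_prop

end ExponentialCharacter

/-! ### Poisson summation -/

section TorusFourier

open MeasureTheory UnitAddTorus

local instance : MeasureSpace UnitAddCircle := ⟨AddCircle.haarAddCircle⟩
local instance : IsProbabilityMeasure (volume : Measure UnitAddCircle) :=
  inferInstanceAs (IsProbabilityMeasure AddCircle.haarAddCircle)

variable {d : Type*}

/-- The projection `ℝᵈ → (ℝ/ℤ)ᵈ`. -/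
def toTorus (x : d → ℝ) : UnitAddTorus d := fun i => (x i : UnitAddCircle)

lemma isOpenQuotientMap_toTorus : IsOpenQuotientMap (toTorus (d := d)) :=
  IsOpenQuotientMap.piMap fun _ => QuotientAddGroup.isOpenQuotientMap_mk

lemma exists_int_add_of_toTorus_eq {x y : d → ℝ} (h : toTorus x = toTorus y) :
    ∃ l : d → ℤ, x = y + fun i => (l i : ℝ) := by
  have hcoord (i : d) : ∃ n : ℤ, x i = y i + n := by
    obtain ⟨n, hn⟩ := AddSubgroup.mem_zmultiples_iff.mp
      (QuotientAddGroup.eq_iff_sub_mem.mp (congrFun h i))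
    exact ⟨n, by rw [zsmul_one] at hn; linarith⟩
  choose l hl using hcoord
  exact ⟨l, funext hl⟩

/-- The half-open unit cube with lower corner `a`. -/
def unitBox (a : d → ℝ) : Set (d → ℝ) := {x | ∀ i, x i ∈ Set.Ioc (a i) (a i + 1)}

lemma iUnion_unitBox_int : ⋃ l : d → ℤ, unitBox (fun i => (l i : ℝ)) = Set.univ := by
  refine Set.eq_univ_of_forall fun x => Set.mem_iUnion.mpr ⟨fun i => ⌈x i⌉ - 1, fun i => ?_⟩
  push_cast
  exact ⟨by linarith [Int.ceil_lt_add_one (x i)], by linarith [Int.le_ceil (x i)]⟩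

lemma pairwise_disjoint_unitBox_int :
    Pairwise (Function.onFun Disjoint fun l : d → ℤ => unitBox fun i => (l i : ℝ)) := by
  refine fun l m hlm => Set.disjoint_left.mpr fun x hl hm => hlm (funext fun i => ?_)
  obtain ⟨hl₁, hl₂⟩ := hl i
  obtain ⟨hm₁, hm₂⟩ := hm i
  have h₁ : (l i : ℝ) < m i + 1 := hl₁.trans_le hm₂
  have h₂ : (m i : ℝ) < l i + 1 := hm₁.trans_le hl₂
  norm_cast at h₁ h₂
  omega

lemma measurableSet_unitBox [Finite d] (a : d → ℝ) : MeasurableSet (unitBox a) := by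
  have hpi : unitBox a = Set.univ.pi fun i => Set.Ioc (a i) (a i + 1) := by
    ext
    simp [unitBox]
  exact hpi ▸ MeasurableSet.univ_pi fun _ => measurableSet_Ioc

variable [Fintype d]

lemma setIntegral_unitBox_comp_add {E : Type*} [NormedAddCommGroup E] [NormedSpace ℝ E]
    (h : (d → ℝ) → E) (a : d → ℝ) :
    ∫ x in unitBox 0, h (x + a) = ∫ x in unitBox a, h x := by
  have hpre : (· + a) ⁻¹' unitBox a = unitBox (0 : d → ℝ) := by
    ext x
    simp [unitBox, add_comm]
  rw [← (measurePreserving_add_right volume a).setIntegral_preimage_emb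
    (measurableEmbedding_addRight a) h, hpre]

lemma hasSum_setIntegral_unitBox_comp_add {E : Type*} [NormedAddCommGroup E] [NormedSpace ℝ E]
    {h : (d → ℝ) → E} (hh : Integrable h) :
    HasSum (fun l : d → ℤ => ∫ x in unitBox 0, h (x + fun i => (l i : ℝ))) (∫ x, h x) := by
  simp only [setIntegral_unitBox_comp_add]
  rw [← setIntegral_univ, ← iUnion_unitBox_int]
  exact hasSum_integral_iUnion (fun _ => measurableSet_unitBox _) pairwise_disjoint_unitBox_int
    hh.integrableOn

lemma setIntegral_unitBox_tsum {h : (d → ℝ) → ℂ} (hh : Integrable h) :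
    ∫ x in unitBox 0, ∑' l : d → ℤ, h (x + fun i => (l i : ℝ)) = ∫ x, h x := by
  refine (hasSum_integral_of_summable_integral_norm
    (fun l => (hh.comp_add_right _).integrableOn) ?_).unique
    (hasSum_setIntegral_unitBox_comp_add hh)
  exact (hasSum_setIntegral_unitBox_comp_add hh.norm).summable

lemma mFourier_toTorus (n : d → ℤ) (x : d → ℝ) :
    mFourier n (toTorus x) = eC (∑ i, (n i : ℂ) * (x i : ℂ)) := by
  rw [eC_sum]
  refine Finset.prod_congr rfl fun i _ => ?_
  rw [toTorus, fourier_coe_apply, eC]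
  push_cast
  ring_nf

lemma mFourierCoeff_of_hasSum {c : (d → ℤ) → ℂ} {F : C(UnitAddTorus d, ℂ)}
    (h : HasSum (fun l => c l • mFourier l) F) (l : d → ℤ) : mFourierCoeff F l = c l := by
  classical
  have hL2 : HasSum (fun m => c m • mFourierLp 2 m) (ContinuousMap.toLp 2 volume ℂ F) := by
    simpa only [map_smul] using! (ContinuousMap.toLp (E := ℂ) 2 volume ℂ).hasSum h
  have hcoeff : HasSum (fun m => c m * if l = m then 1 else 0)
      (inner ℂ (mFourierLp 2 l) (ContinuousMap.toLp 2 volume ℂ F)) := by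
    simpa only [innerSL_apply_apply, Function.comp_def, inner_smul_right,
      orthonormal_iff_ite.mp orthonormal_mFourier] using!
      (innerSL ℂ (mFourierLp (d := d) 2 l)).hasSum hL2
  rw [← mFourierCoeff_toLp, ← mFourierBasis_repr, HilbertBasis.repr_apply_apply, coe_mFourierBasis,
    ← hcoeff.tsum_eq, tsum_eq_single l fun m hm => by rw [if_neg hm.symm, mul_zero], if_pos rfl,
    mul_one]

lemma norm_mFourierCoeff_le {F : UnitAddTorus d → ℂ} {M : ℝ} (hF : ∀ y, ‖F y‖ ≤ M) (l : d → ℤ) :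
    ‖mFourierCoeff F l‖ ≤ M := by
  have hbound : ‖∫ y, mFourier (-l) y • F y‖ ≤ M * volume.real (Set.univ : Set (UnitAddTorus d)) :=
    norm_integral_le_of_norm_le_const <| .of_forall fun y => by
      have hle := (mFourier (-l)).norm_coe_le_norm y
      rw [mFourier_norm] at hle
      rw [norm_smul]
      exact (mul_le_of_le_one_left (norm_nonneg _) hle).trans (hF y)
  simpa [mFourierCoeff] using hbound

lemma norm_coeff_le_of_norm_tsum_le {c : (d → ℤ) → ℂ} (hc : Summable fun l => ‖c l‖) {M : ℝ}
    (h : ∀ x : d → ℝ, ‖∑' l, c l * eC (∑ i, (l i : ℂ) * (x i : ℂ))‖ ≤ M) (l : d → ℤ) :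
    ‖c l‖ ≤ M := by
  obtain ⟨F, hF⟩ : Summable fun l => c l • mFourier (d := d) l :=
    Summable.of_norm (by simpa [norm_smul, mFourier_norm] using hc)
  rw [← mFourierCoeff_of_hasSum hF l]
  refine norm_mFourierCoeff_le (fun y => ?_) l
  obtain ⟨x, rfl⟩ := isOpenQuotientMap_toTorus.surjective y
  have hx : HasSum (fun l => c l * mFourier l (toTorus x)) (F (toTorus x)) := by
    simpa using! (ContinuousMap.evalCLM ℂ (toTorus x)).hasSum hF
  simpa only [← hx.tsum_eq, mFourier_toTorus] using h x

/-- The Fourier transform of `g` at an integral frequency. -/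
def intFourier (g : (d → ℝ) → ℂ) (m : d → ℤ) : ℂ :=
  ∫ x, eC (-∑ i, (m i : ℂ) * (x i : ℂ)) * g x

lemma mFourierCoeff_eq_intFourier {g : (d → ℝ) → ℂ} (hg : Integrable g)
    {F : UnitAddTorus d → ℂ}
    (hF : ∀ x, HasSum (fun l : d → ℤ => g (x + fun i => (l i : ℝ))) (F (toTorus x))) (m : d → ℤ) :
    mFourierCoeff F m = intFourier g m := by
  have hcharacter (x : d → ℝ) : mFourier (-m) (toTorus x) = eC (-∑ i, (m i : ℂ) * (x i : ℂ)) := by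
    simp [mFourier_toTorus]
  have hnorm (x : d → ℝ) : ‖eC (-∑ i, (m i : ℂ) * (x i : ℂ)) * g x‖ = ‖g x‖ := by
    rw [norm_mul, norm_eC]
    simp
  have hinteg : Integrable fun x => eC (-∑ i, (m i : ℂ) * (x i : ℂ)) * g x := by
    have hcont : Continuous fun x : d → ℝ => eC (-∑ i, (m i : ℂ) * (x i : ℂ)) :=
      differentiable_eC.continuous.comp (by fun_prop)
    exact hg.mono (hcont.aestronglyMeasurable.mul hg.1) (.of_forall fun x => (hnorm x).le)
  rw [intFourier, ← setIntegral_unitBox_tsum hinteg, mFourierCoeff_eq_integral _ _ 0]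
  refine integral_congr_ae (.of_forall fun x => ?_)
  change mFourier (-m) (toTorus x) • F (toTorus x) = _
  rw [hcharacter, smul_eq_mul, ← (hF x).tsum_eq, ← tsum_mul_left]
  refine tsum_congr fun l => ?_
  have hshift : -∑ i, (m i : ℂ) * ((x + fun i => (l i : ℝ)) i : ℂ) =
      -∑ i, (m i : ℂ) * (x i : ℂ) + ((-∑ i, m i * l i : ℤ) : ℂ) := by
    push_cast [Pi.add_apply, mul_add, Finset.sum_add_distrib]
    ring
  rw [hshift, eC_add, eC_intCast, mul_one]

theorem hasSum_poisson {g F : (d → ℝ) → ℂ} (hg : Integrable g) (hF : Continuous F)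
    (hs : ∀ x, HasSum (fun l : d → ℤ => g (x + fun i => (l i : ℝ))) (F x))
    (hsum : Summable (intFourier g)) (x : d → ℝ) :
    HasSum (fun m : d → ℤ => intFourier g m * eC (∑ i, (m i : ℂ) * (x i : ℂ))) (F x) := by
  have hperiodic (y : d → ℝ) (l : d → ℤ) : F (y + fun i => (l i : ℝ)) = F y := by
    refine (hs _).unique ?_
    convert! (Equiv.addLeft l).hasSum_iff.mpr (hs y) using 2 with m
    simp only [Function.comp_apply, Equiv.coe_addLeft, Pi.add_apply, Int.cast_add]
    rw [add_assoc]
    rfl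
  have hfactor (x y : d → ℝ) (hxy : toTorus x = toTorus y) : F x = F y := by
    obtain ⟨l, rfl⟩ := exists_int_add_of_toTorus_eq hxy
    exact hperiodic y l
  have hquot := (isOpenQuotientMap_toTorus (d := d)).isQuotientMap
  let G : C(UnitAddTorus d, ℂ) := hquot.lift (f := ⟨toTorus, hquot.continuous⟩) ⟨F, hF⟩ hfactor
  have hG (x : d → ℝ) : G (toTorus x) = F x :=
    DFunLike.congr_fun (hquot.lift_comp (f := ⟨toTorus, hquot.continuous⟩) ⟨F, hF⟩ hfactor) x
  have hcoeff : mFourierCoeff G = intFourier g :=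
    funext <| mFourierCoeff_eq_intFourier hg fun x => (hG x).symm ▸ hs x
  have hseries := hasSum_mFourier_series_apply_of_summable (f := G) (hcoeff ▸ hsum) (toTorus x)
  simpa only [hcoeff, hG, smul_eq_mul, mFourier_toTorus] using hseries

end TorusFourier

/-! ### The lattice, its real and complex hulls and its automorphism group -/

/-- Vectors of the real hull `Λ ⊗ ℝ`, in the coordinates of the fixed basis. -/
abbrev RV := Fin 24 → ℝ

/-- The real bilinear extension of the form with Gram matrix `B`. -/
def pairR (B : Matrix (Fin 24) (Fin 24) ℤ) (x y : RV) : ℝ :=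
  x ⬝ᵥ ((B.map (Int.cast : ℤ → ℝ)).mulVec y)

/-- Inclusion of lattice vectors into the real hull. -/
def liftR (v : LV) : RV := fun i => (v i : ℝ)

/-- Inclusion of the real hull into the complexified lattice. -/
def ofRealVec (x : RV) : CV := fun i => (x i : ℂ)

/-- `B` is a Gram matrix of an even unimodular positive definite lattice of rank 24. -/
structure IsNiemeier (B : Matrix (Fin 24) (Fin 24) ℤ) : Prop where
  symm : B.IsSymm
  det_eq_one : B.det = 1
  pos : ∀ v : LV, v ≠ 0 → 0 < pairZ B v v
  even : ∀ v : LV, Even (pairZ B v v)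

lemma IsLeech.isNiemeier {B : Matrix (Fin 24) (Fin 24) ℤ} (hB : IsLeech B) : IsNiemeier B :=
  ⟨hB.1, hB.2.1, hB.2.2.1, hB.2.2.2.1⟩

section Bilinearity

variable (B : Matrix (Fin 24) (Fin 24) ℤ)

lemma pairC_add_left (x y z : CV) : pairC B (x + y) z = pairC B x z + pairC B y z := by
  simp [pairC, add_dotProduct]

lemma pairC_add_right (x y z : CV) : pairC B z (x + y) = pairC B z x + pairC B z y := by
  simp [pairC, mulVec_add, dotProduct_add]

lemma pairC_smul_left (a : ℂ) (x z : CV) : pairC B (a • x) z = a * pairC B x z := by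
  simp [pairC, smul_dotProduct]

lemma pairC_smul_right (a : ℂ) (x z : CV) : pairC B z (a • x) = a * pairC B z x := by
  simp [pairC, mulVec_smul, dotProduct_smul]

lemma pairC_zero_left (z : CV) : pairC B 0 z = 0 := by simp [pairC]

lemma pairC_zero_right (z : CV) : pairC B z 0 = 0 := by simp [pairC]

lemma pairZ_add_left (x y z : LV) : pairZ B (x + y) z = pairZ B x z + pairZ B y z := by
  simp [pairZ, add_dotProduct]

lemma pairZ_add_right (x y z : LV) : pairZ B z (x + y) = pairZ B z x + pairZ B z y := by
  simp [pairZ, mulVec_add, dotProduct_add]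

lemma pairZ_smul_left (a : ℤ) (x z : LV) : pairZ B (a • x) z = a * pairZ B x z := by
  rw [pairZ, smul_dotProduct, smul_eq_mul, pairZ]

lemma pairZ_smul_right (a : ℤ) (x z : LV) : pairZ B z (a • x) = a * pairZ B z x := by
  rw [pairZ, mulVec_smul, dotProduct_smul, smul_eq_mul, pairZ]

lemma pairZ_zero_left (z : LV) : pairZ B 0 z = 0 := by simp [pairZ]

lemma pairR_add_left (x y z : RV) : pairR B (x + y) z = pairR B x z + pairR B y z := by
  simp [pairR, add_dotProduct]

lemma pairR_add_right (x y z : RV) : pairR B z (x + y) = pairR B z x + pairR B z y := by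
  simp [pairR, mulVec_add, dotProduct_add]

lemma pairR_smul_left (c : ℝ) (x z : RV) : pairR B (c • x) z = c * pairR B x z := by
  simp [pairR, smul_dotProduct]

lemma pairR_smul_right (c : ℝ) (x z : RV) : pairR B z (c • x) = c * pairR B z x := by
  simp [pairR, mulVec_smul, dotProduct_smul]

lemma pairC_liftC (x y : LV) : pairC B (liftC x) (liftC y) = (pairZ B x y : ℂ) := by
  simp [pairC, pairZ, liftC, dotProduct, mulVec]

lemma pairC_ofRealVec (x y : RV) : pairC B (ofRealVec x) (ofRealVec y) = (pairR B x y : ℂ) := by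
  simp [pairC, pairR, ofRealVec, dotProduct, mulVec]

lemma pairR_liftR (x y : LV) : pairR B (liftR x) (liftR y) = (pairZ B x y : ℝ) := by
  simp [pairZ, pairR, liftR, dotProduct, mulVec]

lemma continuous_pairR_self : Continuous fun x : RV => pairR B x x := by
  unfold pairR dotProduct mulVec dotProduct
  fun_prop

variable {B}

lemma pairC_comm (hB : B.IsSymm) (x y : CV) : pairC B x y = pairC B y x := by
  unfold pairC
  rw [dotProduct_mulVec, ← mulVec_transpose, ← transpose_map, hB.eq, dotProduct_comm]

lemma pairZ_comm (hB : B.IsSymm) (x y : LV) : pairZ B x y = pairZ B y x := by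
  unfold pairZ
  rw [dotProduct_mulVec, ← mulVec_transpose, hB.eq, dotProduct_comm]

lemma pairR_comm (hB : B.IsSymm) (x y : RV) : pairR B x y = pairR B y x := by
  unfold pairR
  rw [dotProduct_mulVec, ← mulVec_transpose, ← transpose_map, hB.eq, dotProduct_comm]

lemma pairC_add_self (hB : B.IsSymm) (x y : CV) :
    pairC B (x + y) (x + y) = pairC B x x + 2 * pairC B x y + pairC B y y := by
  rw [pairC_add_left, pairC_add_right, pairC_add_right, pairC_comm hB y x]
  ring

end Bilinearity

section Inclusions

lemma liftC_add (x y : LV) : liftC (x + y) = liftC x + liftC y := by ext i; simp [liftC]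

lemma liftC_zero : liftC 0 = 0 := by ext i; simp [liftC]

lemma liftC_neg (x : LV) : liftC (-x) = -liftC x := by ext i; simp [liftC]

lemma liftC_smul (a : ℤ) (x : LV) : liftC (a • x) = (a : ℂ) • liftC x := by ext i; simp [liftC]

lemma liftC_eq_ofRealVec (l : LV) : liftC l = ofRealVec (liftR l) := by
  ext i; simp [liftC, ofRealVec, liftR]

lemma ofRealVec_add (x y : RV) : ofRealVec (x + y) = ofRealVec x + ofRealVec y := by
  ext i; simp [ofRealVec]

lemma ofRealVec_smul (c : ℝ) (x : RV) : ofRealVec (c • x) = (c : ℂ) • ofRealVec x := by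
  ext i; simp [ofRealVec]

lemma continuous_ofRealVec : Continuous ofRealVec := by
  unfold ofRealVec
  fun_prop

end Inclusions

section Automorphisms

variable {B σ ρ : Matrix (Fin 24) (Fin 24) ℤ}

lemma actC_liftC (σ : Matrix (Fin 24) (Fin 24) ℤ) (v : LV) :
    actC σ (liftC v) = liftC (σ.mulVec v) := by
  ext i; simp [actC, liftC, dotProduct, mulVec]

lemma actC_add (σ : Matrix (Fin 24) (Fin 24) ℤ) (v w : CV) :
    actC σ (v + w) = actC σ v + actC σ w := by simp [actC, mulVec_add]

lemma actC_smul (σ : Matrix (Fin 24) (Fin 24) ℤ) (a : ℂ) (w : CV) :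
    actC σ (a • w) = a • actC σ w := by simp [actC, mulVec_smul]

lemma actC_mul (σ ρ : Matrix (Fin 24) (Fin 24) ℤ) (w : CV) :
    actC (σ * ρ) w = actC σ (actC ρ w) := by
  unfold actC
  rw [mulVec_mulVec]
  congr 1
  exact Matrix.map_mul (f := Int.castRingHom ℂ)

lemma pairC_actC (hσ : σ ∈ ConwayGroup B) (v w : CV) :
    pairC B (actC σ v) (actC σ w) = pairC B v w := by
  have hmap : (σ.map (Int.cast : ℤ → ℂ))ᵀ * B.map (Int.cast : ℤ → ℂ) *
      σ.map (Int.cast : ℤ → ℂ) = B.map (Int.cast : ℤ → ℂ) := by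
    conv_rhs => rw [← hσ.2]
    change _ = (σᵀ * B * σ).map (Int.castRingHom ℂ)
    rw [Matrix.map_mul, Matrix.map_mul, transpose_map]
    rfl
  unfold pairC actC
  conv_rhs => rw [← hmap, ← mulVec_mulVec, ← mulVec_mulVec]
  rw [dotProduct_mulVec _ ((σ.map (Int.cast : ℤ → ℂ))ᵀ), vecMul_transpose]

lemma pairZ_mulVec (hσ : σ ∈ ConwayGroup B) (v w : LV) :
    pairZ B (σ.mulVec v) (σ.mulVec w) = pairZ B v w := by
  have h := pairC_actC hσ (liftC v) (liftC w)
  rw [actC_liftC, actC_liftC, pairC_liftC, pairC_liftC] at h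
  exact_mod_cast h

lemma one_mem_conwayGroup : (1 : Matrix (Fin 24) (Fin 24) ℤ) ∈ ConwayGroup B := by
  constructor <;> simp

lemma neg_one_mem_conwayGroup : (-1 : Matrix (Fin 24) (Fin 24) ℤ) ∈ ConwayGroup B :=
  ⟨by rw [det_neg]; simp, by simp⟩

lemma mul_mem_conwayGroup (hσ : σ ∈ ConwayGroup B) (hρ : ρ ∈ ConwayGroup B) :
    σ * ρ ∈ ConwayGroup B := by
  refine ⟨by rw [det_mul]; exact hσ.1.mul hρ.1, ?_⟩
  calc (σ * ρ)ᵀ * B * (σ * ρ) = ρᵀ * (σᵀ * B * σ) * ρ := by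
        rw [transpose_mul]; simp only [Matrix.mul_assoc]
    _ = B := by rw [hσ.2, hρ.2]

lemma inv_mem_conwayGroup (hσ : σ ∈ ConwayGroup B) : σ⁻¹ ∈ ConwayGroup B := by
  refine ⟨by rw [det_nonsing_inv]; exact IsUnit.ringInverse hσ.1, ?_⟩
  calc (σ⁻¹)ᵀ * B * σ⁻¹ = (σ⁻¹)ᵀ * (σᵀ * B * σ) * σ⁻¹ := by rw [hσ.2]
    _ = (σ * σ⁻¹)ᵀ * B * (σ * σ⁻¹) := by rw [transpose_mul]; simp only [Matrix.mul_assoc]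
    _ = B := by rw [mul_nonsing_inv _ hσ.1]; simp

lemma mulVec_mulVec_inv (hσ : σ ∈ ConwayGroup B) (v : LV) : σ.mulVec (σ⁻¹.mulVec v) = v := by
  rw [mulVec_mulVec, mul_nonsing_inv _ hσ.1, one_mulVec]

end Automorphisms

section PositiveDefinite

variable {B : Matrix (Fin 24) (Fin 24) ℤ}

lemma IsNiemeier.pairZ_self_nonneg (hB : IsNiemeier B) (v : LV) : 0 ≤ pairZ B v v := by
  rcases eq_or_ne v 0 with rfl | hv
  · rw [pairZ_zero_left]
  · exact (hB.pos v hv).le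

lemma tendsto_floor_nat_mul_div (a : ℝ) :
    Filter.Tendsto (fun N : ℕ => (⌊(N : ℝ) * a⌋ : ℝ) / N) Filter.atTop (𝓝 a) := by
  have hlow : Filter.Tendsto (fun N : ℕ => a - (1 : ℝ) / N) Filter.atTop (𝓝 a) := by
    simpa using (tendsto_const_nhds (x := a)).sub (tendsto_one_div_atTop_nhds_zero_nat (𝕜 := ℝ))
  refine tendsto_of_tendsto_of_tendsto_of_le_of_le' hlow tendsto_const_nhds ?_ ?_
  all_goals
    filter_upwards [Filter.eventually_gt_atTop 0] with N hN
    have hN' : (0 : ℝ) < N := by exact_mod_cast hN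
  · rw [le_div_iff₀ hN', sub_mul, div_mul_cancel₀ _ hN'.ne']
    linarith [Int.lt_floor_add_one ((N : ℝ) * a)]
  · rw [div_le_iff₀ hN']
    linarith [Int.floor_le ((N : ℝ) * a)]

-- Real vectors are limits of rational ones, on which positivity is that of the lattice.
lemma IsNiemeier.pairR_self_nonneg (hB : IsNiemeier B) (x : RV) : 0 ≤ pairR B x x := by
  have hlim := ((continuous_pairR_self B).tendsto x).comp
    (tendsto_pi_nhds.mpr fun i => tendsto_floor_nat_mul_div (x i))
  refine ge_of_tendsto' hlim fun N => ?_
  have happrox : (fun i => (⌊(N : ℝ) * x i⌋ : ℝ) / N) =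
      (N : ℝ)⁻¹ • liftR fun i => ⌊(N : ℝ) * x i⌋ := by
    ext i
    rw [Pi.smul_apply, smul_eq_mul, liftR, div_eq_inv_mul]
  rw [Function.comp_apply, happrox, pairR_smul_left, pairR_smul_right, pairR_liftR]
  have := hB.pairZ_self_nonneg fun i => ⌊(N : ℝ) * x i⌋
  positivity

lemma IsNiemeier.det_map_intCast {R : Type*} [CommRing R] (hB : IsNiemeier B) :
    (B.map (Int.cast : ℤ → R)).det = 1 := by
  have h := (Int.castRingHom R).map_det B
  rw [hB.det_eq_one, map_one] at h
  exact h.symm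

open scoped MatrixOrder in
lemma IsNiemeier.exists_eq_transpose_mul_self (hB : IsNiemeier B) :
    ∃ C : Matrix (Fin 24) (Fin 24) ℝ, B.map (Int.cast : ℤ → ℝ) = Cᵀ * C ∧ |C.det| = 1 := by
  have hpsd : (B.map (Int.cast : ℤ → ℝ)).PosSemidef := by
    refine Matrix.PosSemidef.of_dotProduct_mulVec_nonneg ?_ fun x => hB.pairR_self_nonneg x
    ext i j
    simpa [conjTranspose] using hB.symm.apply i j
  obtain ⟨C, hC⟩ := CStarAlgebra.nonneg_iff_eq_star_mul_self.mp hpsd.nonneg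
  replace hC : B.map (Int.cast : ℤ → ℝ) = Cᵀ * C := hC
  refine ⟨C, hC, ?_⟩
  have hdet := congrArg Matrix.det hC
  rw [hB.det_map_intCast, det_mul, det_transpose, ← abs_mul_abs_self] at hdet
  nlinarith [abs_nonneg C.det]

lemma pairR_eq_dotProduct_mulVec {C : Matrix (Fin 24) (Fin 24) ℝ}
    (hC : B.map (Int.cast : ℤ → ℝ) = Cᵀ * C) (x y : RV) :
    pairR B x y = C.mulVec x ⬝ᵥ C.mulVec y := by
  unfold pairR
  rw [hC, ← mulVec_mulVec, dotProduct_mulVec, vecMul_transpose]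

lemma sum_sq_mulVec_le {n : Type*} [Fintype n] (A : Matrix n n ℝ) (y : n → ℝ) :
    ∑ i, A.mulVec y i ^ 2 ≤ (∑ i, ∑ j, A i j ^ 2) * (y ⬝ᵥ y) := by
  rw [Finset.sum_mul]
  refine Finset.sum_le_sum fun i _ => ?_
  simpa only [mulVec, dotProduct, sq] using
    Finset.sum_mul_sq_le_sq_mul_sq Finset.univ (fun j => A i j) y

lemma IsNiemeier.exists_mul_sum_sq_le_pairR (hB : IsNiemeier B) :
    ∃ κ > 0, ∀ x : RV, κ * ∑ i, x i ^ 2 ≤ pairR B x x := by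
  obtain ⟨C, hC, hdet⟩ := hB.exists_eq_transpose_mul_self
  have hunit : IsUnit C.det := isUnit_iff_ne_zero.mpr fun h => by simp [h] at hdet
  set K := ∑ i, ∑ j, (C⁻¹ i j) ^ 2
  have hK : 0 < K + 1 := add_pos_of_nonneg_of_pos
    (Finset.sum_nonneg fun i _ => Finset.sum_nonneg fun j _ => sq_nonneg _) one_pos
  refine ⟨(K + 1)⁻¹, inv_pos.mpr hK, fun x => ?_⟩
  have hx := sum_sq_mulVec_le C⁻¹ (C.mulVec x)
  rw [mulVec_mulVec, nonsing_inv_mul _ hunit, one_mulVec, ← pairR_eq_dotProduct_mulVec hC] at hx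
  rw [inv_mul_le_iff₀ hK]
  linarith [hB.pairR_self_nonneg x]

lemma IsNiemeier.exists_mul_sum_sq_le_pairZ (hB : IsNiemeier B) :
    ∃ κ > 0, ∀ v : LV, κ * ∑ i, (v i : ℝ) ^ 2 ≤ pairZ B v v := by
  obtain ⟨κ, hκ, h⟩ := hB.exists_mul_sum_sq_le_pairR
  exact ⟨κ, hκ, fun v => by rw [← pairR_liftR]; exact h _⟩

lemma IsNiemeier.finite_setOf_pairZ_le (hB : IsNiemeier B) (M : ℤ) :
    {v : LV | pairZ B v v ≤ M}.Finite := by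
  obtain ⟨κ, hκ, h⟩ := hB.exists_mul_sum_sq_le_pairZ
  obtain ⟨N, hN⟩ := exists_nat_ge ((M : ℝ) / κ)
  refine (Set.Finite.pi (fun _ : Fin 24 => Set.finite_Icc (-(N : ℤ)) N)).subset fun v hv i _ => ?_
  have hvM : (pairZ B v v : ℝ) ≤ M := by exact_mod_cast hv
  have hcoord : (v i : ℝ) ^ 2 ≤ ∑ i, (v i : ℝ) ^ 2 :=
    Finset.single_le_sum (f := fun i => (v i : ℝ) ^ 2) (fun _ _ => sq_nonneg _) (Finset.mem_univ i)
  have hsum : ∑ i, (v i : ℝ) ^ 2 ≤ N := by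
    refine le_trans ?_ hN
    rw [le_div_iff₀ hκ]
    linarith [h v]
  have hsq : v i ^ 2 ≤ (N : ℤ) := by exact_mod_cast hcoord.trans hsum
  have habs : |v i| ≤ v i ^ 2 := by simpa using Int.natAbs_le_self_sq (v i)
  exact abs_le.mp (habs.trans hsq)

lemma IsNiemeier.finite_conwayGroup (hB : IsNiemeier B) : (ConwayGroup B).Finite := by
  -- An automorphism is determined by the images of the basis vectors, which keep their norms.
  have hcols := Set.Finite.pi fun j : Fin 24 =>
    hB.finite_setOf_pairZ_le (pairZ B (Pi.single j 1) (Pi.single j 1))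
  refine Set.Finite.of_finite_image (f := Matrix.transpose) (hcols.subset ?_)
    transpose_injective.injOn
  rintro _ ⟨σ, hσ, rfl⟩ j -
  have hcol : σᵀ j = σ.mulVec (Pi.single j 1) := by ext i; simp
  change pairZ B (σᵀ j) (σᵀ j) ≤ _
  rw [hcol, pairZ_mulVec hσ]

end PositiveDefinite

section DualCoordinates

variable {B : Matrix (Fin 24) (Fin 24) ℤ}

/-- The vector `B⁻¹ w`, whose pairing with `x` is `∑ xᵢ wᵢ`; it turns the characters `ζ^ℓ` into
the standard characters of `ℂ^24`. -/
def dualCoords (B : Matrix (Fin 24) (Fin 24) ℤ) (w : CV) : CV :=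
  ((B.map (Int.cast : ℤ → ℂ))⁻¹).mulVec w

lemma IsNiemeier.pairC_dualCoords (hB : IsNiemeier B) (x w : CV) :
    pairC B x (dualCoords B w) = ∑ i, x i * w i := by
  unfold pairC dualCoords
  rw [mulVec_mulVec, mul_nonsing_inv _ (by rw [hB.det_map_intCast]; exact isUnit_one), one_mulVec]
  rfl

/-- The `ℓ¹`-norm of the coordinates of a lattice vector. -/
def l1Norm (l : LV) : ℝ := ∑ i, |(l i : ℝ)|

lemma l1Norm_nonneg (l : LV) : 0 ≤ l1Norm l := Finset.sum_nonneg fun _ _ => abs_nonneg _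

/-- The `ℓ¹`-norm of the linear form `(·, z)`, in coordinates. -/
def formNorm (B : Matrix (Fin 24) (Fin 24) ℤ) (z : CV) : ℝ :=
  ∑ i, ‖(B.map (Int.cast : ℤ → ℂ)).mulVec z i‖

lemma norm_pairC_liftC_le (z : CV) (l : LV) :
    ‖pairC B (liftC l) z‖ ≤ formNorm B z * l1Norm l := by
  unfold pairC dotProduct l1Norm
  refine (norm_sum_le _ _).trans ?_
  rw [Finset.mul_sum]
  refine Finset.sum_le_sum fun i _ => ?_
  have hl : ‖liftC l i‖ = |(l i : ℝ)| := by simp [liftC]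
  rw [norm_mul, hl, mul_comm]
  gcongr
  exact Finset.single_le_sum (f := fun i => ‖(B.map (Int.cast : ℤ → ℂ)).mulVec z i‖)
    (fun _ _ => norm_nonneg _) (Finset.mem_univ i)

/-- The sum of the absolute values of the entries of `B`. -/
def entryNorm (B : Matrix (Fin 24) (Fin 24) ℤ) : ℝ := ∑ i, ∑ j, |(B i j : ℝ)|

lemma entryNorm_nonneg : 0 ≤ entryNorm B := by
  unfold entryNorm
  positivity

lemma formNorm_le (z : CV) : formNorm B z ≤ entryNorm B * ‖z‖ := by
  unfold formNorm entryNorm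
  simp only [Finset.sum_mul, mulVec, dotProduct]
  refine Finset.sum_le_sum fun i _ => (norm_sum_le _ _).trans (Finset.sum_le_sum fun j _ => ?_)
  have hentry : ‖B.map (Int.cast : ℤ → ℂ) i j‖ = |(B i j : ℝ)| := by simp
  rw [norm_mul, hentry]
  gcongr
  exact norm_le_pi_norm z j

end DualCoordinates

/-! ### Absolutely convergent exponential series over the lattice -/

section PiProd

lemma summable_norm_prod_pi {ι 𝕜 : Type*} [NormedField 𝕜] {N : ℕ} {f : Fin N → ι → 𝕜}
    (hf : ∀ i, Summable fun x => ‖f i x‖) :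
    Summable fun j : Fin N → ι => ‖∏ i, f i (j i)‖ := by
  induction N with
  | zero => exact Summable.of_finite
  | succ N ih =>
    rw [← (Fin.consEquiv fun _ : Fin (N + 1) => ι).summable_iff]
    refine ((hf 0).mul_norm (ih fun i => hf i.succ)).congr fun p => ?_
    simp [Fin.consEquiv, Fin.prod_univ_succ]

lemma hasSum_prod_pi {ι 𝕜 : Type*} [NormedField 𝕜] [CompleteSpace 𝕜] {N : ℕ} {f : Fin N → ι → 𝕜}
    (hf : ∀ i, Summable fun x => ‖f i x‖) :
    HasSum (fun j : Fin N → ι => ∏ i, f i (j i)) (∏ i, ∑' x, f i x) := by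
  induction N with
  | zero => simp
  | succ N ih =>
    rw [← (Fin.consEquiv fun _ : Fin (N + 1) => ι).hasSum_iff, Fin.prod_univ_succ]
    have hsum := (hf 0).of_norm.hasSum.mul (ih fun i => hf i.succ)
      ((hf 0).mul_norm (summable_norm_prod_pi fun i => hf i.succ)).of_norm
    refine hsum.congr_fun fun p => ?_
    simp [Fin.consEquiv, Fin.prod_univ_succ]

end PiProd

section Gaussian

variable {B : Matrix (Fin 24) (Fin 24) ℤ}

lemma summable_int_exp_neg_sq (R : ℝ) {a : ℝ} (ha : 0 < a) :
    Summable fun n : ℤ => Real.exp (-a * (n : ℝ) ^ 2 + R * |(n : ℝ)|) := by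
  have hnat : Summable fun n : ℕ => Real.exp (-a * (n : ℝ) ^ 2 + R * (n : ℝ)) := by
    have hgeom : Summable fun n : ℕ => Real.exp ((R + 1) ^ 2 / (4 * a)) * Real.exp (-1) ^ n :=
      (summable_geometric_of_lt_one (Real.exp_pos _).le (by simp)).mul_left _
    refine hgeom.of_nonneg_of_le (fun _ => (Real.exp_pos _).le) fun n => ?_
    rw [← Real.exp_nat_mul, ← Real.exp_add, Real.exp_le_exp, ← sub_nonneg]
    have hsq : (R + 1) ^ 2 / (4 * a) + (n : ℝ) * (-1) - (-a * (n : ℝ) ^ 2 + R * n)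
        = ((R + 1) - 2 * a * n) ^ 2 / (4 * a) := by field_simp; ring
    rw [hsq]
    positivity
  exact Summable.of_nat_of_neg (by simpa using hnat) (by simpa using hnat)

lemma summable_exp_neg_sum_sq (R : ℝ) {a : ℝ} (ha : 0 < a) :
    Summable fun l : LV => Real.exp (-a * ∑ i, (l i : ℝ) ^ 2 + R * l1Norm l) := by
  refine (summable_norm_prod_pi (N := 24)
    (f := fun _ (n : ℤ) => Real.exp (-a * (n : ℝ) ^ 2 + R * |(n : ℝ)|))
    fun _ => by simpa using summable_int_exp_neg_sq R ha).congr fun l => ?_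
  rw [← Real.exp_sum, Real.norm_eq_abs, Real.abs_exp, Finset.sum_add_distrib, l1Norm,
    Finset.mul_sum, Finset.mul_sum]

lemma IsNiemeier.summable_exp_neg_pairZ (hB : IsNiemeier B) (R : ℝ) {v : ℝ} (hv : 0 < v) :
    Summable fun l : LV => Real.exp (-π * v * pairZ B l l + R * l1Norm l) := by
  obtain ⟨κ, hκ, hlow⟩ := hB.exists_mul_sum_sq_le_pairZ
  refine (summable_exp_neg_sum_sq R (a := π * v * κ) (by positivity)).of_nonneg_of_le
    (fun _ => (Real.exp_pos _).le) fun l => ?_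
  rw [Real.exp_le_exp]
  nlinarith [hlow l, mul_pos Real.pi_pos hv]

end Gaussian

section FourierTerms

variable {B : Matrix (Fin 24) (Fin 24) ℤ}

lemma norm_eC_pairC_le (l : LV) (z : CV) :
    ‖eC (pairC B (liftC l) z)‖ ≤ Real.exp (2 * π * formNorm B z * l1Norm l) := by
  rw [norm_eC, Real.exp_le_exp]
  have hle := (neg_le_abs _).trans
    ((Complex.abs_im_le_norm _).trans (norm_pairC_liftC_le (B := B) z l))
  nlinarith [Real.pi_pos]

lemma norm_eC_natCast_mul (n : ℕ) (w : ℂ) : ‖eC (n * w)‖ = Real.exp (-2 * π * n * w.im) := by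
  rw [norm_eC]
  congr 1
  simp only [mul_im, natCast_re, natCast_im, zero_mul, add_zero]
  ring

lemma norm_fterm (n : ℕ) (l : LV) (τ : ℍ) (z : CV) :
    ‖fterm B n l τ z‖ = Real.exp (-2 * π * n * τ.im) * ‖eC (pairC B (liftC l) z)‖ := by
  rw [fterm, norm_mul, norm_eC_natCast_mul, UpperHalfPlane.coe_im]

lemma exists_exp_mul_l1Norm_le_sum : ∃ E : Finset RV, ∀ (R : ℝ) (l : LV),
    Real.exp (R * l1Norm l) ≤ ∑ ε ∈ E, Real.exp (R * ∑ i, ε i * (l i : ℝ)) := by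
  have hfin : (Set.univ.pi fun _ : Fin 24 => ({1, -1} : Set ℝ)).Finite :=
    Set.Finite.pi fun _ => Set.toFinite _
  refine ⟨hfin.toFinset, fun R l => ?_⟩
  set sgn : RV := fun i => if 0 ≤ l i then 1 else -1 with hsgn
  have hmem : sgn ∈ hfin.toFinset := by
    rw [Set.Finite.mem_toFinset]
    intro i _
    by_cases h : 0 ≤ l i <;> simp [hsgn, h]
  have hl1 : l1Norm l = ∑ i, sgn i * (l i : ℝ) := by
    refine Finset.sum_congr rfl fun i _ => ?_
    by_cases h : 0 ≤ l i
    · have hcast : (0 : ℝ) ≤ l i := by exact_mod_cast h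
      simp [hsgn, h, abs_of_nonneg hcast]
    · have hcast : (l i : ℝ) < 0 := by exact_mod_cast not_le.mp h
      simp [hsgn, h, abs_of_neg hcast]
  rw [hl1]
  exact Finset.single_le_sum (f := fun ε : RV => Real.exp (R * ∑ i, ε i * (l i : ℝ)))
    (fun _ _ => (Real.exp_pos _).le) hmem

lemma IsNiemeier.exists_norm_eC_pairC_eq (hB : IsNiemeier B) (R : ℝ) (ε : RV) :
    ∃ z : CV, ∀ l : LV, ‖eC (pairC B (liftC l) z)‖ = Real.exp (R * ∑ i, ε i * (l i : ℝ)) := by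
  refine ⟨dualCoords B fun i => -Complex.I * ((R / (2 * π) * ε i : ℝ) : ℂ), fun l => ?_⟩
  rw [hB.pairC_dualCoords, norm_eC, Complex.im_sum, Finset.mul_sum, Finset.mul_sum]
  congr 1
  refine Finset.sum_congr rfl fun i _ => ?_
  have hterm : liftC l i * (-Complex.I * ((R / (2 * π) * ε i : ℝ) : ℂ))
      = ((l i * (R / (2 * π)) * ε i : ℝ) : ℂ) * (-Complex.I) := by
    simp only [liftC]
    push_cast
    ring
  rw [hterm, Complex.im_ofReal_mul, neg_im, Complex.I_im]
  field_simp

-- Purely imaginary `z` in finitely many directions dominate every growth rate `exp (R ‖l‖₁)`.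
lemma IsNiemeier.summable_norm_mul_exp (hB : IsNiemeier B) {f : ℕ → LV → ℂ}
    (h : ∀ (τ : ℍ) (z : CV), Summable fun p : ℕ × LV => f p.1 p.2 * fterm B p.1 p.2 τ z)
    {v : ℝ} (hv : 0 < v) (R : ℝ) :
    Summable fun p : ℕ × LV =>
      ‖f p.1 p.2‖ * Real.exp (-2 * π * p.1 * v) * Real.exp (R * l1Norm p.2) := by
  obtain ⟨E, hE⟩ := exists_exp_mul_l1Norm_le_sum
  choose z hz using hB.exists_norm_eC_pairC_eq R
  let τ : ℍ := ⟨Complex.I * v, by simpa using hv⟩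
  have hτ : τ.im = v := by simp [τ, UpperHalfPlane.im]
  have hsum := summable_sum (s := E) fun ε (_ : ε ∈ E) => (h τ (z ε)).norm
  refine hsum.of_nonneg_of_le (fun _ => by positivity) fun p => ?_
  refine (mul_le_mul_of_nonneg_left (hE R p.2) (by positivity)).trans (le_of_eq ?_)
  rw [Finset.mul_sum]
  refine Finset.sum_congr rfl fun ε _ => ?_
  rw [norm_mul, norm_fterm, mul_assoc, hz, hτ]

end FourierTerms

section Holomorphy

variable {B : Matrix (Fin 24) (Fin 24) ℤ}

/-- The continuous linear form `(w, ·)` on the complexified lattice. -/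
def pairCLM (B : Matrix (Fin 24) (Fin 24) ℤ) (w : CV) : CV →L[ℂ] ℂ :=
  LinearMap.toContinuousLinearMap
    { toFun := fun z => pairC B w z
      map_add' := fun x y => pairC_add_right B x y w
      map_smul' := fun a x => pairC_smul_right B a x w }

lemma norm_pairCLM_liftC_le (l : LV) : ‖pairCLM B (liftC l)‖ ≤ entryNorm B * l1Norm l := by
  refine ContinuousLinearMap.opNorm_le_bound _
    (mul_nonneg entryNorm_nonneg (l1Norm_nonneg l)) fun z => ?_
  calc ‖pairC B (liftC l) z‖ ≤ formNorm B z * l1Norm l := norm_pairC_liftC_le z l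
    _ ≤ entryNorm B * ‖z‖ * l1Norm l :=
        mul_le_mul_of_nonneg_right (formNorm_le z) (l1Norm_nonneg l)
    _ = entryNorm B * l1Norm l * ‖z‖ := mul_right_comm _ _ _

lemma hasDerivAt_eC (w : ℂ) : HasDerivAt eC (eC w * (2 * π * Complex.I)) w := by
  unfold eC
  refine HasDerivAt.cexp ?_
  simpa using (hasDerivAt_id w).const_mul (2 * π * Complex.I)

lemma hasFDerivAt_mul_eC_pairC (c : ℂ) (w x : CV) :
    HasFDerivAt (fun z => c * eC (pairC B w z))
      ((c * eC (pairC B w x) * (2 * π * Complex.I)) • pairCLM B w) x := by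
  have hlin : HasFDerivAt (fun z => pairC B w z) (pairCLM B w) x := (pairCLM B w).hasFDerivAt
  rw [mul_assoc]
  exact ((hasDerivAt_eC _).const_mul c).comp_hasFDerivAt x hlin

lemma norm_fderiv_term_le {r : ℝ} {x : CV} (hx : ‖x‖ ≤ r) (c : ℂ) (l : LV) :
    ‖(c * eC (pairC B (liftC l) x) * (2 * π * Complex.I)) • pairCLM B (liftC l)‖ ≤
      2 * π * entryNorm B *
        (‖c‖ * Real.exp ((2 * π * (entryNorm B * r) + 1) * l1Norm l)) := by
  have hl := l1Norm_nonneg l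
  have hB := entryNorm_nonneg (B := B)
  have htwopi : ‖(2 * π * Complex.I : ℂ)‖ = 2 * π := by simp [abs_of_pos Real.pi_pos]
  have heC : ‖eC (pairC B (liftC l) x)‖ ≤ Real.exp (2 * π * (entryNorm B * r) * l1Norm l) := by
    refine (norm_eC_pairC_le _ _).trans (Real.exp_le_exp.mpr ?_)
    gcongr
    exact (formNorm_le x).trans (by gcongr)
  have hexp : l1Norm l ≤ Real.exp (l1Norm l) := by linarith [Real.add_one_le_exp (l1Norm l)]
  rw [norm_smul, norm_mul, norm_mul, htwopi]
  calc ‖c‖ * ‖eC (pairC B (liftC l) x)‖ * (2 * π) * ‖pairCLM B (liftC l)‖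
      ≤ ‖c‖ * Real.exp (2 * π * (entryNorm B * r) * l1Norm l) * (2 * π) *
          (entryNorm B * Real.exp (l1Norm l)) := by
        gcongr
        exact (norm_pairCLM_liftC_le l).trans (by gcongr)
    _ = _ := by
        rw [add_mul, one_mul, Real.exp_add]
        ring

lemma differentiable_tsum_mul_eC_pairC {ι : Type*} {c : ι → ℂ} {L : ι → LV}
    (hs : ∀ R : ℝ, Summable fun i => ‖c i‖ * Real.exp (R * l1Norm (L i))) :
    Differentiable ℂ fun z => ∑' i, c i * eC (pairC B (liftC (L i)) z) := by
  intro z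
  have hz : z ∈ Metric.ball (0 : CV) (‖z‖ + 1) := by simp
  refine (hasFDerivAt_tsum_of_isPreconnected (x₀ := 0) ((hs _).mul_left _) Metric.isOpen_ball
    (convex_ball _ _).isPreconnected (fun i x _ => hasFDerivAt_mul_eC_pairC (c i) _ x)
    (fun i x hx => norm_fderiv_term_le (mem_ball_zero_iff.mp hx).le (c i) (L i))
    (Metric.mem_ball_self (by positivity)) ?_ hz).differentiableAt
  have hzero := hs 0
  simp only [zero_mul, Real.exp_zero, mul_one] at hzero
  exact hzero.of_norm.congr fun i => by rw [pairC_zero_right, eC_zero, mul_one]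

variable {f : ℕ → LV → ℂ} {φ : ℍ → CV → ℂ}

lemma IsNiemeier.differentiableOn_tsum_tau (hB : IsNiemeier B)
    (h : ∀ (τ : ℍ) (z : CV), Summable fun p : ℕ × LV => f p.1 p.2 * fterm B p.1 p.2 τ z)
    {v : ℝ} (hv : 0 < v) (z : CV) :
    DifferentiableOn ℂ (fun w : ℂ => ∑' p : ℕ × LV,
      f p.1 p.2 * (eC ((p.1 : ℂ) * w) * eC (pairC B (liftC p.2) z))) {w | v < w.im} := by
  refine Complex.differentiableOn_tsum_of_summable_norm
    (hB.summable_norm_mul_exp h hv (2 * π * formNorm B z)) ?_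
    (isOpen_lt continuous_const Complex.continuous_im) fun p w hw => ?_
  · intro p
    unfold eC
    fun_prop
  · rw [norm_mul, norm_mul, mul_assoc, norm_eC_natCast_mul]
    have hw' : v < w.im := hw
    have hpair := norm_eC_pairC_le (B := B) p.2 z
    gcongr ‖f p.1 p.2‖ * (Real.exp ?_ * ?_)
    nlinarith [mul_nonneg Real.pi_pos.le (Nat.cast_nonneg (α := ℝ) p.1)]

lemma IsNiemeier.mdifferentiable_of_hasSum_fterm (hB : IsNiemeier B)
    (h : ∀ (τ : ℍ) (z : CV),
      HasSum (fun p : ℕ × LV => f p.1 p.2 * fterm B p.1 p.2 τ z) (φ τ z)) (z : CV) :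
    MDifferentiable 𝓘(ℂ) 𝓘(ℂ) fun τ : ℍ => φ τ z := by
  rw [UpperHalfPlane.mdifferentiable_iff]
  intro w hw
  have hw' : 0 < w.im := hw
  have hU : IsOpen {y : ℂ | w.im / 2 < y.im} := isOpen_lt continuous_const Complex.continuous_im
  have hwU : {y : ℂ | w.im / 2 < y.im} ∈ 𝓝 w := hU.mem_nhds (half_lt_self hw')
  have hdiff := (hB.differentiableOn_tsum_tau (fun τ z => (h τ z).summable)
    (half_pos hw') z).differentiableAt hwU
  refine (hdiff.congr_of_eventuallyEq ?_).differentiableWithinAt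
  filter_upwards [hwU] with y hy
  have hy' : 0 < y.im := (half_pos hw').trans hy
  rw [Function.comp_apply, ← (h _ z).tsum_eq]
  refine tsum_congr fun p => ?_
  rw [fterm, UpperHalfPlane.ofComplex_apply_of_im_pos hy']

lemma IsNiemeier.differentiable_of_hasSum_fterm (hB : IsNiemeier B)
    (h : ∀ (τ : ℍ) (z : CV),
      HasSum (fun p : ℕ × LV => f p.1 p.2 * fterm B p.1 p.2 τ z) (φ τ z)) (τ : ℍ) :
    Differentiable ℂ (φ τ) := by
  have hseries : φ τ = fun z => ∑' p : ℕ × LV,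
      f p.1 p.2 * eC ((p.1 : ℂ) * τ) * eC (pairC B (liftC p.2) z) := by
    ext z
    rw [← (h τ z).tsum_eq]
    exact tsum_congr fun p => by rw [fterm, mul_assoc]
  rw [hseries]
  refine differentiable_tsum_mul_eC_pairC (L := Prod.snd) fun R => ?_
  refine (hB.summable_norm_mul_exp (fun τ z => (h τ z).summable) τ.im_pos R).congr fun p => ?_
  rw [norm_mul, norm_eC_natCast_mul, UpperHalfPlane.coe_im]

end Holomorphy

section CoefficientBounds

lemma norm_coeff_le_of_forall_norm_le {m : ℕ} {c : ℤ × (Fin m → ℤ) → ℂ}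
    {F : ℝ → (Fin m → ℝ) → ℂ}
    (h : ∀ (u : ℝ) (x : Fin m → ℝ), HasSum
      (fun p => c p * eC ((p.1 : ℂ) * (u : ℂ) + ∑ i, (p.2 i : ℂ) * (x i : ℂ))) (F u x))
    {M : ℝ} (hM : ∀ u x, ‖F u x‖ ≤ M) (p : ℤ × (Fin m → ℤ)) : ‖c p‖ ≤ M := by
  have hsum : Summable fun p => ‖c p‖ := by simpa [eC_zero] using (h 0 0).summable.norm
  let e : ℤ × (Fin m → ℤ) ≃ (Fin (m + 1) → ℤ) := Fin.consEquiv fun _ : Fin (m + 1) => ℤ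
  have hbound := norm_coeff_le_of_norm_tsum_le (c := fun q => c (e.symm q)) (M := M)
    (by rw [← e.summable_iff]; simpa [Function.comp_def] using hsum) (fun x => ?_) (e p)
  · simpa using hbound
  · have hexponent : ∀ p, ∑ i, ((e p i : ℤ) : ℂ) * (x i : ℂ) =
        (p.1 : ℂ) * (x 0) + ∑ i, (p.2 i : ℂ) * (x i.succ : ℂ) := fun p => by
      rw [Fin.sum_univ_succ]
      simp [e, Fin.consEquiv]
    rw [← e.tsum_eq]
    simp only [Equiv.symm_apply_apply, hexponent, (h (x 0) fun i => x i.succ).tsum_eq]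
    exact hM _ _

variable {B : Matrix (Fin 24) (Fin 24) ℤ} {f g : ℕ → LV → ℂ} {φ : ℍ → CV → ℂ}

lemma natCast_prod_injective : Function.Injective fun p : ℕ × LV => ((p.1 : ℤ), p.2) :=
  fun p q h => by simpa [Prod.ext_iff] using h

lemma hasSum_extend_natCast {c : ℕ × LV → ℂ} {E : ℤ × LV → ℂ} {a : ℂ}
    (h : HasSum (fun p : ℕ × LV => c p * E ((p.1 : ℤ), p.2)) a) :
    HasSum (fun q : ℤ × LV =>
      Function.extend (fun p : ℕ × LV => ((p.1 : ℤ), p.2)) c 0 q * E q) a := by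
  rw [← natCast_prod_injective.hasSum_iff fun q hq => by
    rw [Function.extend_apply' _ _ _ (by simpa using hq), Pi.zero_apply, zero_mul]]
  simpa only [Function.comp_def, natCast_prod_injective.extend_apply] using h

lemma IsNiemeier.norm_coeff_mul_exp_le (hB : IsNiemeier B) {v : ℝ} (hv : 0 < v)
    (h : ∀ (τ : ℍ) (z : CV), τ.im = v →
      HasSum (fun p : ℕ × LV => f p.1 p.2 * fterm B p.1 p.2 τ z) (φ τ z))
    {M : ℝ} (hM : ∀ (τ : ℍ) (b : RV), τ.im = v → ‖φ τ (dualCoords B (ofRealVec b))‖ ≤ M)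
    (n : ℕ) (l : LV) : ‖f n l‖ * Real.exp (-2 * π * n * v) ≤ M := by
  let τ : ℝ → ℍ := fun u => ⟨(u : ℂ) + Complex.I * v, by simpa using hv⟩
  have hτ : ∀ u, (τ u).im = v := fun u => by simp [τ, UpperHalfPlane.im]
  let c : ℕ × LV → ℂ := fun p => f p.1 p.2 * eC ((p.1 : ℂ) * (Complex.I * v))
  have hexp : ∀ (u : ℝ) (x : RV), HasSum (fun p : ℕ × LV => c p *
      eC ((((p.1 : ℤ)) : ℂ) * (u : ℂ) + ∑ i, (p.2 i : ℂ) * (x i : ℂ)))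
      (φ (τ u) (dualCoords B (ofRealVec x))) := fun u x => by
    refine (h (τ u) (dualCoords B (ofRealVec x)) (hτ u)).congr_fun fun p => ?_
    rw [mul_assoc, fterm, ← eC_add, ← eC_add, hB.pairC_dualCoords]
    simp only [τ, liftC, ofRealVec, Int.cast_natCast]
    congr 2
    ring
  have hbound := norm_coeff_le_of_forall_norm_le
    (fun u x => hasSum_extend_natCast
      (E := fun q => eC ((q.1 : ℂ) * (u : ℂ) + ∑ i, (q.2 i : ℂ) * (x i : ℂ))) (hexp u x))
    (fun u x => hM _ x (hτ u)) ((n : ℤ), l)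
  rw [natCast_prod_injective.extend_apply c 0 (n, l), norm_mul, norm_eC_natCast_mul] at hbound
  simpa using hbound

lemma IsNiemeier.coeff_eq_zero (hB : IsNiemeier B)
    (h : ∀ (τ : ℍ) (z : CV), HasSum (fun p : ℕ × LV => f p.1 p.2 * fterm B p.1 p.2 τ z) 0)
    (n : ℕ) (l : LV) : f n l = 0 := by
  have hbound := hB.norm_coeff_mul_exp_le (φ := fun _ _ => 0) one_pos (fun τ z _ => h τ z)
    (M := 0) (fun _ _ _ => norm_zero.le) n l
  exact norm_le_zero_iff.mp (nonpos_of_mul_nonpos_left hbound (Real.exp_pos _))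

lemma IsNiemeier.coeff_unique (hB : IsNiemeier B)
    (hf : ∀ (τ : ℍ) (z : CV),
      HasSum (fun p : ℕ × LV => f p.1 p.2 * fterm B p.1 p.2 τ z) (φ τ z))
    (hg : ∀ (τ : ℍ) (z : CV),
      HasSum (fun p : ℕ × LV => g p.1 p.2 * fterm B p.1 p.2 τ z) (φ τ z)) :
    f = g := by
  ext n l
  refine sub_eq_zero.mp (hB.coeff_eq_zero (f := fun n l => f n l - g n l) (fun τ z => ?_) n l)
  simpa [sub_mul] using (hf τ z).sub (hg τ z)

end CoefficientBounds

/-! ### The theta function -/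

section Theta

variable {B σ : Matrix (Fin 24) (Fin 24) ℤ}

lemma norm_thetaCoeff (l : LV) (τ : ℍ) :
    ‖eC ((pairZ B l l : ℂ) * τ / 2)‖ = Real.exp (-π * τ.im * pairZ B l l) := by
  have him : ((pairZ B l l : ℂ) * τ / 2).im = pairZ B l l * τ.im / 2 := by
    rw [show ((pairZ B l l : ℂ) * τ / 2) = (((pairZ B l l : ℝ) / 2 : ℝ) : ℂ) * τ by
      push_cast; ring, Complex.im_ofReal_mul, UpperHalfPlane.coe_im]
    ring
  rw [norm_eC, him]
  congr 1
  ring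

lemma IsNiemeier.summable_norm_thetaCoeff_mul_exp (hB : IsNiemeier B) (τ : ℍ) (R : ℝ) :
    Summable fun l : LV => ‖eC ((pairZ B l l : ℂ) * τ / 2)‖ * Real.exp (R * l1Norm l) :=
  (hB.summable_exp_neg_pairZ R τ.im_pos).congr fun l => by
    rw [norm_thetaCoeff, ← Real.exp_add]

lemma IsNiemeier.summable_norm_thetaTerm (hB : IsNiemeier B) (τ : ℍ) (z : CV) :
    Summable fun l : LV => ‖eC ((pairZ B l l : ℂ) * τ / 2) * eC (pairC B (liftC l) z)‖ := by
  refine (hB.summable_norm_thetaCoeff_mul_exp τ (2 * π * formNorm B z)).of_nonneg_of_le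
    (fun _ => norm_nonneg _) fun l => ?_
  rw [norm_mul]
  exact mul_le_mul_of_nonneg_left (norm_eC_pairC_le l z) (norm_nonneg _)

lemma thetaLeech_eq_tsum (τ : ℍ) (z : CV) :
    thetaLeech B τ z =
      ∑' l : LV, eC ((pairZ B l l : ℂ) * τ / 2) * eC (pairC B (liftC l) z) := by
  refine tsum_congr fun l => ?_
  rw [eC, eC, ← Complex.exp_add]
  congr 1
  ring

lemma IsNiemeier.hasSum_theta (hB : IsNiemeier B) (τ : ℍ) (z : CV) :
    HasSum (fun l : LV => eC ((pairZ B l l : ℂ) * τ / 2) * eC (pairC B (liftC l) z))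
      (thetaLeech B τ z) := by
  rw [thetaLeech_eq_tsum]
  exact (hB.summable_norm_thetaTerm τ z).of_norm.hasSum

lemma IsNiemeier.differentiable_theta (hB : IsNiemeier B) (τ : ℍ) :
    Differentiable ℂ (thetaLeech B τ) := by
  rw [funext (thetaLeech_eq_tsum (B := B) τ)]
  exact differentiable_tsum_mul_eC_pairC (L := id) (hB.summable_norm_thetaCoeff_mul_exp τ)

lemma IsNiemeier.theta_add (hB : IsNiemeier B) (τ : ℍ) (z : CV) (x y : LV) :
    thetaLeech B τ (z + (τ : ℂ) • liftC x + liftC y) =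
      eC (-((pairZ B x x : ℂ) * τ / 2) - pairC B (liftC x) z) * thetaLeech B τ z := by
  have hshift := ((Equiv.addRight x).hasSum_iff.mpr (hB.hasSum_theta τ z)).mul_left
    (eC (-((pairZ B x x : ℂ) * τ / 2) - pairC B (liftC x) z))
  refine (hB.hasSum_theta τ _).unique (hshift.congr_fun fun l => ?_)
  simp only [Function.comp, Equiv.coe_addRight, ← eC_add]
  rw [pairC_add_right, pairC_add_right, pairC_smul_right, pairC_liftC, pairC_liftC, ← add_assoc,
    eC_add _ (pairZ B l y : ℂ), eC_intCast, mul_one, liftC_add, pairC_add_left, pairZ_add_left,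
    pairZ_add_right, pairZ_add_right, pairZ_comm hB.symm x l]
  congr 1
  push_cast
  ring

/-- The permutation of the lattice induced by an integral matrix of unit determinant. -/
def latticeEquiv (σ : Matrix (Fin 24) (Fin 24) ℤ) (hσ : IsUnit σ.det) : LV ≃ LV where
  toFun := σ.mulVec
  invFun := σ⁻¹.mulVec
  left_inv l := by simp [nonsing_inv_mul _ hσ]
  right_inv l := by simp [mul_nonsing_inv _ hσ]

lemma latticeEquiv_apply (hσ : IsUnit σ.det) (l : LV) : latticeEquiv σ hσ l = σ.mulVec l := rfl

lemma IsNiemeier.theta_actC (hB : IsNiemeier B) (hσ : σ ∈ ConwayGroup B) (τ : ℍ) (z : CV) :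
    thetaLeech B τ (actC σ z) = thetaLeech B τ z := by
  refine ((latticeEquiv σ hσ.1).hasSum_iff.mpr (hB.hasSum_theta τ (actC σ z))).unique
    ((hB.hasSum_theta τ z).congr_fun fun l => ?_)
  rw [Function.comp_apply, latticeEquiv_apply, pairZ_mulVec hσ, ← actC_liftC, pairC_actC hσ]

lemma actC_neg_one (z : CV) : actC (-1) z = -z := by
  have hmap : (-1 : Matrix (Fin 24) (Fin 24) ℤ).map (Int.cast : ℤ → ℂ) = -1 := by
    ext i j
    simp [Matrix.one_apply]
  rw [actC, hmap, neg_mulVec, one_mulVec]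

lemma IsNiemeier.theta_neg (hB : IsNiemeier B) (τ : ℍ) (z : CV) :
    thetaLeech B τ (-z) = thetaLeech B τ z := by
  rw [← actC_neg_one, hB.theta_actC neg_one_mem_conwayGroup]

lemma IsNiemeier.theta_of_coe_eq_add_one (hB : IsNiemeier B) {τ τ' : ℍ}
    (h : (τ' : ℂ) = τ + 1) (z : CV) : thetaLeech B τ' z = thetaLeech B τ z := by
  refine (hB.hasSum_theta τ' z).unique ((hB.hasSum_theta τ z).congr_fun fun l => ?_)
  obtain ⟨m, hm⟩ := hB.even l
  rw [h, hm, show ((m + m : ℤ) : ℂ) * ((τ : ℂ) + 1) / 2 = ((m + m : ℤ) : ℂ) * τ / 2 + (m : ℂ) by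
    push_cast; ring, eC_add, eC_intCast, mul_one]

end Theta

section Gaussian

open MeasureTheory

variable {B : Matrix (Fin 24) (Fin 24) ℤ}

lemma measurePreserving_toLin' {n : Type*} [Fintype n] [DecidableEq n] {C : Matrix n n ℝ}
    (hC : |C.det| = 1) : MeasurePreserving (toLin' C) := by
  have hdet : C.det ≠ 0 := fun h => by simp [h] at hC
  refine ⟨(LinearMap.continuous_of_finiteDimensional _).measurable, ?_⟩
  rw [Real.map_matrix_volume_pi_eq_smul_volume_pi hdet, abs_inv, hC]
  simp

lemma measurableEmbedding_toLin' {n : Type*} [Fintype n] [DecidableEq n] {C : Matrix n n ℝ}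
    (hC : C.det ≠ 0) : MeasurableEmbedding (toLin' C) :=
  (LinearMap.continuous_of_finiteDimensional _).measurableEmbedding fun x y hxy =>
    mulVec_injective_of_isUnit ((isUnit_iff_isUnit_det C).mpr hC.isUnit) (by simpa using hxy)

lemma cexp_gaussian_eq {C : Matrix (Fin 24) (Fin 24) ℝ}
    (hC : B.map (Int.cast : ℤ → ℝ) = Cᵀ * C) (b : ℂ) (l : LV) (x : RV) :
    Complex.exp (-b * (pairR B x x : ℂ) - 2 * π * Complex.I * pairC B (liftC l) (ofRealVec x)) =
      Complex.exp (-b * ∑ i, (toLin' C x i : ℂ) ^ 2 +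
        ∑ i, -(2 * π * Complex.I * (C.mulVec (liftR l) i : ℂ)) * (toLin' C x i : ℂ)) := by
  rw [liftC_eq_ofRealVec, pairC_ofRealVec, pairR_eq_dotProduct_mulVec hC,
    pairR_eq_dotProduct_mulVec hC]
  simp only [toLin'_apply, dotProduct, Complex.ofReal_sum, Complex.ofReal_mul, sq, neg_mul,
    Finset.sum_neg_distrib, Finset.mul_sum, mul_assoc, sub_eq_add_neg]

lemma IsNiemeier.integrable_cexp_gaussian (hB : IsNiemeier B) {b : ℂ} (hb : 0 < b.re) :
    Integrable fun x : RV => Complex.exp (-b * (pairR B x x : ℂ)) := by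
  obtain ⟨C, hC, hdet⟩ := hB.exists_eq_transpose_mul_self
  have hinteg := GaussianFourier.integrable_cexp_neg_mul_sum_add hb
    fun i => -(2 * π * Complex.I * (C.mulVec (liftR 0) i : ℂ))
  refine (((measurePreserving_toLin' hdet).integrable_comp hinteg.aestronglyMeasurable).mpr
    hinteg).congr (.of_forall fun x => ?_)
  rw [Function.comp_apply, ← cexp_gaussian_eq hC, liftC_zero, pairC_zero_left, mul_zero, sub_zero]

lemma IsNiemeier.integral_cexp_gaussian (hB : IsNiemeier B) {b : ℂ} (hb : 0 < b.re) (l : LV) :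
    ∫ x : RV, Complex.exp
        (-b * (pairR B x x : ℂ) - 2 * π * Complex.I * pairC B (liftC l) (ofRealVec x)) =
      ((π : ℂ) / b) ^ 12 * Complex.exp (-((π : ℂ) ^ 2 * (pairZ B l l : ℂ)) / b) := by
  obtain ⟨C, hC, hdet⟩ := hB.exists_eq_transpose_mul_self
  have hdet0 : C.det ≠ 0 := fun h => by simp [h] at hdet
  let c : Fin 24 → ℂ := fun i => -(2 * π * Complex.I * (C.mulVec (liftR l) i : ℂ))
  have hsq : ∑ i, c i ^ 2 = -(4 * (π : ℂ) ^ 2 * (pairZ B l l : ℂ)) := by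
    rw [← Complex.ofReal_intCast, ← pairR_liftR, pairR_eq_dotProduct_mulVec hC, dotProduct,
      Complex.ofReal_sum, Finset.mul_sum, ← Finset.sum_neg_distrib]
    refine Finset.sum_congr rfl fun i _ => ?_
    push_cast
    linear_combination (4 * (π : ℂ) ^ 2 * (C.mulVec (liftR l) i : ℂ) ^ 2) * Complex.I_sq
  simp only [cexp_gaussian_eq hC]
  rw [(measurePreserving_toLin' hdet).integral_comp (measurableEmbedding_toLin' hdet0)
    fun v : RV => Complex.exp (-b * ∑ i, (v i : ℂ) ^ 2 + ∑ i, c i * (v i : ℂ)),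
    GaussianFourier.integral_cexp_neg_mul_sum_add hb c, hsq]
  congr 1
  · rw [show ((Fintype.card (Fin 24) : ℕ) : ℂ) / 2 = ((12 : ℕ) : ℂ) by simp; norm_num]
    exact Complex.cpow_natCast _ _
  · have hb0 : b ≠ 0 := by rintro rfl; simp at hb
    congr 1
    field_simp

end Gaussian

section Inversion

variable {B : Matrix (Fin 24) (Fin 24) ℤ}

lemma eq_of_forall_ofReal_eq {f g : ℂ → ℂ} (hf : Differentiable ℂ f) (hg : Differentiable ℂ g)
    (h : ∀ x : ℝ, f x = g x) : f = g := by
  refine AnalyticOnNhd.eq_of_frequently_eq (z₀ := 0) (fun z _ => hf.analyticAt z)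
    (fun z _ => hg.analyticAt z) ?_
  have htendsto : Filter.Tendsto (fun x : ℝ => (x : ℂ)) (𝓝[≠] 0) (𝓝[≠] 0) := by
    refine tendsto_nhdsWithin_iff.mpr ⟨tendsto_nhdsWithin_of_tendsto_nhds ?_, ?_⟩
    · simpa using Complex.continuous_ofReal.tendsto 0
    · filter_upwards [self_mem_nhdsWithin] with x hx
      simpa using hx
  exact htendsto.frequently (Filter.Eventually.of_forall h).frequently

lemma eq_of_forall_ofRealVec_eq {f g : CV → ℂ} (hf : Differentiable ℂ f)
    (hg : Differentiable ℂ g) (h : ∀ x : RV, f (ofRealVec x) = g (ofRealVec x)) : f = g := by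
  funext z
  let x : RV := fun i => (z i).re
  let y : RV := fun i => (z i).im
  have hline : Differentiable ℂ fun s : ℂ => ofRealVec x + s • ofRealVec y := by fun_prop
  have heq := eq_of_forall_ofReal_eq (hf.comp hline) (hg.comp hline) fun s => by
    simp only [Function.comp_apply, ← ofRealVec_smul, ← ofRealVec_add, h]
  have hz : ofRealVec x + Complex.I • ofRealVec y = z := by
    ext i
    simp only [ofRealVec, Pi.add_apply, Pi.smul_apply, smul_eq_mul, x, y]
    rw [mul_comm, Complex.re_add_im]
  simpa only [Function.comp_apply, hz] using congrFun heq Complex.I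

lemma differentiable_pairC_self : Differentiable ℂ fun z => pairC B z z := by
  unfold pairC
  simp only [dotProduct, mulVec]
  fun_prop

lemma re_pi_mul_I_div_pos (τ : ℍ) : 0 < ((π : ℂ) * Complex.I / τ).re := by
  rw [show (π : ℂ) * Complex.I / τ = (π : ℂ) * (Complex.I * (τ : ℂ)⁻¹) by ring,
    Complex.re_ofReal_mul, Complex.I_mul_re, Complex.inv_im, UpperHalfPlane.coe_im, neg_div,
    neg_neg]
  exact mul_pos Real.pi_pos (div_pos τ.im_pos (Complex.normSq_pos.mpr τ.ne_zero))

lemma sum_mulVec_mul (hB : B.IsSymm) (l : LV) (x : RV) :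
    ∑ i, (B.mulVec l i : ℂ) * (x i : ℂ) = pairC B (liftC l) (ofRealVec x) := by
  rw [pairC_comm hB, pairC, dotProduct]
  refine Finset.sum_congr rfl fun i _ => ?_
  simp [mulVec, dotProduct, liftC, ofRealVec, mul_comm]

lemma IsNiemeier.hasSum_gaussian_add (hB : IsNiemeier B) {τ τ' : ℍ} (h : (τ' : ℂ) = -(τ : ℂ)⁻¹)
    (x : RV) :
    HasSum (fun l : LV => Complex.exp (-(π * Complex.I / τ) *
        (pairR B (x + fun i => (l i : ℝ)) (x + fun i => (l i : ℝ)) : ℂ)))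
      (Complex.exp (-(π * Complex.I / τ) * (pairR B x x : ℂ)) *
        thetaLeech B τ' (-(τ : ℂ)⁻¹ • ofRealVec x)) := by
  refine ((hB.hasSum_theta τ' _).mul_left _).congr_fun fun l => ?_
  have hexpand : (pairR B (x + liftR l) (x + liftR l) : ℂ) =
      (pairR B x x : ℂ) + 2 * pairC B (liftC l) (ofRealVec x) + (pairZ B l l : ℂ) := by
    rw [← pairC_ofRealVec, ofRealVec_add, ← liftC_eq_ofRealVec, pairC_add_self hB.symm,
      pairC_ofRealVec, pairC_liftC, pairC_comm hB.symm]
  rw [show (fun i => (l i : ℝ)) = liftR l from rfl, hexpand, h, pairC_smul_right, eC, eC,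
    ← Complex.exp_add, ← Complex.exp_add]
  congr 1
  have := τ.ne_zero
  field_simp
  ring

lemma IsNiemeier.intFourier_gaussian (hB : IsNiemeier B) (τ : ℍ) (l : LV) :
    intFourier (fun x => Complex.exp (-(π * Complex.I / τ) * (pairR B x x : ℂ))) (B.mulVec l) =
      (τ : ℂ) ^ 12 * eC ((pairZ B l l : ℂ) * τ / 2) := by
  have hτ := τ.ne_zero
  have hpi : (π : ℂ) ≠ 0 := by exact_mod_cast Real.pi_ne_zero
  have hintegrand : ∀ x : RV, eC (-∑ i, (B.mulVec l i : ℂ) * (x i : ℂ)) *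
      Complex.exp (-(π * Complex.I / τ) * (pairR B x x : ℂ)) =
      Complex.exp (-(π * Complex.I / τ) * (pairR B x x : ℂ) -
        2 * π * Complex.I * pairC B (liftC l) (ofRealVec x)) := fun x => by
    rw [sum_mulVec_mul hB.symm, eC, ← Complex.exp_add]
    congr 1
    ring
  simp only [intFourier, hintegrand]
  rw [hB.integral_cexp_gaussian (re_pi_mul_I_div_pos τ)]
  congr 1
  · rw [show (π : ℂ) / (π * Complex.I / τ) = -(Complex.I * τ) by field_simp; simp, neg_pow,
      mul_pow, show Complex.I ^ 12 = (Complex.I ^ 4) ^ 3 by ring, Complex.I_pow_four]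
    norm_num
  · rw [eC]
    congr 1
    field_simp
    linear_combination (-(pairZ B l l : ℂ)) * Complex.I_sq

lemma IsNiemeier.theta_inv_ofRealVec (hB : IsNiemeier B) {τ τ' : ℍ}
    (h : (τ' : ℂ) = -(τ : ℂ)⁻¹) (x : RV) :
    Complex.exp (-(π * Complex.I / τ) * (pairR B x x : ℂ)) *
        thetaLeech B τ' (-(τ : ℂ)⁻¹ • ofRealVec x) =
      (τ : ℂ) ^ 12 * thetaLeech B τ (ofRealVec x) := by
  let e := latticeEquiv B (by rw [hB.det_eq_one]; exact isUnit_one)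
  have hcont : Continuous fun x : RV => Complex.exp (-(π * Complex.I / τ) * (pairR B x x : ℂ)) *
      thetaLeech B τ' (-(τ : ℂ)⁻¹ • ofRealVec x) := by
    have := continuous_pairR_self B
    have := continuous_ofRealVec
    exact (by fun_prop : Continuous fun x : RV => Complex.exp _).mul
      ((hB.differentiable_theta τ').continuous.comp (by fun_prop))
  have hsum : Summable
      (intFourier fun x => Complex.exp (-(π * Complex.I / τ) * (pairR B x x : ℂ))) := by
    rw [← e.summable_iff]
    refine ((hB.summable_norm_thetaTerm τ 0).of_norm.mul_left ((τ : ℂ) ^ 12)).congr fun l => ?_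
    rw [Function.comp_apply, latticeEquiv_apply, hB.intFourier_gaussian, pairC_zero_right,
      eC_zero, mul_one]
  have hpoisson := hasSum_poisson (hB.integrable_cexp_gaussian (re_pi_mul_I_div_pos τ)) hcont
    (hB.hasSum_gaussian_add h) hsum x
  refine (e.hasSum_iff.mpr hpoisson).unique
    (((hB.hasSum_theta τ (ofRealVec x)).mul_left ((τ : ℂ) ^ 12)).congr_fun fun l => ?_)
  rw [Function.comp_apply, latticeEquiv_apply, hB.intFourier_gaussian, sum_mulVec_mul hB.symm,
    mul_assoc]

lemma IsNiemeier.theta_inv (hB : IsNiemeier B) {τ τ' : ℍ} (h : (τ' : ℂ) = -(τ : ℂ)⁻¹) (z : CV) :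
    thetaLeech B τ' ((τ : ℂ)⁻¹ • z) =
      (τ : ℂ) ^ 12 * eC (pairC B z z / (2 * τ)) * thetaLeech B τ z := by
  have hquad := differentiable_pairC_self (B := B)
  have hentire := eq_of_forall_ofRealVec_eq
    (f := fun z => Complex.exp (-(π * Complex.I / τ) * pairC B z z) *
      thetaLeech B τ' (-(τ : ℂ)⁻¹ • z))
    (g := fun z => (τ : ℂ) ^ 12 * thetaLeech B τ z)
    ((by fun_prop : Differentiable ℂ fun z : CV => Complex.exp _).mul
      ((hB.differentiable_theta τ').comp (by fun_prop)))
    ((hB.differentiable_theta τ).const_mul _)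
    fun x => by simpa only [pairC_ofRealVec] using hB.theta_inv_ofRealVec h x
  have hexp : Complex.exp (-(π * Complex.I / τ) * pairC B z z) =
      (eC (pairC B z z / (2 * τ)))⁻¹ := by
    rw [← eC_neg, eC]
    congr 1
    have := τ.ne_zero
    field_simp
  have hz := congrFun hentire z
  simp only [_root_.neg_smul, hB.theta_neg, hexp] at hz
  rw [inv_mul_eq_iff_eq_mul₀ (eC_ne_zero _)] at hz
  rw [hz]
  ring

end Inversion

section ModularTransformation

variable {B : Matrix (Fin 24) (Fin 24) ℤ}

lemma jfactor_eq_denom (A : SL(2, ℤ)) (τ : ℍ) : jfactor A τ = UpperHalfPlane.denom A τ := by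
  rw [ModularGroup.denom_apply]
  rfl

lemma jfactor_ne_zero (A : SL(2, ℤ)) (τ : ℍ) : jfactor A τ ≠ 0 := by
  rw [jfactor_eq_denom]
  exact UpperHalfPlane.denom_ne_zero _ _

lemma coe_smul_eq_div_jfactor (A : SL(2, ℤ)) (τ : ℍ) :
    ((A • τ : ℍ) : ℂ) = ((A 0 0 : ℤ) * (τ : ℂ) + (A 0 1 : ℤ)) / jfactor A τ := by
  rw [UpperHalfPlane.coe_specialLinearGroup_apply]
  simp [jfactor, slc, sld]

lemma slc_mul (A A' : SL(2, ℤ)) : slc (A * A') = slc A * (A' 0 0 : ℤ) + sld A * slc A' := by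
  simp [slc, sld, Matrix.mul_apply, Fin.sum_univ_two]

lemma sld_mul (A A' : SL(2, ℤ)) : sld (A * A') = slc A * (A' 0 1 : ℤ) + sld A * sld A' := by
  simp [slc, sld, Matrix.mul_apply, Fin.sum_univ_two]

lemma mul_sld_sub_mul_slc (A : SL(2, ℤ)) :
    ((A 0 0 : ℤ) : ℂ) * sld A - ((A 0 1 : ℤ) : ℂ) * slc A = 1 := by
  have hdet := A.det_coe
  rw [Matrix.det_fin_two] at hdet
  rw [slc, sld]
  exact_mod_cast hdet

lemma jfactor_mul (A A' : SL(2, ℤ)) (τ : ℍ) :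
    jfactor (A * A') τ = jfactor A (A' • τ) * jfactor A' τ := by
  have hj := jfactor_ne_zero A' τ
  rw [jfactor, jfactor, coe_smul_eq_div_jfactor, slc_mul, sld_mul]
  field_simp
  rw [jfactor]
  ring

lemma slc_add_slc_mul_jfactor (A A' : SL(2, ℤ)) (τ : ℍ) :
    slc A + slc A' * jfactor (A * A') τ = slc (A * A') * jfactor A' τ := by
  rw [jfactor, jfactor, slc_mul, sld_mul]
  linear_combination (-slc A) * mul_sld_sub_mul_slc A'

lemma jfactor_one (τ : ℍ) : jfactor 1 τ = 1 := by simp [jfactor, slc, sld]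

lemma slc_inv (A : SL(2, ℤ)) : slc A⁻¹ = -slc A := by
  simp [slc, Matrix.SpecialLinearGroup.SL2_inv_expl]

/-- The modular transformation law of weight `k` and index `t` for the single matrix `A`; the set
of matrices satisfying it is a group, so it suffices to verify it for generators. -/
def TransformsUnder (B : Matrix (Fin 24) (Fin 24) ℤ) (k : ℤ) (t : ℕ) (φ : ℍ → CV → ℂ)
    (A : SL(2, ℤ)) : Prop :=
  ∀ (τ : ℍ) (z : CV), φ (A • τ) ((jfactor A τ)⁻¹ • z) =
    jfactor A τ ^ k * eC (t * slc A * pairC B z z / (2 * jfactor A τ)) * φ τ z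

lemma pairC_smul_smul (a : ℂ) (z w : CV) : pairC B (a • z) (a • w) = a ^ 2 * pairC B z w := by
  rw [pairC_smul_left, pairC_smul_right]
  ring

variable {k : ℤ} {t : ℕ} {φ : ℍ → CV → ℂ} {A A' : SL(2, ℤ)}

lemma TransformsUnder.one : TransformsUnder B k t φ 1 := fun τ z => by
  simp [jfactor_one, show slc 1 = 0 by simp [slc], eC_zero]

lemma TransformsUnder.mul (h : TransformsUnder B k t φ A) (h' : TransformsUnder B k t φ A') :
    TransformsUnder B k t φ (A * A') := by
  intro τ z
  have hcomp := h (A' • τ) ((jfactor A' τ)⁻¹ • z)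
  rw [h' τ z, smul_smul, smul_smul, ← mul_inv, ← jfactor_mul, pairC_smul_smul] at hcomp
  have hj := jfactor_ne_zero A (A' • τ)
  have hj' := jfactor_ne_zero A' τ
  have hcocycle := slc_add_slc_mul_jfactor A A' τ
  rw [hcomp]
  rw [jfactor_mul] at hcocycle ⊢
  have heC : eC (t * slc (A * A') * pairC B z z / (2 * (jfactor A (A' • τ) * jfactor A' τ))) =
      eC (t * slc A * ((jfactor A' τ)⁻¹ ^ 2 * pairC B z z) / (2 * jfactor A (A' • τ))) *
        eC (t * slc A' * pairC B z z / (2 * jfactor A' τ)) := by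
    rw [← eC_add]
    congr 1
    field_simp
    linear_combination (-(t : ℂ) * pairC B z z) * hcocycle
  rw [heC, mul_zpow]
  ring

lemma TransformsUnder.inv (h : TransformsUnder B k t φ A) : TransformsUnder B k t φ A⁻¹ := by
  intro τ z
  have hj := jfactor_ne_zero A⁻¹ τ
  have hjA : jfactor A (A⁻¹ • τ) = (jfactor A⁻¹ τ)⁻¹ :=
    eq_inv_of_mul_eq_one_left (by rw [← jfactor_mul, mul_inv_cancel, jfactor_one])
  have hA := h (A⁻¹ • τ) ((jfactor A⁻¹ τ)⁻¹ • z)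
  rw [hjA, inv_inv, smul_inv_smul, smul_inv_smul₀ hj, pairC_smul_smul] at hA
  have heC : eC (t * slc A * ((jfactor A⁻¹ τ)⁻¹ ^ 2 * pairC B z z) / (2 * (jfactor A⁻¹ τ)⁻¹)) =
      (eC (t * slc A⁻¹ * pairC B z z / (2 * jfactor A⁻¹ τ)))⁻¹ := by
    rw [← eC_neg, slc_inv]
    congr 1
    field_simp
  rw [hA, heC, _root_.inv_zpow, ← mul_inv, mul_inv_cancel_left₀]
  exact mul_ne_zero (zpow_ne_zero _ hj) (eC_ne_zero _)

lemma transformsUnder_of_S_of_T (hS : TransformsUnder B k t φ ModularGroup.S)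
    (hT : TransformsUnder B k t φ ModularGroup.T) (A : SL(2, ℤ)) : TransformsUnder B k t φ A := by
  have hA : A ∈ Subgroup.closure {ModularGroup.S, ModularGroup.T} := by
    rw [SpecialLinearGroup.SL2Z_generators]
    trivial
  induction hA using Subgroup.closure_induction with
  | mem A hA => rcases hA with rfl | rfl <;> assumption
  | one => exact .one
  | mul _ _ _ _ h h' => exact h.mul h'
  | inv _ _ h => exact h.inv

lemma IsNiemeier.transformsUnder_theta (hB : IsNiemeier B) (A : SL(2, ℤ)) :
    TransformsUnder B 12 1 (thetaLeech B) A := by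
  refine transformsUnder_of_S_of_T (fun τ z => ?_) (fun τ z => ?_) A
  · have hj : jfactor ModularGroup.S τ = τ := by simp [jfactor, slc, sld, ModularGroup.S]
    have hc : slc ModularGroup.S = 1 := by simp [slc, ModularGroup.S]
    have hcoe : ((ModularGroup.S • τ : ℍ) : ℂ) = -(τ : ℂ)⁻¹ := by
      rw [UpperHalfPlane.modular_S_smul]
      simp [inv_neg]
    rw [hj, hc, hB.theta_inv hcoe]
    norm_num
  · have hj : jfactor ModularGroup.T τ = 1 := by simp [jfactor, slc, sld, ModularGroup.T]
    have hc : slc ModularGroup.T = 0 := by simp [slc, ModularGroup.T]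
    have hcoe : ((ModularGroup.T • τ : ℍ) : ℂ) = τ + 1 := by
      rw [UpperHalfPlane.modular_T_smul, UpperHalfPlane.coe_vadd]
      simp [add_comm]
    rw [hj, hc, inv_one, one_smul, hB.theta_of_coe_eq_add_one hcoe]
    simp [eC_zero]

end ModularTransformation

/-! ### Fourier coefficients of Jacobi forms -/

section JacobiForms

variable {B : Matrix (Fin 24) (Fin 24) ℤ} {k : ℤ} {t : ℕ} {φ : ℍ → CV → ℂ} {f : ℕ → LV → ℂ}

lemma IsNiemeier.isJacobiFormWith (hB : IsNiemeier B)
    (hconway : ∀ σ ∈ ConwayGroup B, ∀ (τ : ℍ) (z : CV), φ τ (actC σ z) = φ τ z)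
    (hquasi : ∀ (x y : LV) (τ : ℍ) (z : CV), φ τ (z + (τ : ℂ) • liftC x + liftC y) =
      eC (t * (-((pairZ B x x : ℂ) * τ / 2) - pairC B (liftC x) z)) * φ τ z)
    (hmodular : ∀ A, TransformsUnder B k t φ A)
    (hexpansion : ∀ (τ : ℍ) (z : CV),
      HasSum (fun p : ℕ × LV => f p.1 p.2 * fterm B p.1 p.2 τ z) (φ τ z)) :
    IsJacobiFormWith B k t φ f where
  holo_tau := hB.mdifferentiable_of_hasSum_fterm hexpansion
  holo_z := hB.differentiable_of_hasSum_fterm hexpansion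
  conway_invar := hconway
  quasi_periodic x y τ z := by
    rw [hquasi, eC]
    congr 2
    ring
  modular A τ z := by
    have := jfactor_ne_zero A τ
    rw [hmodular A τ z, eC]
    congr 3
    field_simp
  expansion := hexpansion

lemma IsJacobiFormWith.add_smul_add (h : IsJacobiFormWith B k t φ f) (x y : LV) (τ : ℍ) (z : CV) :
    φ τ (z + (τ : ℂ) • liftC x + liftC y) =
      eC (t * (-((pairZ B x x : ℂ) * τ / 2) - pairC B (liftC x) z)) * φ τ z := by
  rw [h.quasi_periodic, eC]
  congr 2
  ring

lemma IsJacobiFormWith.transformsUnder (h : IsJacobiFormWith B k t φ f) (A : SL(2, ℤ)) :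
    TransformsUnder B k t φ A := by
  intro τ z
  have := jfactor_ne_zero A τ
  rw [h.modular, eC]
  congr 3
  field_simp

lemma IsNiemeier.intCoeff_eq_zero (hB : IsNiemeier B) {c : ℤ × LV → ℂ}
    (h : ∀ (τ : ℍ) (z : CV), HasSum
      (fun p : ℤ × LV => c p * (eC (p.1 * τ) * eC (pairC B (liftC p.2) z))) 0)
    (p : ℤ × LV) : c p = 0 := by
  have hbound := norm_coeff_le_of_forall_norm_le (c := fun p => c p * eC (p.1 * Complex.I))
    (F := fun _ _ => 0) (M := 0) (fun u x => ?_) (by simp) p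
  · exact (mul_eq_zero.mp (norm_le_zero_iff.mp hbound)).resolve_right (eC_ne_zero _)
  · let τ : ℍ := ⟨u + Complex.I, by simp⟩
    refine (h τ (dualCoords B (ofRealVec x))).congr_fun fun p => ?_
    rw [show (τ : ℂ) = u + Complex.I from rfl, hB.pairC_dualCoords, mul_add, eC_add, eC_add]
    simp only [liftC, ofRealVec]
    ring

/-- The Fourier coefficients `f`, extended by zero to negative powers of `q`. -/
def extendCoeff (f : ℕ → LV → ℂ) (n : ℤ) (l : LV) : ℂ :=
  Function.extend (fun p : ℕ × LV => ((p.1 : ℤ), p.2)) (fun p => f p.1 p.2) 0 (n, l)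

lemma extendCoeff_natCast (f : ℕ → LV → ℂ) (n : ℕ) (l : LV) : extendCoeff f n l = f n l :=
  natCast_prod_injective.extend_apply (fun p => f p.1 p.2) 0 (n, l)

lemma extendCoeff_zero (f : ℕ → LV → ℂ) (l : LV) : extendCoeff f 0 l = f 0 l :=
  extendCoeff_natCast f 0 l

lemma extendCoeff_of_neg (f : ℕ → LV → ℂ) {n : ℤ} (hn : n < 0) (l : LV) :
    extendCoeff f n l = 0 := by
  refine Function.extend_apply' _ _ _ ?_
  rintro ⟨p, hp⟩
  simp only [Prod.mk.injEq] at hp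
  omega

lemma hasSum_extendCoeff {τ : ℍ} {z : CV} {a : ℂ}
    (h : HasSum (fun p : ℕ × LV => f p.1 p.2 * fterm B p.1 p.2 τ z) a) :
    HasSum (fun p : ℤ × LV =>
      extendCoeff f p.1 p.2 * (eC (p.1 * τ) * eC (pairC B (liftC p.2) z))) a :=
  hasSum_extend_natCast (E := fun p => eC (p.1 * τ) * eC (pairC B (liftC p.2) z))
    (by simpa only [fterm, Int.cast_natCast] using h)

lemma IsJacobiFormWith.hasSum_translate (hφ : IsJacobiFormWith B k t φ f) (x : LV) (τ : ℍ)
    (z : CV) :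
    HasSum (fun p : ℤ × LV =>
        extendCoeff f (p.1 - pairZ B p.2 x) p.2 * (eC (p.1 * τ) * eC (pairC B (liftC p.2) z)))
      (φ τ (z + (τ : ℂ) • liftC x)) := by
  let e : ℤ × LV ≃ ℤ × LV :=
    ⟨fun p => (p.1 - pairZ B p.2 x, p.2), fun p => (p.1 + pairZ B p.2 x, p.2),
      fun p => by simp, fun p => by simp⟩
  refine (e.hasSum_iff.mpr (hasSum_extendCoeff (hφ.expansion τ _))).congr_fun fun p => ?_
  simp only [Function.comp_apply, e, Equiv.coe_fn_mk]
  rw [← eC_add, ← eC_add, pairC_add_right, pairC_smul_right, pairC_liftC]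
  congr 2
  push_cast
  ring

lemma IsJacobiFormWith.hasSum_shift (hφ : IsJacobiFormWith B k t φ f) {x : LV} {m : ℤ}
    (hm : pairZ B x x = 2 * m) (τ : ℍ) (z : CV) :
    HasSum (fun p : ℤ × LV => extendCoeff f (p.1 + t * m) (p.2 + (t : ℤ) • x) *
        (eC (p.1 * τ) * eC (pairC B (liftC p.2) z)))
      (eC (t * (-((pairZ B x x : ℂ) * τ / 2) - pairC B (liftC x) z)) * φ τ z) := by
  refine ((Equiv.addRight ((t * m : ℤ), (t : ℤ) • x)).hasSum_iff.mpr
    ((hasSum_extendCoeff (hφ.expansion τ z)).mul_left _)).congr_fun fun p => ?_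
  rw [Function.comp_apply, Equiv.coe_addRight, Prod.fst_add, Prod.snd_add, mul_left_comm (eC _),
    ← eC_add, ← eC_add, ← eC_add, liftC_add, liftC_smul, pairC_add_left, pairC_smul_left, hm]
  congr 2
  push_cast
  ring

lemma IsJacobiFormWith.extendCoeff_eq_shift (hφ : IsJacobiFormWith B k t φ f)
    (hB : IsNiemeier B) {x : LV} {m : ℤ} (hm : pairZ B x x = 2 * m) (n : ℤ) (l : LV) :
    extendCoeff f n l = extendCoeff f (n + pairZ B l x + t * m) (l + (t : ℤ) • x) := by
  have hdiff := hB.intCoeff_eq_zero (fun τ z => ?_) (c := fun p =>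
    extendCoeff f (p.1 - pairZ B p.2 x) p.2 - extendCoeff f (p.1 + t * m) (p.2 + (t : ℤ) • x))
    (n + pairZ B l x, l)
  · simpa only [add_sub_cancel_right, sub_eq_zero] using hdiff
  · have hsub := (hφ.hasSum_translate x τ z).sub (hφ.hasSum_shift hm τ z)
    rw [← add_zero (z + _), ← liftC_zero, hφ.add_smul_add, sub_self] at hsub
    simpa only [sub_mul] using hsub

lemma IsJacobiFormWith.coeff_mulVec (hφ : IsJacobiFormWith B k t φ f) (hB : IsNiemeier B)
    {σ : Matrix (Fin 24) (Fin 24) ℤ} (hσ : σ ∈ ConwayGroup B) (n : ℕ) (l : LV) :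
    f n (σ.mulVec l) = f n l := by
  have heq := hB.coeff_unique (f := fun n l => f n (σ.mulVec l)) (fun τ z => ?_) hφ.expansion
  · exact congrFun (congrFun heq n) l
  · have hexp := (Equiv.prodCongr (Equiv.refl ℕ) (latticeEquiv σ hσ.1)).hasSum_iff.mpr
      (hφ.expansion τ (actC σ z))
    rw [hφ.conway_invar σ hσ] at hexp
    refine hexp.congr_fun fun p => ?_
    rw [Function.comp_apply, Equiv.prodCongr_apply, Prod.map_fst, Prod.map_snd, Equiv.refl_apply,
      latticeEquiv_apply, fterm, fterm, ← actC_liftC, pairC_actC hσ]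

lemma pairZ_add_smul_self (hB : B.IsSymm) (t : ℕ) (l : LV) {w : LV} {m : ℤ}
    (hm : pairZ B w w = 2 * m) :
    pairZ B (l + (t : ℤ) • w) (l + (t : ℤ) • w) =
      pairZ B l l + 2 * t * (pairZ B l w + t * m) := by
  rw [pairZ_add_left, pairZ_add_right, pairZ_add_right, pairZ_smul_left, pairZ_smul_right,
    pairZ_smul_left, pairZ_smul_right, pairZ_comm hB w l, hm]
  ring

lemma IsJacobiFormWith.mem_minimalSet_of_coeff_ne_zero (hφ : IsJacobiFormWith B k t φ f)
    (hB : IsNiemeier B) {l : LV} (hl : f 0 l ≠ 0) : l ∈ minimalSet B t := by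
  rintro u ⟨w, rfl⟩
  obtain ⟨m, hm⟩ := (hB.even w).two_dvd
  have hshift := hφ.extendCoeff_eq_shift hB hm 0 l
  rw [extendCoeff_zero, zero_add] at hshift
  have hexponent : 0 ≤ pairZ B l w + t * m := by
    by_contra! hneg
    exact hl (hshift.trans (extendCoeff_of_neg f hneg _))
  rw [pairZ_add_smul_self hB.symm t l hm]
  exact le_add_of_nonneg_right (by positivity)

lemma mulVec_mem_minimalSet {σ : Matrix (Fin 24) (Fin 24) ℤ} (hσ : σ ∈ ConwayGroup B) {u : LV}
    (hu : u ∈ minimalSet B t) : σ.mulVec u ∈ minimalSet B t := by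
  rintro v ⟨w, rfl⟩
  have hle := hu (u + (t : ℤ) • σ⁻¹.mulVec w) ⟨_, rfl⟩
  rwa [← pairZ_mulVec hσ, ← pairZ_mulVec hσ (u + _), mulVec_add, mulVec_smul,
    mulVec_mulVec_inv hσ] at hle

lemma IsJacobiFormWith.coeff_eq_of_conjModT (hφ : IsJacobiFormWith B k t φ f)
    (hB : IsNiemeier B) (ht : 1 ≤ t) {v u : LV} (hv : v ∈ minimalSet B t)
    (hu : u ∈ minimalSet B t) (h : conjModT B t v u) : f 0 v = f 0 u := by
  obtain ⟨σ, hσ, w, hw⟩ := h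
  obtain rfl : v = σ.mulVec u + (t : ℤ) • w := by rw [← hw]; abel
  obtain ⟨m, hm⟩ := (hB.even w).two_dvd
  have hnorm := pairZ_add_smul_self hB.symm t (σ.mulVec u) hm
  have hle := mulVec_mem_minimalSet hσ hu _ ⟨w, rfl⟩
  have hge := hv (σ.mulVec u) ⟨-w, by simp⟩
  have hexponent : pairZ B (σ.mulVec u) w + t * m = 0 := by
    have hprod : 2 * (t : ℤ) * (pairZ B (σ.mulVec u) w + t * m) = 0 := by linarith
    exact (mul_eq_zero.mp hprod).resolve_left (by positivity)
  have hshift := hφ.extendCoeff_eq_shift hB hm 0 (σ.mulVec u)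
  rw [zero_add, hexponent, extendCoeff_zero, extendCoeff_zero, hφ.coeff_mulVec hB hσ] at hshift
  exact hshift.symm

lemma IsNiemeier.exists_add_smul_mem_minimalSet (hB : IsNiemeier B) (t : ℕ) (l : LV) :
    ∃ w : LV, l + (t : ℤ) • w ∈ minimalSet B t := by
  let norm (w : LV) : ℕ := (pairZ B (l + (t : ℤ) • w) (l + (t : ℤ) • w)).toNat
  refine ⟨Function.argmin norm, ?_⟩
  rintro u ⟨w, rfl⟩
  have hle := Function.argmin_le norm (Function.argmin norm + w)
  generalize Function.argmin norm = v at hle ⊢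
  simp only [norm, smul_add, ← add_assoc] at hle
  have hnonneg := hB.pairZ_self_nonneg (l + (t : ℤ) • v + (t : ℤ) • w)
  omega

lemma exists_forall_pairZ_self_le (B : Matrix (Fin 24) (Fin 24) ℤ) (ht : 1 ≤ t) :
    ∃ C : ℤ, ∀ v ∈ minimalSet B t, pairZ B v v ≤ C := by
  have hfin : (Set.univ.pi fun _ : Fin 24 => Set.Ico (0 : ℤ) t).Finite :=
    Set.Finite.pi fun _ => Set.finite_Ico _ _
  obtain ⟨C, hC⟩ := (hfin.image fun v => pairZ B v v).bddAbove
  have ht' : (0 : ℤ) < t := by exact_mod_cast ht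
  refine ⟨C, fun v hv => (hv (fun i => v i % t) ⟨fun i => -(v i / t), ?_⟩).trans
    (hC ⟨fun i => v i % t, fun i _ => ⟨Int.emod_nonneg _ ht'.ne', Int.emod_lt_of_pos _ ht'⟩, rfl⟩)⟩
  funext i
  simp only [Pi.add_apply, Pi.smul_apply, smul_eq_mul]
  linarith [Int.emod_add_mul_ediv (v i) t]

lemma IsNiemeier.finite_minimalSet (hB : IsNiemeier B) (ht : 1 ≤ t) : (minimalSet B t).Finite := by
  obtain ⟨C, hC⟩ := exists_forall_pairZ_self_le B ht
  exact (hB.finite_setOf_pairZ_le C).subset hC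

lemma IsNiemeier.exists_le_of_coeff_ne_zero (hB : IsNiemeier B) (ht : 1 ≤ t) :
    ∃ C : ℕ, ∀ {k : ℤ} {φ : ℍ → CV → ℂ} {f : ℕ → LV → ℂ}, IsJacobiFormWith B k t φ f →
      ∀ n l, f n l ≠ 0 → -(C : ℤ) ≤ 2 * (n : ℤ) * t - pairZ B l l := by
  obtain ⟨C, hC⟩ := exists_forall_pairZ_self_le B ht
  refine ⟨C.toNat, fun {k φ f} hφ n l hf => ?_⟩
  obtain ⟨w, hw⟩ := hB.exists_add_smul_mem_minimalSet t l
  obtain ⟨m, hm⟩ := (hB.even w).two_dvd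
  have hshift := hφ.extendCoeff_eq_shift hB hm n l
  rw [extendCoeff_natCast] at hshift
  have hexponent : 0 ≤ (n : ℤ) + pairZ B l w + t * m := by
    by_contra! hneg
    exact hf (hshift.trans (extendCoeff_of_neg f hneg _))
  have hnonneg : 0 ≤ 2 * (t : ℤ) * ((n : ℤ) + pairZ B l w + t * m) := by positivity
  linarith [hC _ hw, pairZ_add_smul_self hB.symm t l hm, Int.self_le_toNat C]

end JacobiForms

/-! ### Modular forms of level one -/

section LevelOneForms

/-- `g` is a modular form of weight `k` for `SL₂(ℤ)`. Working with functions instead of the bundled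
`ModularForm` types lets forms of different weights be multiplied and compared without casts. -/
def IsLevelOneForm (k : ℤ) (g : ℍ → ℂ) : Prop := ∃ G : ModularForm 𝒮ℒ k, ⇑G = g

/-- The constant term of the `q`-expansion of `g`, its value at the cusp. -/
def constCoeff (g : ℍ → ℂ) : ℂ := (qExpansion 1 g).coeff 0

/-- The discriminant `Δ` as a function, to be multiplied with arbitrary functions on `ℍ`. -/
def discrForm : ℍ → ℂ := ModularForm.discriminant

/-- The Eisenstein series `E₄`, normalised to constant term `1`, as a function. -/
def E4 : ℍ → ℂ := ModularForm.E₄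

/-- The Eisenstein series `E₆`, normalised to constant term `1`, as a function. -/
def E6 : ℍ → ℂ := ModularForm.E₆

variable {k k' : ℤ} {g g' : ℍ → ℂ}

lemma coe_Gamma_one_eq_range :
    ((CongruenceSubgroup.Gamma 1 : Subgroup SL(2, ℤ)) : Subgroup (GL (Fin 2) ℝ)) = 𝒮ℒ := by
  rw [CongruenceSubgroup.Gamma_one_top, ← MonoidHom.range_eq_map]

lemma isLevelOneForm_coe (G : MForm k) : IsLevelOneForm k G :=
  ⟨ModularForm.mcast rfl G coe_Gamma_one_eq_range.symm, rfl⟩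

namespace IsLevelOneForm

lemma exists_mForm (h : IsLevelOneForm k g) : ∃ G : MForm k, ⇑G = g := by
  obtain ⟨G, rfl⟩ := h
  exact ⟨ModularForm.mcast rfl G coe_Gamma_one_eq_range, rfl⟩

lemma of_weight_eq (h : IsLevelOneForm k g) (hk : k = k') : IsLevelOneForm k' g := hk ▸ h

lemma add (h : IsLevelOneForm k g) (h' : IsLevelOneForm k g') : IsLevelOneForm k (g + g') := by
  obtain ⟨G, rfl⟩ := h
  obtain ⟨G', rfl⟩ := h'
  exact ⟨G + G', rfl⟩

lemma smul (h : IsLevelOneForm k g) (c : ℂ) : IsLevelOneForm k (c • g) := by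
  obtain ⟨G, rfl⟩ := h
  exact ⟨c • G, rfl⟩

lemma mul (h : IsLevelOneForm k g) (h' : IsLevelOneForm k' g') :
    IsLevelOneForm (k + k') (g * g') := by
  obtain ⟨G, rfl⟩ := h
  obtain ⟨G', rfl⟩ := h'
  exact ⟨G.mul G', rfl⟩

lemma zero (k : ℤ) : IsLevelOneForm k 0 := ⟨0, rfl⟩

lemma one : IsLevelOneForm 0 1 := ⟨1, rfl⟩

lemma pow (h : IsLevelOneForm k g) (n : ℕ) : IsLevelOneForm (n * k) (g ^ n) := by
  induction n with
  | zero => simpa using one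
  | succ n ih =>
    rw [pow_succ]
    exact (ih.mul h).of_weight_eq (by push_cast; ring)

lemma constCoeff_add (h : IsLevelOneForm k g) (h' : IsLevelOneForm k g') :
    constCoeff (g + g') = constCoeff g + constCoeff g' := by
  obtain ⟨G, rfl⟩ := h
  obtain ⟨G', rfl⟩ := h'
  rw [constCoeff, ModularForm.qExpansion_add one_pos one_mem_strictPeriods_SL G G', map_add]
  rfl

lemma constCoeff_smul (h : IsLevelOneForm k g) (c : ℂ) :
    constCoeff (c • g) = c * constCoeff g := by
  obtain ⟨G, rfl⟩ := h
  rw [constCoeff, ModularForm.qExpansion_smul one_pos one_mem_strictPeriods_SL c G]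
  rfl

lemma constCoeff_mul (h : IsLevelOneForm k g) (h' : IsLevelOneForm k' g') :
    constCoeff (g * g') = constCoeff g * constCoeff g' := by
  obtain ⟨G, rfl⟩ := h
  obtain ⟨G', rfl⟩ := h'
  rw [constCoeff, ← ModularForm.coe_mul,
    ModularForm.qExpansion_mul one_pos one_mem_strictPeriods_SL G G',
    PowerSeries.coeff_zero_eq_constantCoeff, map_mul]
  simp only [constCoeff, PowerSeries.coeff_zero_eq_constantCoeff]

lemma constCoeff_pow (h : IsLevelOneForm k g) (n : ℕ) :
    constCoeff (g ^ n) = constCoeff g ^ n := by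
  induction n with
  | zero => simp [constCoeff, UpperHalfPlane.qExpansion_one]
  | succ n ih => rw [pow_succ, constCoeff_mul (h.pow n) h, ih, pow_succ]

end IsLevelOneForm

lemma qParam_one_eq_eC (τ : ℂ) : Function.Periodic.qParam 1 τ = eC τ := by
  simp [Function.Periodic.qParam, eC]

lemma eC_mem_ball (τ : ℍ) : eC τ ∈ Metric.ball (0 : ℂ) 1 := by
  rw [← qParam_one_eq_eC, mem_ball_zero_iff]
  exact Function.Periodic.norm_qParam_lt_one one_pos τ.im_pos

namespace IsLevelOneForm

lemma exists_hasSum (h : IsLevelOneForm k g) :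
    ∃ a : ℕ → ℂ, a 0 = constCoeff g ∧ ∀ τ : ℍ, HasSum (fun n : ℕ => a n * eC (n * τ)) (g τ) := by
  obtain ⟨G, rfl⟩ := h
  refine ⟨fun n => (qExpansion 1 G).coeff n, rfl, fun τ =>
    (ModularForm.hasSum_qExpansion G one_pos one_mem_strictPeriods_SL τ).congr_fun fun n => ?_⟩
  rw [qParam_one_eq_eC, eC_nat_mul]

lemma apply_smul (h : IsLevelOneForm k g) (A : SL(2, ℤ)) (τ : ℍ) :
    g (A • τ) = jfactor A τ ^ k * g τ := by
  obtain ⟨G, rfl⟩ := h.exists_mForm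
  rw [jfactor_eq_denom]
  exact SlashInvariantForm.slash_action_eqn_SL'' G
    (CongruenceSubgroup.Gamma_one_top ▸ Subgroup.mem_top A) τ

end IsLevelOneForm

lemma isLevelOneForm_discrForm : IsLevelOneForm 12 discrForm :=
  ⟨CuspForm.toModularFormₗ CuspForm.discriminant, rfl⟩

lemma isLevelOneForm_E4 : IsLevelOneForm 4 E4 := ⟨ModularForm.E₄, rfl⟩

lemma isLevelOneForm_E6 : IsLevelOneForm 6 E6 := ⟨ModularForm.E₆, rfl⟩

lemma discrForm_ne_zero (τ : ℍ) : discrForm τ ≠ 0 := ModularForm.discriminant_ne_zero τ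

lemma mul_discrForm_eq (τ : ℍ) : 1728 * discrForm τ = E4 τ ^ 3 - E6 τ ^ 2 := by
  rw [discrForm, ModularForm.discriminant_eq_E₄_cube_sub_E₆_sq, E4, E6]
  ring

lemma constCoeff_E4 : constCoeff E4 = 1 := EisensteinSeries.E_qExpansion_coeff_zero _ ⟨2, rfl⟩

lemma constCoeff_E6 : constCoeff E6 = 1 := EisensteinSeries.E_qExpansion_coeff_zero _ ⟨3, rfl⟩

lemma constCoeff_discrForm : constCoeff discrForm = 0 :=
  CuspFormClass.qExpansion_coeff_zero CuspForm.discriminant one_pos one_mem_strictPeriods_SL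

namespace IsLevelOneForm

lemma exists_eq_discrForm_mul (h : IsLevelOneForm k g) (h₀ : constCoeff g = 0) :
    ∃ g', IsLevelOneForm (k - 12) g' ∧ g = discrForm * g' := by
  obtain ⟨G, rfl⟩ := h
  obtain ⟨F, hF⟩ := (ModularForm.isCuspForm_iff_coeffZero_eq_zero G).mpr h₀
  refine ⟨CuspForm.discriminantEquiv F, ⟨_, rfl⟩, funext fun τ => ?_⟩
  rw [Pi.mul_apply, discrForm, ModularForm.discriminant_mul_discriminantEquiv_apply F τ, ← hF]
  rfl

lemma eq_zero_of_neg (h : IsLevelOneForm k g) (hk : k < 0) : g = 0 := by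
  obtain ⟨G, rfl⟩ := h
  exact ModularFormClass.levelOne_neg_weight_eq_zero hk G

lemma eq_zero_of_odd (h : IsLevelOneForm k g) (hk : Odd k) : g = 0 := by
  obtain ⟨G, rfl⟩ := h
  rw [ModularForm.levelOne_odd_weight_eq_zero hk G]
  rfl

lemma eq_zero_of_two (h : IsLevelOneForm 2 g) : g = 0 := by
  obtain ⟨G, rfl⟩ := h
  have := rank_zero_iff.mp ModularForm.levelOne_weight_two_rank_zero
  rw [Subsingleton.elim G 0]
  rfl

end IsLevelOneForm

lemma exists_mul_four_add_mul_six_eq (hk : 0 ≤ k) (heven : Even k) (hk₂ : k ≠ 2) :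
    ∃ a b : ℕ, (a * 4 + b * 6 : ℤ) = k := by
  obtain ⟨m, hm⟩ := heven
  rcases Int.even_or_odd' m with ⟨r, hr | hr⟩
  · exact ⟨r.toNat, 0, by omega⟩
  · exact ⟨(r - 1).toNat, 1, by omega⟩

lemma isLevelOneForm_E4_pow_mul_E6_pow {a b : ℕ} (hab : a * 4 + b * 6 = k) :
    IsLevelOneForm k (E4 ^ a * E6 ^ b) :=
  ((isLevelOneForm_E4.pow a).mul (isLevelOneForm_E6.pow b)).of_weight_eq hab

lemma constCoeff_E4_pow_mul_E6_pow (a b : ℕ) : constCoeff (E4 ^ a * E6 ^ b) = 1 := by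
  rw [(isLevelOneForm_E4.pow a).constCoeff_mul (isLevelOneForm_E6.pow b),
    isLevelOneForm_E4.constCoeff_pow, isLevelOneForm_E6.constCoeff_pow,
    constCoeff_E4, constCoeff_E6, one_pow, one_pow, one_mul]

lemma exists_isLevelOneForm_constCoeff_eq_one (hk : 4 ≤ k) (heven : Even k) :
    ∃ g, IsLevelOneForm k g ∧ constCoeff g = 1 := by
  obtain ⟨a, b, hab⟩ := exists_mul_four_add_mul_six_eq (by linarith) heven (by linarith)
  exact ⟨_, isLevelOneForm_E4_pow_mul_E6_pow hab, constCoeff_E4_pow_mul_E6_pow a b⟩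

lemma discrForm_eq_eC_mul_tprod (τ : ℍ) :
    discrForm τ = eC τ * ∏' i : ℕ, (1 - eC τ ^ (i + 1)) ^ 24 := by
  have hperiodic : Function.Periodic (ModularForm.discriminant ∘ ofComplex) (1 : ℝ) :=
    SlashInvariantFormClass.periodic_comp_ofComplex CuspForm.discriminant (h := 1)
      one_mem_strictPeriods_SL
  have hcusp := ModularForm.discriminant_cuspFunction_eqOn
    (x := Function.Periodic.qParam 1 τ) (by rw [qParam_one_eq_eC]; exact eC_mem_ball τ)
  rwa [eq_cuspFunction τ one_ne_zero hperiodic, qParam_one_eq_eC] at hcusp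

lemma tprod_one_sub_pow_ne_zero {q : ℂ} (hq : q ∈ Metric.ball (0 : ℂ) 1) :
    ∏' i : ℕ, (1 - q ^ (i + 1)) ^ 24 ≠ 0 := by
  rcases eq_or_ne q 0 with rfl | hq₀
  · simp
  · have him := Function.Periodic.im_invQParam_pos_of_norm_lt_one one_pos
      (mem_ball_zero_iff.mp hq) hq₀
    have hprod := discrForm_eq_eC_mul_tprod ⟨_, him⟩
    simp only [← qParam_one_eq_eC, Function.Periodic.qParam_right_inv one_ne_zero hq₀] at hprod
    exact right_ne_zero_of_mul (hprod ▸ discrForm_ne_zero _)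

lemma exists_hasSum_eC_mul_inv_discrForm :
    ∃ b : ℕ → ℂ, ∀ τ : ℍ, HasSum (fun n : ℕ => b n * eC (n * τ)) (eC τ * (discrForm τ)⁻¹) := by
  let P : ℂ → ℂ := fun q => ∏' i : ℕ, (1 - q ^ (i + 1)) ^ 24
  have hP : DifferentiableOn ℂ (fun q => (P q)⁻¹) (Metric.ball 0 1) :=
    (ModularForm.differentiableOn_tprod_one_sub_pow_pow 24).fun_inv
      fun _ => tprod_one_sub_pow_ne_zero
  refine ⟨fun n => (n.factorial : ℂ)⁻¹ * iteratedDeriv n (fun q => (P q)⁻¹) 0, fun τ => ?_⟩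
  have hvalue : eC τ * (discrForm τ)⁻¹ = (P (eC τ))⁻¹ := by
    rw [discrForm_eq_eC_mul_tprod, mul_inv, mul_inv_cancel_left₀ (eC_ne_zero _)]
  rw [hvalue]
  refine (Complex.hasSum_taylorSeries_on_ball hP (eC_mem_ball τ)).congr_fun fun n => ?_
  rw [eC_nat_mul, sub_zero, smul_eq_mul, smul_eq_mul]
  ring

end LevelOneForms

/-! ### The module structure on Jacobi forms -/

section ModuleStructure

open Finset.HasAntidiagonal (antidiagonal mem_antidiagonal)

variable {B : Matrix (Fin 24) (Fin 24) ℤ} {k m : ℤ} {t : ℕ} {φ ψ : ℍ → CV → ℂ}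
  {f f' : ℕ → LV → ℂ} {g : ℍ → ℂ} {a : ℕ → ℂ}

/-- The Fourier coefficients of the product of a `q`-series with coefficients `a` and a series in
`q` and `ζ` with coefficients `f`. -/
def cauchyProduct (a : ℕ → ℂ) (f : ℕ → LV → ℂ) : ℕ → LV → ℂ := fun n l =>
  ∑ x ∈ antidiagonal n, a x.1 * f x.2 l

/-- Pairs of an exponent `(n, ℓ)` and a decomposition of `n` correspond to pairs of a power of `q`
and an exponent. -/
def sigmaAntidiagonalProdEquiv : (Σ p : ℕ × LV, antidiagonal p.1) ≃ ℕ × (ℕ × LV) where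
  toFun x := (x.2.1.1, (x.2.1.2, x.1.2))
  invFun y := ⟨(y.1 + y.2.1, y.2.2), ⟨(y.1, y.2.1), by simp⟩⟩
  left_inv := by
    rintro ⟨⟨n, l⟩, ⟨⟨i, j⟩, h⟩⟩
    obtain rfl := mem_antidiagonal.mp h
    rfl
  right_inv _ := rfl

lemma cauchyProduct_mul_fterm (a : ℕ → ℂ) (f : ℕ → LV → ℂ) (n : ℕ) (l : LV) (τ : ℍ) (z : CV) :
    cauchyProduct a f n l * fterm B n l τ z =
      ∑ x ∈ antidiagonal n, a x.1 * eC (x.1 * τ) * (f x.2 l * fterm B x.2 l τ z) := by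
  rw [cauchyProduct, Finset.sum_mul]
  refine Finset.sum_congr rfl fun x hx => ?_
  obtain rfl := mem_antidiagonal.mp hx
  rw [fterm, fterm, Nat.cast_add, add_mul, eC_add]
  ring

lemma hasSum_cauchyProduct {τ : ℍ} {z : CV} {u v : ℂ}
    (ha : HasSum (fun n : ℕ => a n * eC (n * τ)) u)
    (hf : HasSum (fun p : ℕ × LV => f p.1 p.2 * fterm B p.1 p.2 τ z) v) :
    HasSum (fun p : ℕ × LV => cauchyProduct a f p.1 p.2 * fterm B p.1 p.2 τ z) (u * v) := by
  have hprod := ha.mul hf (summable_mul_of_summable_norm (f := fun n : ℕ => a n * eC (n * τ))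
    (g := fun p : ℕ × LV => f p.1 p.2 * fterm B p.1 p.2 τ z) ha.summable.norm hf.summable.norm)
  refine HasSum.sigma (sigmaAntidiagonalProdEquiv.hasSum_iff.mpr hprod) fun p => ?_
  rw [cauchyProduct_mul_fterm, ← Finset.sum_coe_sort]
  exact hasSum_fintype _

lemma cauchyProduct_zero_left (a : ℕ → ℂ) (f : ℕ → LV → ℂ) (l : LV) :
    cauchyProduct a f 0 l = a 0 * f 0 l := by
  simp [cauchyProduct]

namespace IsJacobiFormWith

lemma smul_of_apply_smul (hφ : IsJacobiFormWith B k t φ f) (hB : IsNiemeier B)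
    (hg : ∀ (A : SL(2, ℤ)) (τ : ℍ), g (A • τ) = jfactor A τ ^ m * g τ)
    (hexpansion : ∀ (τ : ℍ) (z : CV),
      HasSum (fun p : ℕ × LV => f' p.1 p.2 * fterm B p.1 p.2 τ z) (g τ * φ τ z)) :
    IsJacobiFormWith B (m + k) t (g • φ) f' := by
  refine hB.isJacobiFormWith (fun σ hσ τ z => ?_) (fun x y τ z => ?_) (fun A τ z => ?_) hexpansion
  · simp [hφ.conway_invar σ hσ]
  · simp only [Pi.smul_apply', Pi.smul_apply, smul_eq_mul]
    rw [hφ.add_smul_add]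
    ring
  · simp only [Pi.smul_apply', Pi.smul_apply, smul_eq_mul]
    rw [hg, hφ.transformsUnder A, zpow_add₀ (jfactor_ne_zero A τ)]
    ring

lemma smul_levelOneForm (hφ : IsJacobiFormWith B k t φ f) (hB : IsNiemeier B)
    (hg : IsLevelOneForm m g) (ha : ∀ τ : ℍ, HasSum (fun n : ℕ => a n * eC (n * τ)) (g τ)) :
    IsJacobiFormWith B (m + k) t (g • φ) (cauchyProduct a f) :=
  hφ.smul_of_apply_smul hB hg.apply_smul fun τ z =>
    hasSum_cauchyProduct (ha τ) (hφ.expansion τ z)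

lemma add (hφ : IsJacobiFormWith B k t φ f) (hψ : IsJacobiFormWith B k t ψ f')
    (hB : IsNiemeier B) : IsJacobiFormWith B k t (φ + ψ) (f + f') := by
  refine hB.isJacobiFormWith (fun σ hσ τ z => ?_) (fun x y τ z => ?_) (fun A τ z => ?_)
    fun τ z => ((hφ.expansion τ z).add (hψ.expansion τ z)).congr_fun fun p => ?_
  · simp [hφ.conway_invar σ hσ, hψ.conway_invar σ hσ]
  · simp only [Pi.add_apply]
    rw [hφ.add_smul_add, hψ.add_smul_add, mul_add]
  · simp only [Pi.add_apply]
    rw [hφ.transformsUnder A, hψ.transformsUnder A, mul_add]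
  · simp only [Pi.add_apply, add_mul]

lemma smul (hφ : IsJacobiFormWith B k t φ f) (hB : IsNiemeier B) (c : ℂ) :
    IsJacobiFormWith B k t (c • φ) (c • f) := by
  refine hB.isJacobiFormWith (fun σ hσ τ z => ?_) (fun x y τ z => ?_) (fun A τ z => ?_)
    fun τ z => ((hφ.expansion τ z).mul_left c).congr_fun fun p => ?_
  · simp [hφ.conway_invar σ hσ]
  · simp only [Pi.smul_apply, smul_eq_mul]
    rw [hφ.add_smul_add, mul_left_comm]
  · simp only [Pi.smul_apply, smul_eq_mul]
    rw [hφ.transformsUnder A, mul_left_comm]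
  · simp only [Pi.smul_apply, smul_eq_mul, mul_assoc]

end IsJacobiFormWith

lemma IsNiemeier.isJacobiFormWith_zero (hB : IsNiemeier B) (k : ℤ) (t : ℕ) :
    IsJacobiFormWith B k t 0 0 :=
  hB.isJacobiFormWith (by simp) (by simp) (fun A τ z => by simp) fun τ z => by simp

namespace IsJacobiFormWith

lemma coeff_unique {k' : ℤ} {t' : ℕ} (hφ : IsJacobiFormWith B k t φ f)
    (hφ' : IsJacobiFormWith B k' t' φ f') (hB : IsNiemeier B) : f = f' :=
  hB.coeff_unique hφ.expansion hφ'.expansion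

lemma eq_zero_of_coeff_eq_zero (hφ : IsJacobiFormWith B k t φ f) (h : f = 0) : φ = 0 := by
  subst h
  funext τ z
  exact (hφ.expansion τ z).unique (by simp)

lemma hasSum_coeff_succ (hφ : IsJacobiFormWith B k t φ f) (h₀ : ∀ l, f 0 l = 0) (τ : ℍ)
    (z : CV) :
    HasSum (fun p : ℕ × LV => f (p.1 + 1) p.2 * fterm B p.1 p.2 τ z) ((eC τ)⁻¹ * φ τ z) := by
  have hinj : Function.Injective fun p : ℕ × LV => (p.1 + 1, p.2) := by
    rintro ⟨n, l⟩ ⟨n', l'⟩ h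
    simpa using h
  have hsum := (hinj.hasSum_iff ?_).mpr (hφ.expansion τ z)
  · refine (hsum.mul_left (eC τ)⁻¹).congr_fun fun p => ?_
    have := eC_ne_zero (τ : ℂ)
    simp only [Function.comp_apply, fterm, Nat.cast_add, Nat.cast_one, add_mul, eC_add, one_mul]
    field_simp
  · rintro ⟨_ | n, l⟩ hn
    · simp [h₀]
    · exact absurd ⟨(n, l), rfl⟩ hn

lemma exists_eq_discrForm_smul (hφ : IsJacobiFormWith B k t φ f) (hB : IsNiemeier B)
    (h₀ : ∀ l, f 0 l = 0) :
    ∃ ψ f', IsJacobiFormWith B (k - 12) t ψ f' ∧ φ = discrForm • ψ := by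
  obtain ⟨b, hb⟩ := exists_hasSum_eC_mul_inv_discrForm
  refine ⟨discrForm⁻¹ • φ, cauchyProduct b fun n l => f (n + 1) l, ?_, ?_⟩
  · rw [sub_eq_neg_add]
    refine hφ.smul_of_apply_smul hB (fun A τ => ?_) fun τ z => ?_
    · rw [Pi.inv_apply, Pi.inv_apply, isLevelOneForm_discrForm.apply_smul, mul_inv,
        _root_.zpow_neg]
    · have hprod := hasSum_cauchyProduct (f := fun n l => f (n + 1) l) (hb τ)
        (hφ.hasSum_coeff_succ h₀ τ z)
      rwa [mul_mul_mul_comm, mul_inv_cancel₀ (eC_ne_zero τ), one_mul] at hprod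
  · rw [smul_smul, show discrForm * discrForm⁻¹ = 1 from
      funext fun τ => mul_inv_cancel₀ (discrForm_ne_zero τ), one_smul]

end IsJacobiFormWith

lemma le_of_cauchyProduct_ne_zero {N : ℕ} {c : ℤ} (ha : ∀ n, a n ≠ 0 → N ≤ n)
    (hf : ∀ n l, f n l ≠ 0 → c ≤ 2 * (n : ℤ) * t - pairZ B l l) {n : ℕ} {l : LV}
    (h : cauchyProduct a f n l ≠ 0) : c + 2 * (N : ℤ) * t ≤ 2 * (n : ℤ) * t - pairZ B l l := by
  obtain ⟨x, hx, hne⟩ := Finset.exists_ne_zero_of_sum_ne_zero h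
  obtain rfl := mem_antidiagonal.mp hx
  have hN : (N : ℤ) ≤ x.1 := by exact_mod_cast ha _ (left_ne_zero_of_mul hne)
  have hNt : 2 * (N : ℤ) * t ≤ 2 * (x.1 : ℤ) * t := by gcongr
  have hc := hf _ _ (right_ne_zero_of_mul hne)
  push_cast
  linarith

lemma IsHolJacobiForm.smul_levelOneForm (hφ : IsHolJacobiForm B k t φ) (hB : IsNiemeier B)
    (hg : IsLevelOneForm m g) : IsHolJacobiForm B (m + k) t (g • φ) := by
  obtain ⟨f, hf, hsupport⟩ := hφ
  obtain ⟨a, -, ha⟩ := hg.exists_hasSum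
  refine ⟨_, hf.smul_levelOneForm hB hg ha, fun n l hnl => ?_⟩
  by_contra hne
  have hle := le_of_cauchyProduct_ne_zero (B := B) (t := t) (N := 0) (c := 0)
    (fun n _ => n.zero_le) (fun n l hfnl => ?_) hne
  · simp only [CharP.cast_eq_zero, mul_zero, zero_mul, add_zero] at hle
    omega
  · by_contra! hneg
    exact hfnl (hsupport n l hneg)

lemma IsJacobiFormWith.discrForm_pow_smul (hφ : IsJacobiFormWith B k t φ f) (hB : IsNiemeier B)
    {c : ℤ} (hf : ∀ n l, f n l ≠ 0 → c ≤ 2 * (n : ℤ) * t - pairZ B l l) (N : ℕ) :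
    ∃ f', IsJacobiFormWith B (k + 12 * N) t (discrForm ^ N • φ) f' ∧
      ∀ n l, f' n l ≠ 0 → c + 2 * N * t ≤ 2 * (n : ℤ) * t - pairZ B l l := by
  obtain ⟨a, ha₀, ha⟩ := isLevelOneForm_discrForm.exists_hasSum
  rw [constCoeff_discrForm] at ha₀
  induction N with
  | zero => exact ⟨f, by simpa using hφ, by simpa using hf⟩
  | succ N ih =>
    obtain ⟨f', hf', hsupport⟩ := ih
    refine ⟨cauchyProduct a f', ?_, fun n l hne => ?_⟩
    · have hprod := hf'.smul_levelOneForm hB isLevelOneForm_discrForm ha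
      rw [smul_smul, ← pow_succ'] at hprod
      convert hprod using 1
      push_cast
      ring
    · have hle := le_of_cauchyProduct_ne_zero (N := 1)
        (fun n hn => Nat.one_le_iff_ne_zero.mpr fun h => hn (h ▸ ha₀)) hsupport hne
      push_cast at hle ⊢
      linarith

lemma IsNiemeier.exists_isHolJacobiForm_discrForm_pow_smul (hB : IsNiemeier B) (ht : 1 ≤ t) :
    ∃ N : ℕ, ∀ k φ, IsWeakJacobiForm B k t φ →
      IsHolJacobiForm B (k + 12 * N) t (discrForm ^ N • φ) := by
  obtain ⟨C, hC⟩ := hB.exists_le_of_coeff_ne_zero ht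
  refine ⟨C, fun k φ ⟨f, hf⟩ => ?_⟩
  obtain ⟨f', hf', hsupport⟩ := hf.discrForm_pow_smul hB (hC hf) C
  refine ⟨f', hf', fun n l hnl => ?_⟩
  by_contra hne
  have hCt : (C : ℤ) ≤ C * t := le_mul_of_one_le_right (by positivity) (by exact_mod_cast ht)
  linarith [hsupport n l hne]

lemma IsJacobiFormWith.eq_zero_of_odd (hφ : IsJacobiFormWith B k t φ f) (hk : Odd k) : φ = 0 := by
  funext τ z
  have hfactor : jfactor (-1) τ = -1 := by simp [jfactor, slc, sld]
  have hact : actC (-1) z = (-1 : ℂ)⁻¹ • z := by rw [actC_neg_one]; simp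
  have hmodular := hφ.transformsUnder (-1) τ z
  rw [hfactor, ← hact, hφ.conway_invar _ (neg_one_mem_conwayGroup), hk.neg_one_zpow,
    show slc (-1) = 0 by simp [slc], ModularGroup.SL_neg_smul, one_smul] at hmodular
  simpa [eC_zero, self_eq_neg] using hmodular

end ModuleStructure

/-! ### Forms of very negative weight vanish -/

section NegativeWeight

variable {B : Matrix (Fin 24) (Fin 24) ℤ} {k : ℤ} {t : ℕ} {φ : ℍ → CV → ℂ} {f : ℕ → LV → ℂ}

/-- `|e^{πit(x,x)τ} φ(τ, xτ + y)|`, the absolute value of a Jacobi form of index `t` in elliptic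
coordinates. It is periodic in `x`, and `SL₂(ℤ)` acts on it through `|cτ + d|^k` and a linear
change of `(x, y)`. -/
def ellipticNorm (B : Matrix (Fin 24) (Fin 24) ℤ) (t : ℕ) (φ : ℍ → CV → ℂ) (τ : ℍ) (x y : RV) :
    ℝ :=
  ‖φ τ ((τ : ℂ) • ofRealVec x + ofRealVec y)‖ * Real.exp (-π * t * pairR B x x * τ.im)

lemma pairC_liftC_smul_add_im (τ : ℍ) (x y : RV) (l : LV) :
    (pairC B (liftC l) ((τ : ℂ) • ofRealVec x + ofRealVec y)).im =
      τ.im * pairR B (liftR l) x := by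
  rw [pairC_add_right, pairC_smul_right, liftC_eq_ofRealVec, pairC_ofRealVec, pairC_ofRealVec]
  simp

-- `2t` times this number is `2nt - (ℓ,ℓ) + (ℓ + tx, ℓ + tx)`.
lemma IsNiemeier.add_pairR_add_nonneg (hB : IsNiemeier B) (ht : 1 ≤ t) {n : ℕ} {l : LV}
    (hnl : pairZ B l l ≤ 2 * (n : ℤ) * t) (x : RV) :
    0 ≤ n + pairR B (liftR l) x + t * pairR B x x / 2 := by
  have hsq := hB.pairR_self_nonneg (liftR l + (t : ℝ) • x)
  rw [pairR_add_left, pairR_add_right, pairR_add_right, pairR_smul_left, pairR_smul_left,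
    pairR_smul_right, pairR_smul_right, pairR_comm hB.symm x (liftR l), pairR_liftR] at hsq
  have hnl' : (pairZ B l l : ℝ) ≤ 2 * n * t := by exact_mod_cast hnl
  have ht' : (0 : ℝ) < 2 * t := by positivity
  refine nonneg_of_mul_nonneg_right (b := n + pairR B (liftR l) x + t * pairR B x x / 2) ?_ ht'
  linarith

lemma abs_pairR_liftR_le {x : RV} (hx : ∀ i, x i ∈ Set.Icc 0 1) (l : LV) :
    |pairR B (liftR l) x| ≤ entryNorm B * l1Norm l := by
  have hnorm : ‖ofRealVec x‖ ≤ 1 := by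
    refine (pi_norm_le_iff_of_nonneg zero_le_one).mpr fun i => ?_
    rw [ofRealVec, Complex.norm_of_nonneg (hx i).1]
    exact (hx i).2
  have hform : formNorm B (ofRealVec x) ≤ entryNorm B :=
    (formNorm_le _).trans (mul_le_of_le_one_right entryNorm_nonneg hnorm)
  calc |pairR B (liftR l) x| = ‖pairC B (liftC l) (ofRealVec x)‖ := by
        rw [liftC_eq_ofRealVec, pairC_ofRealVec, Complex.norm_real, Real.norm_eq_abs]
    _ ≤ formNorm B (ofRealVec x) * l1Norm l := norm_pairC_liftC_le _ _
    _ ≤ entryNorm B * l1Norm l := mul_le_mul_of_nonneg_right hform (l1Norm_nonneg l)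

lemma IsNiemeier.norm_fterm_mul_exp_le (hB : IsNiemeier B) (ht : 1 ≤ t) {n : ℕ} {l : LV}
    (hnl : pairZ B l l ≤ 2 * (n : ℤ) * t) {τ : ℍ} (hτ : 1 / 2 ≤ τ.im) {x : RV}
    (hx : ∀ i, x i ∈ Set.Icc 0 1) (y : RV) :
    ‖fterm B n l τ ((τ : ℂ) • ofRealVec x + ofRealVec y)‖ *
        Real.exp (-π * t * pairR B x x * τ.im) ≤
      Real.exp (-2 * π * n * (1 / 2)) * Real.exp (π * entryNorm B * l1Norm l) := by
  rw [norm_fterm, norm_eC, pairC_liftC_smul_add_im, ← Real.exp_add, ← Real.exp_add,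
    ← Real.exp_add, Real.exp_le_exp]
  set L := pairR B (liftR l) x
  set X := pairR B x x
  have hexponent : (n + L + t * X / 2) * (1 / 2) ≤ (n + L + t * X / 2) * τ.im :=
    mul_le_mul_of_nonneg_left hτ (hB.add_pairR_add_nonneg ht hnl x)
  have hX : 0 ≤ π * (t * X) := by
    have := hB.pairR_self_nonneg x
    positivity
  have hLle : π * -L ≤ π * (entryNorm B * l1Norm l) :=
    mul_le_mul_of_nonneg_left ((neg_le_abs L).trans (abs_pairR_liftR_le hx l)) Real.pi_pos.le
  have hexponent' := mul_le_mul_of_nonneg_left hexponent (by positivity : 0 ≤ 2 * π)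
  linarith

lemma IsJacobiFormWith.exists_ellipticNorm_le_of_mem_Icc (hφ : IsJacobiFormWith B k t φ f)
    (hB : IsNiemeier B) (ht : 1 ≤ t)
    (hf : ∀ (n : ℕ) (l : LV), 2 * (n : ℤ) * t - pairZ B l l < 0 → f n l = 0) :
    ∃ C : ℝ, ∀ (τ : ℍ) (x y : RV), 1 / 2 ≤ τ.im → (∀ i, x i ∈ Set.Icc 0 1) →
      ellipticNorm B t φ τ x y ≤ C := by
  obtain ⟨C, hC⟩ := hB.summable_norm_mul_exp (fun τ z => (hφ.expansion τ z).summable)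
    (v := 1 / 2) (by norm_num) (π * entryNorm B)
  refine ⟨C, fun τ x y hτ hx => ?_⟩
  set E := Real.exp (-π * t * pairR B x x * τ.im)
  have hE : ‖(E : ℂ)‖ = E := Complex.norm_of_nonneg (Real.exp_pos _).le
  have hseries := (hφ.expansion τ ((τ : ℂ) • ofRealVec x + ofRealVec y)).mul_right (E : ℂ)
  have hnorm : ellipticNorm B t φ τ x y =
      ‖φ τ ((τ : ℂ) • ofRealVec x + ofRealVec y) * (E : ℂ)‖ := by
    rw [norm_mul, hE, ellipticNorm]
  rw [hnorm, ← hseries.tsum_eq]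
  refine tsum_of_norm_bounded hC fun ⟨n, l⟩ => ?_
  rcases eq_or_ne (f n l) 0 with h₀ | h₀
  · simp [h₀]
  have hnl : pairZ B l l ≤ 2 * (n : ℤ) * t := by
    by_contra! h
    exact h₀ (hf n l (by linarith))
  rw [norm_mul, norm_mul, hE, mul_assoc, mul_assoc]
  exact mul_le_mul_of_nonneg_left (hB.norm_fterm_mul_exp_le ht hnl hτ hx y) (norm_nonneg _)

lemma IsJacobiFormWith.ellipticNorm_add_liftR (hφ : IsJacobiFormWith B k t φ f) (hB : B.IsSymm)
    (τ : ℍ) (x y : RV) (m : LV) :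
    ellipticNorm B t φ τ (x + liftR m) y = ellipticNorm B t φ τ x y := by
  have hpoint : (τ : ℂ) • ofRealVec (x + liftR m) + ofRealVec y =
      (τ : ℂ) • ofRealVec x + ofRealVec y + (τ : ℂ) • liftC m + liftC 0 := by
    rw [ofRealVec_add, ← liftC_eq_ofRealVec, liftC_zero, smul_add, add_zero, add_right_comm]
  rw [ellipticNorm, ellipticNorm, hpoint, hφ.add_smul_add, norm_mul, norm_eC,
    mul_comm (Real.exp _), mul_assoc, ← Real.exp_add]
  congr 2
  rw [pairR_add_left, pairR_add_right, pairR_add_right, pairR_comm hB x (liftR m), pairR_liftR,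
    ← Complex.ofReal_natCast, Complex.im_ofReal_mul, Complex.sub_im, pairC_liftC_smul_add_im]
  simp
  ring

lemma IsJacobiFormWith.exists_ellipticNorm_le (hφ : IsJacobiFormWith B k t φ f)
    (hB : IsNiemeier B) (ht : 1 ≤ t)
    (hf : ∀ (n : ℕ) (l : LV), 2 * (n : ℤ) * t - pairZ B l l < 0 → f n l = 0) :
    ∃ C : ℝ, ∀ (τ : ℍ) (x y : RV), 1 / 2 ≤ τ.im → ellipticNorm B t φ τ x y ≤ C := by
  obtain ⟨C, hC⟩ := hφ.exists_ellipticNorm_le_of_mem_Icc hB ht hf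
  refine ⟨C, fun τ x y hτ => ?_⟩
  have hx : x = (fun i => Int.fract (x i)) + liftR fun i => ⌊x i⌋ := by
    funext i
    simp [liftR]
  rw [hx, hφ.ellipticNorm_add_liftR hB.symm]
  exact hC τ _ y hτ fun i => ⟨Int.fract_nonneg _, (Int.fract_lt_one _).le⟩

lemma inv_jfactor_eq (A : SL(2, ℤ)) (τ : ℍ) :
    (jfactor A τ)⁻¹ = ((A • τ : ℍ) : ℂ) * -slc A + (A 0 0 : ℤ) := by
  have hj := jfactor_ne_zero A τ
  rw [coe_smul_eq_div_jfactor]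
  field_simp
  rw [jfactor]
  linear_combination -mul_sld_sub_mul_slc A

lemma TransformsUnder.ellipticNorm_smul {A : SL(2, ℤ)} (h : TransformsUnder B k t φ A) (τ : ℍ)
    (x : RV) :
    ellipticNorm B t φ (A • τ) (-(A 1 0 : ℝ) • x) ((A 0 0 : ℝ) • x) =
      ‖jfactor A τ‖ ^ k * ‖φ τ (ofRealVec x)‖ := by
  have hslc : slc A = ((A 1 0 : ℝ) : ℂ) := by simp [slc]
  have hpoint : ((A • τ : ℍ) : ℂ) • ofRealVec (-(A 1 0 : ℝ) • x) + ofRealVec ((A 0 0 : ℝ) • x) =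
      (jfactor A τ)⁻¹ • ofRealVec x := by
    rw [inv_jfactor_eq, ofRealVec_smul, ofRealVec_smul, add_smul, smul_smul, hslc]
    push_cast
    rfl
  have him : (t * slc A * pairC B (ofRealVec x) (ofRealVec x) / (2 * jfactor A τ)).im =
      -(t * (A 1 0 : ℝ) ^ 2 * pairR B x x * (A • τ).im / 2) := by
    have hreal : t * slc A * pairC B (ofRealVec x) (ofRealVec x) / (2 * jfactor A τ) =
        ((t * (A 1 0 : ℝ) * pairR B x x / 2 : ℝ) : ℂ) * (jfactor A τ)⁻¹ := by
      rw [pairC_ofRealVec, hslc]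
      push_cast
      field_simp
    rw [hreal, inv_jfactor_eq, hslc, Complex.im_ofReal_mul]
    simp
    ring
  have hexp : Real.exp (-2 * π * -(t * (A 1 0 : ℝ) ^ 2 * pairR B x x * (A • τ).im / 2)) *
      Real.exp (-π * t * (-(A 1 0 : ℝ) * (-(A 1 0 : ℝ) * pairR B x x)) * (A • τ).im) = 1 := by
    rw [← Real.exp_add, Real.exp_eq_one_iff]
    ring
  rw [ellipticNorm, hpoint, h τ, norm_mul, norm_mul, norm_eC, him, norm_zpow, pairR_smul_left,
    pairR_smul_right]
  linear_combination ‖jfactor A τ‖ ^ k * ‖φ τ (ofRealVec x)‖ * hexp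

lemma exists_norm_jfactor_le_sqrt (τ : ℍ) :
    ∃ A : SL(2, ℤ), 1 / 2 ≤ (A • τ).im ∧ ‖jfactor A τ‖ ≤ √(2 * τ.im) := by
  obtain ⟨A, hA⟩ := ModularGroup.exists_smul_mem_fd τ
  have him : 1 / 2 ≤ (A • τ).im := by
    nlinarith [ModularGroup.three_le_four_mul_im_sq_of_mem_fd hA, (A • τ).im_pos]
  refine ⟨A, him, Real.le_sqrt_of_sq_le ?_⟩
  have hj : 0 < ‖jfactor A τ‖ := norm_pos_iff.mpr (jfactor_ne_zero A τ)
  rw [ModularGroup.im_smul_eq_div_normSq, ← jfactor_eq_denom, Complex.normSq_eq_norm_sq,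
    le_div_iff₀ (by positivity)] at him
  linarith

lemma norm_apply_ofRealVec_le (h : ∀ A, TransformsUnder B k t φ A) (hk : k < 0) {C : ℝ}
    (hC : ∀ (τ : ℍ) (x y : RV), 1 / 2 ≤ τ.im → ellipticNorm B t φ τ x y ≤ C) {τ : ℍ}
    (hτ : τ.im ≤ 1 / 2) (x : RV) : ‖φ τ (ofRealVec x)‖ ≤ √(2 * τ.im) * C := by
  obtain ⟨A, hA, hj⟩ := exists_norm_jfactor_le_sqrt τ
  have hj₀ : 0 < ‖jfactor A τ‖ := norm_pos_iff.mpr (jfactor_ne_zero A τ)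
  have hj₁ : ‖jfactor A τ‖ ≤ 1 := hj.trans (Real.sqrt_le_one.mpr (by linarith))
  have hbound := hC (A • τ) (-(A 1 0 : ℝ) • x) ((A 0 0 : ℝ) • x) hA
  rw [(h A).ellipticNorm_smul] at hbound
  have hone : 1 ≤ ‖jfactor A τ‖ ^ (k + 1) := one_le_zpow_of_nonpos₀ hj₀ hj₁ (by omega)
  calc ‖φ τ (ofRealVec x)‖ ≤ ‖jfactor A τ‖ ^ (k + 1) * ‖φ τ (ofRealVec x)‖ :=
        le_mul_of_one_le_left (norm_nonneg _) hone
    _ = ‖jfactor A τ‖ * (‖jfactor A τ‖ ^ k * ‖φ τ (ofRealVec x)‖) := by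
        rw [zpow_add_one₀ hj₀.ne']; ring
    _ ≤ √(2 * τ.im) * C := mul_le_mul hj hbound (by positivity) (Real.sqrt_nonneg _)

lemma IsNiemeier.exists_dualCoords_ofRealVec_eq (hB : IsNiemeier B) (b : RV) :
    ∃ x : RV, dualCoords B (ofRealVec b) = ofRealVec x := by
  refine ⟨((B.map (Int.cast : ℤ → ℝ))⁻¹).mulVec b, ?_⟩
  have hmul : (B.map (Int.cast : ℤ → ℝ)).mulVec (((B.map Int.cast)⁻¹).mulVec b) = b := by
    rw [mulVec_mulVec, mul_nonsing_inv _ (by rw [hB.det_map_intCast]; exact isUnit_one),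
      one_mulVec]
  have hmul' : (B.map (Int.cast : ℤ → ℂ)).mulVec
      (ofRealVec (((B.map (Int.cast : ℤ → ℝ))⁻¹).mulVec b)) = ofRealVec b := by
    conv_rhs => rw [← hmul]
    funext i
    simp [mulVec, dotProduct, ofRealVec]
  rw [← hmul', dualCoords, mulVec_mulVec,
    nonsing_inv_mul _ (by rw [hB.det_map_intCast]; exact isUnit_one), one_mulVec]

-- On the line `Im τ = v` the form is `O(√v)`; letting `v → 0` kills every Fourier coefficient.
lemma IsHolJacobiForm.eq_zero_of_neg (hφ : IsHolJacobiForm B k t φ) (hB : IsNiemeier B)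
    (ht : 1 ≤ t) (hk : k < 0) : φ = 0 := by
  obtain ⟨f, hφ, hf⟩ := hφ
  obtain ⟨C, hC⟩ := hφ.exists_ellipticNorm_le hB ht hf
  refine hφ.eq_zero_of_coeff_eq_zero ?_
  ext n l
  have hcoeff : ∀ v : ℝ, 0 < v → v ≤ 1 / 2 →
      ‖f n l‖ * Real.exp (-2 * π * n * v) ≤ √(2 * v) * C := by
    intro v hv hv'
    refine hB.norm_coeff_mul_exp_le hv (fun τ z _ => hφ.expansion τ z) (fun τ b hτ => ?_) n l
    obtain ⟨x, hx⟩ := hB.exists_dualCoords_ofRealVec_eq b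
    rw [hx, ← hτ]
    exact norm_apply_ofRealVec_le hφ.transformsUnder hk hC (hτ ▸ hv') x
  have hleft : Filter.Tendsto (fun v : ℝ => ‖f n l‖ * Real.exp (-2 * π * n * v)) (𝓝[>] 0)
      (𝓝 ‖f n l‖) :=
    ((by fun_prop : Continuous _).tendsto' 0 _ (by simp)).mono_left nhdsWithin_le_nhds
  have hright : Filter.Tendsto (fun v : ℝ => √(2 * v) * C) (𝓝[>] 0) (𝓝 0) :=
    ((by fun_prop : Continuous _).tendsto' 0 _ (by simp)).mono_left nhdsWithin_le_nhds
  refine norm_le_zero_iff.mp (le_of_tendsto_of_tendsto hleft hright ?_)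
  filter_upwards [Ioc_mem_nhdsGT (show (0 : ℝ) < 1 / 2 by norm_num)] with v hv
  exact hcoeff v hv.1 hv.2

lemma IsNiemeier.exists_forall_lt_eq_zero (hB : IsNiemeier B) (ht : 1 ≤ t) :
    ∃ K : ℤ, ∀ k φ, k < K → IsWeakJacobiForm B k t φ → φ = 0 := by
  obtain ⟨N, hN⟩ := hB.exists_isHolJacobiForm_discrForm_pow_smul ht
  refine ⟨-12 * N, fun k φ hk hφ => ?_⟩
  have hzero := (hN k φ hφ).eq_zero_of_neg hB ht (by linarith)
  funext τ z
  simpa [discrForm_ne_zero τ] using congrFun (congrFun hzero τ) z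

end NegativeWeight

/-! ### Graded modules over the ring of modular forms -/

section GradedModules

/-- `g` is congruent to a multiple of a power of `E₆` modulo `E₄`, compatibly with the weight
`k`. -/
def IsE6PowModE4 (k : ℤ) (g : ℍ → ℂ) : Prop :=
  ∃ (c : ℂ) (a : ℕ) (g' : ℍ → ℂ), IsLevelOneForm (k - 4) g' ∧ (c ≠ 0 → a * 6 = k) ∧
    g = c • E6 ^ a + E4 * g'

namespace IsE6PowModE4

variable {k : ℤ} {g g' : ℍ → ℂ}

lemma smul_E6_pow (c : ℂ) {a : ℕ} (ha : a * 6 = k) : IsE6PowModE4 k (c • E6 ^ a) :=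
  ⟨c, a, 0, IsLevelOneForm.zero _, fun _ => ha, by simp⟩

lemma E4_mul (hg : IsLevelOneForm (k - 4) g) : IsE6PowModE4 k (E4 * g) :=
  ⟨0, 0, g, hg, fun h => absurd rfl h, by simp⟩

lemma zero (k : ℤ) : IsE6PowModE4 k 0 := by
  simpa using E4_mul (IsLevelOneForm.zero (k - 4))

lemma add (hg : IsE6PowModE4 k g) (hg' : IsE6PowModE4 k g') : IsE6PowModE4 k (g + g') := by
  obtain ⟨c, a, h, hh, ha, rfl⟩ := hg
  obtain ⟨c', a', h', hh', ha', rfl⟩ := hg'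
  rcases eq_or_ne c 0 with rfl | hc
  · refine ⟨c', a', h + h', hh.add hh', ha', ?_⟩
    rw [zero_smul, mul_add]
    ring
  · have hpow : c' • E6 ^ a' = c' • E6 ^ a := by
      rcases eq_or_ne c' 0 with rfl | hc'
      · simp
      · have haa' : a' = a := by have := ha hc; have := ha' hc'; omega
        rw [haa']
    refine ⟨c + c', a, h + h', hh.add hh', fun _ => ha hc, ?_⟩
    rw [hpow, add_smul, mul_add]
    ring

lemma discrForm_mul (hg : IsE6PowModE4 (k - 12) g) (hk : IsLevelOneForm (k - 12) g) :
    IsE6PowModE4 k (discrForm * g) := by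
  obtain ⟨c, a, g', hg', ha, hsum⟩ := hg
  have hE6pow : IsE6PowModE4 k ((-(1728⁻¹ : ℂ) * c) • E6 ^ (a + 2)) := by
    rcases eq_or_ne c 0 with rfl | hc
    · simpa using zero k
    · exact smul_E6_pow _ (by have := ha hc; push_cast; linarith)
  have hrest : IsLevelOneForm (k - 4)
      ((1728⁻¹ : ℂ) • (E4 ^ 2 * g) + (-(1728⁻¹ : ℂ)) • (E6 ^ 2 * g')) :=
    ((((isLevelOneForm_E4.pow 2).mul hk).of_weight_eq (by push_cast; ring)).smul _).add
      ((((isLevelOneForm_E6.pow 2).mul hg').of_weight_eq (by push_cast; ring)).smul _)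
  convert hE6pow.add (E4_mul hrest) using 1
  funext τ
  have hτ := congrFun hsum τ
  simp only [Pi.add_apply, Pi.mul_apply, Pi.smul_apply, Pi.pow_apply, smul_eq_mul] at hτ ⊢
  linear_combination (1728⁻¹ : ℂ) * g τ * mul_discrForm_eq τ - (1728⁻¹ : ℂ) * E6 τ ^ 2 * hτ

lemma E4_pow_mul_E6_pow {a b : ℕ} (hab : a * 4 + b * 6 = k) (c : ℂ) :
    IsE6PowModE4 k (c • (E4 ^ a * E6 ^ b)) := by
  rcases a with _ | a
  · simpa using smul_E6_pow c (a := b) (by push_cast at hab; linarith)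
  · have hform : IsLevelOneForm (k - 4) (c • (E4 ^ a * E6 ^ b)) :=
      (isLevelOneForm_E4_pow_mul_E6_pow (by push_cast at hab; linarith)).smul c
    convert E4_mul hform using 1
    rw [mul_smul_comm, pow_succ']
    ring_nf

end IsE6PowModE4

lemma IsLevelOneForm.exists_eq_smul_add_discrForm_mul {k : ℤ} {g : ℍ → ℂ}
    (hg : IsLevelOneForm k g) {a b : ℕ} (hab : a * 4 + b * 6 = k) :
    ∃ (c : ℂ) (h : ℍ → ℂ), IsLevelOneForm (k - 12) h ∧
      g = c • (E4 ^ a * E6 ^ b) + discrForm * h := by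
  have hmonomial := isLevelOneForm_E4_pow_mul_E6_pow hab
  obtain ⟨h, hh, hgh⟩ := (hg.add (hmonomial.smul (-constCoeff g))).exists_eq_discrForm_mul (by
    rw [hg.constCoeff_add (hmonomial.smul _), hmonomial.constCoeff_smul,
      constCoeff_E4_pow_mul_E6_pow]
    ring)
  exact ⟨constCoeff g, h, hh, by rw [← hgh]; module⟩

lemma IsLevelOneForm.isE6PowModE4_of_lt (m : ℕ) :
    ∀ {k : ℤ} {g : ℍ → ℂ}, k < m → IsLevelOneForm k g → IsE6PowModE4 k g := by
  induction m with
  | zero =>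
    intro k g hk hg
    exact hg.eq_zero_of_neg (by simpa using hk) ▸ .zero k
  | succ m ih =>
    intro k g hk hg
    rcases lt_or_ge k 0 with hneg | hnonneg
    · exact hg.eq_zero_of_neg hneg ▸ .zero k
    rcases Int.even_or_odd k with heven | hodd
    swap
    · exact hg.eq_zero_of_odd hodd ▸ .zero k
    rcases eq_or_ne k 2 with rfl | hk₂
    · exact hg.eq_zero_of_two ▸ .zero 2
    obtain ⟨a, b, hab⟩  := exists_mul_four_add_mul_six_eq hnonneg heven hk₂
    obtain ⟨c, h, hh, rfl⟩ := hg.exists_eq_smul_add_discrForm_mul hab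
    exact (IsE6PowModE4.E4_pow_mul_E6_pow hab c).add
      ((ih (by push_cast at hk; omega) hh).discrForm_mul hh)

lemma IsLevelOneForm.isE6PowModE4 {k : ℤ} {g : ℍ → ℂ} (hg : IsLevelOneForm k g) :
    IsE6PowModE4 k g :=
  isE6PowModE4_of_lt (k.toNat + 1) (by omega) hg

variable {M : Type*} [AddCommGroup M] [Module (ℍ → ℂ) M]

/-- `P k` cuts out the weight `k` part of a graded module over `ℂ[E₄, E₆]` whose weights are
bounded below and on which `E₄, E₆` is a regular sequence (the ambient module `M` plays the role of
the space of all functions). -/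
structure IsRegularGradedModule (P : ℤ → M → Prop) : Prop where
  zero : ∀ k, P k 0
  add : ∀ {k φ ψ}, P k φ → P k ψ → P k (φ + ψ)
  levelOneForm_smul : ∀ {k m g φ}, IsLevelOneForm m g → P k φ → P (m + k) (g • φ)
  eq_zero_of_E4_smul : ∀ {k φ}, P k φ → E4 • φ = 0 → φ = 0
  exists_eq_E4_smul : ∀ {k φ ψ}, P k φ → P (k + 2) ψ → E6 • φ = E4 • ψ →
    ∃ α, P (k - 4) α ∧ φ = E4 • α
  exists_forall_lt_eq_zero : ∃ K : ℤ, ∀ k φ, k < K → P k φ → φ = 0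

/-- Linear independence over the graded ring of modular forms of `φ i` of weight `w i`. -/
def LevelOneIndependent {ι : Type*} [Fintype ι] (w : ι → ℤ) (φ : ι → M) : Prop :=
  ∀ (k : ℤ) (g : ι → ℍ → ℂ), (∀ i, IsLevelOneForm (k - w i) (g i)) → ∑ i, g i • φ i = 0 →
    ∀ i, g i = 0

/-- `w, φ` is a homogeneous basis of the graded module `P` over the ring of modular forms. -/
structure IsGradedBasis {ι : Type*} [Fintype ι] (P : ℤ → M → Prop) (w : ι → ℤ) (φ : ι → M) :
    Prop where
  mem : ∀ i, P (w i) (φ i)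
  independent : LevelOneIndependent w φ
  exists_eq_sum : ∀ k ψ, P k ψ → ∃ g : ι → ℍ → ℂ, (∀ i, IsLevelOneForm (k - w i) (g i)) ∧
    ψ = ∑ i, g i • φ i

variable {P : ℤ → M → Prop} {ι : Type*} [Fintype ι] {w : ι → ℤ} {φ : ι → M} {k : ℤ}

lemma LevelOneIndependent.ne_zero (h : LevelOneIndependent w φ) (i : ι) : φ i ≠ 0 := by
  classical
  intro hφ
  have hform : ∀ j, IsLevelOneForm (w i - w j) ((Pi.single i 1 : ι → ℍ → ℂ) j) := fun j => by
    rcases eq_or_ne j i with rfl | hj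
    · simpa using IsLevelOneForm.one
    · simpa [hj] using IsLevelOneForm.zero _
  have hsum : ∑ j, (Pi.single i 1 : ι → ℍ → ℂ) j • φ j = 0 := by
    rw [Finset.sum_eq_single i (fun j _ hj => by simp [hj]) (by simp), hφ, smul_zero]
  simpa using h (w i) _ hform hsum i

lemma IsRegularGradedModule.levelOneForm_smul_of_eq (hP : IsRegularGradedModule P) {m k' : ℤ}
    {g : ℍ → ℂ} {ψ : M} (hg : IsLevelOneForm m g) (hψ : P k ψ) (h : m + k = k') :
    P k' (g • ψ) :=
  h ▸ hP.levelOneForm_smul hg hψ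

lemma IsRegularGradedModule.sum (hP : IsRegularGradedModule P) {ψ : ι → M}
    (h : ∀ i, P k (ψ i)) : P k (∑ i, ψ i) :=
  Finset.sum_induction ψ (P k) (fun _ _ => hP.add) (hP.zero k) fun i _ => h i

variable [Module ℂ M]

/-- `ψ` of weight `k` is a linear combination of the `φ i` of the same weight, up to elements of
`E₄P + E₆P`. -/
def InSpanModE4E6 (P : ℤ → M → Prop) (w : ι → ℤ) (φ : ι → M) (k : ℤ)
    (ψ : M) : Prop :=
  ∃ (c : ι → ℂ) (α β : M), P (k - 4) α ∧ P (k - 6) β ∧ (∀ i, c i ≠ 0 → w i = k) ∧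
    ψ = ∑ i, c i • φ i + E4 • α + E6 • β

/-- The classes of the `φ i` are linearly independent in `P / (E₄P + E₆P)`. -/
def IndependentModE4E6 (P : ℤ → M → Prop) (w : ι → ℤ) (φ : ι → M) :
    Prop :=
  ∀ (k : ℤ) (c : ι → ℂ) (α β : M), P (k - 4) α → P (k - 6) β → (∀ i, c i ≠ 0 → w i = k) →
    ∑ i, c i • φ i = E4 • α + E6 • β → ∀ i, c i = 0

variable [IsScalarTower ℂ (ℍ → ℂ) M]

namespace IsRegularGradedModule

lemma smul (hP : IsRegularGradedModule P) {ψ : M} (hψ : P k ψ) (c : ℂ) : P k (c • ψ) := by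
  simpa using hP.levelOneForm_smul (IsLevelOneForm.one.smul c) hψ

lemma neg (hP : IsRegularGradedModule P) {ψ : M} (hψ : P k ψ) : P k (-ψ) := by
  simpa using hP.smul hψ (-1)

lemma sum_smul_E6_pow (hP : IsRegularGradedModule P) (hφ : ∀ i, P (w i) (φ i)) {c : ι → ℂ}
    {a : ι → ℕ} (ha : ∀ i, c i ≠ 0 → a i * 6 + w i = k) :
    P k (∑ i, c i • E6 ^ a i • φ i) := by
  refine hP.sum fun i => ?_
  rcases eq_or_ne (c i) 0 with hc | hc
  · rw [hc, zero_smul]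
    exact hP.zero k
  · exact hP.smul (hP.levelOneForm_smul_of_eq (isLevelOneForm_E6.pow _) (hφ i) (ha i hc)) _

end IsRegularGradedModule

lemma sum_smul_E6_pow_eq (c : ι → ℂ) (a : ι → ℕ) (φ : ι → M) :
    ∑ i, c i • E6 ^ a i • φ i = ∑ i, (if a i = 0 then c i else 0) • φ i +
      E6 • ∑ i, (if a i = 0 then 0 else c i) • E6 ^ (a i - 1) • φ i := by
  rw [Finset.smul_sum, ← Finset.sum_add_distrib]
  refine Finset.sum_congr rfl fun i _ => ?_
  by_cases ha : a i = 0
  · simp [ha]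
  · simp only [ha, if_false, zero_smul, zero_add]
    rw [smul_comm E6, ← mul_smul E6, ← pow_succ', Nat.sub_add_cancel (by omega)]

-- The terms free of `E₆` vanish by independence modulo `(E₄, E₆)`; the rest can be divided by `E₆`
-- because `E₄, E₆` is a regular sequence.
lemma IndependentModE4E6.eq_zero_of_sum_smul_E6_pow (h : IndependentModE4E6 P w φ)
    (hP : IsRegularGradedModule P) (hφ : ∀ i, P (w i) (φ i)) (m : ℕ) :
    ∀ {k : ℤ} {c : ι → ℂ} {a : ι → ℕ} {β : M},
      (∀ i, c i ≠ 0 → a i < m ∧ a i * 6 + w i = k) → P (k - 4) β →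
      ∑ i, c i • E6 ^ a i • φ i = E4 • β → ∀ i, c i = 0 := by
  induction m with
  | zero =>
    intro k c a β ha _ _ i
    by_contra hc
    exact absurd (ha i hc).1 (Nat.not_lt_zero _)
  | succ m ih =>
    intro k c a β ha hβ hsum
    have ha' : ∀ i, (if a i = 0 then 0 else c i) ≠ 0 →
        a i - 1 < m ∧ (a i - 1 : ℕ) * 6 + w i = k - 6 := fun i hc => by
      by_cases h₀ : a i = 0
      · simp [h₀] at hc
      · have := ha i (by simpa [h₀] using hc)
        omega
    have hX := hP.sum_smul_E6_pow hφ fun i hc => (ha' i hc).2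
    rw [sum_smul_E6_pow_eq] at hsum
    set X := ∑ i, (if a i = 0 then 0 else c i) • E6 ^ (a i - 1) • φ i
    have hlow : ∀ i, (if a i = 0 then c i else 0) = 0 := by
      refine h k _ β (-X) hβ (hP.neg hX) (fun i hc => ?_) ?_
      · by_cases h₀ : a i = 0
        · simpa [h₀] using (ha i (by simpa [h₀] using hc)).2
        · simp [h₀] at hc
      · rw [smul_neg, ← hsum, add_neg_cancel_right]
    simp only [hlow, zero_smul, Finset.sum_const_zero, zero_add] at hsum
    obtain ⟨α, hα, hXα⟩ := hP.exists_eq_E4_smul hX (by convert hβ using 1; ring) hsum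
    have hhigh := ih ha' hα hXα
    intro i
    by_cases h₀ : a i = 0
    · simpa [h₀] using hlow i
    · simpa [h₀] using hhigh i

lemma IndependentModE4E6.exists_eq_E4_mul (h : IndependentModE4E6 P w φ)
    (hP : IsRegularGradedModule P) (hφ : ∀ i, P (w i) (φ i)) {g : ι → ℍ → ℂ}
    (hg : ∀ i, IsLevelOneForm (k - w i) (g i)) (hsum : ∑ i, g i • φ i = 0) :
    ∃ g' : ι → ℍ → ℂ, (∀ i, IsLevelOneForm (k - 4 - w i) (g' i)) ∧ ∑ i, g' i • φ i = 0 ∧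
      ∀ i, g i = E4 * g' i := by
  choose c a g' hg' ha hgg' using fun i => (hg i).isE6PowModE4
  have hg'' : ∀ i, IsLevelOneForm (k - 4 - w i) (g' i) := fun i => (hg' i).of_weight_eq (by ring)
  have hβ : P (k - 4) (-∑ i, g' i • φ i) :=
    hP.neg (hP.sum fun i => hP.levelOneForm_smul_of_eq (hg'' i) (hφ i) (by ring))
  have hsplit : ∑ i, c i • E6 ^ a i • φ i = E4 • (-∑ i, g' i • φ i) := by
    rw [smul_neg, eq_neg_iff_add_eq_zero, Finset.smul_sum, ← Finset.sum_add_distrib, ← hsum]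
    refine Finset.sum_congr rfl fun i _ => ?_
    rw [hgg' i, add_smul, mul_smul, smul_assoc]
  have hc : ∀ i, c i = 0 := by
    refine h.eq_zero_of_sum_smul_E6_pow hP hφ (∑ i, a i + 1) (fun i hci => ⟨?_, ?_⟩) hβ hsplit
    · exact Nat.lt_succ_of_le
        (Finset.single_le_sum (f := a) (fun _ _ => Nat.zero_le _) (Finset.mem_univ i))
    · linarith [ha i hci]
  refine ⟨g', hg'', neg_eq_zero.mp (hP.eq_zero_of_E4_smul hβ ?_), fun i => ?_⟩
  · simp [← hsplit, hc]
  · rw [hgg' i, hc i, zero_smul, zero_add]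

lemma IndependentModE4E6.levelOneIndependent (h : IndependentModE4E6 P w φ)
    (hP : IsRegularGradedModule P) (hφ : ∀ i, P (w i) (φ i)) : LevelOneIndependent w φ := by
  have hlt : ∀ (m : ℕ) (k : ℤ) (g : ι → ℍ → ℂ), (∀ i, k - w i < m) →
      (∀ i, IsLevelOneForm (k - w i) (g i)) → ∑ i, g i • φ i = 0 → ∀ i, g i = 0 := by
    intro m
    induction m with
    | zero => exact fun k g hk hg _ i => (hg i).eq_zero_of_neg (by simpa using hk i)
    | succ m ih =>
      intro k g hk hg hsum i
      obtain ⟨g', hg', hsum', hgg'⟩ := h.exists_eq_E4_mul hP hφ hg hsum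
      have hk' : ∀ i, k - 4 - w i < m := fun i => by
        have := hk i
        push_cast at this
        linarith
      rw [hgg' i, ih (k - 4) g' hk' hg' hsum' i, mul_zero]
  intro k g
  refine hlt (∑ i, ((k - w i).toNat + 1)) k g fun i => ?_
  have hle := Finset.single_le_sum (f := fun i => (k - w i).toNat + 1)
    (fun _ _ => Nat.zero_le _) (Finset.mem_univ i)
  omega

lemma IndependentModE4E6.cons {n : ℕ} {w : Fin n → ℤ} {φ : Fin n → M}
    (h : IndependentModE4E6 P w φ) (hP : IsRegularGradedModule P) {ψ : M}
    (hψ : ¬InSpanModE4E6 P w φ k ψ) :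
    IndependentModE4E6 P (Fin.cons k w : Fin (n + 1) → ℤ) (Fin.cons ψ φ : Fin (n + 1) → M) := by
  intro k' c α β hα hβ hw hsum
  simp only [Fin.sum_univ_succ, Fin.cons_zero, Fin.cons_succ] at hsum
  have hw' : ∀ i : Fin n, c i.succ ≠ 0 → w i = k' := fun i => by simpa using hw i.succ
  have hc₀ : c 0 = 0 := by
    by_contra hc
    obtain rfl : k = k' := by simpa using hw 0 hc
    refine hψ ⟨fun i => -(c 0)⁻¹ * c i.succ, (c 0)⁻¹ • α, (c 0)⁻¹ • β, hP.smul hα _,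
      hP.smul hβ _, fun i hi => hw' i (right_ne_zero_of_mul hi), ?_⟩
    have hsmul : c 0 • ψ = E4 • α + E6 • β - ∑ i : Fin n, c i.succ • φ i := by
      rw [← hsum, add_sub_cancel_right]
    rw [← inv_smul_smul₀ hc ψ, hsmul, smul_sub, smul_add, smul_comm _ E4, smul_comm _ E6,
      Finset.smul_sum]
    simp only [mul_smul, _root_.neg_smul, Finset.sum_neg_distrib]
    abel
  rw [hc₀, zero_smul, zero_add] at hsum
  exact fun i => Fin.cases hc₀ (h k' _ α β hα hβ hw' hsum) i

lemma IsRegularGradedModule.exists_independentModE4E6 (hP : IsRegularGradedModule P) {s : ℕ}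
    (hs : ∀ (n : ℕ) (w : Fin n → ℤ) (φ : Fin n → M), (∀ i, P (w i) (φ i)) →
      LevelOneIndependent w φ → n ≤ s) :
    ∃ (n : ℕ) (w : Fin n → ℤ) (φ : Fin n → M), n ≤ s ∧ (∀ i, P (w i) (φ i)) ∧
      IndependentModE4E6 P w φ ∧ ∀ k ψ, P k ψ → InSpanModE4E6 P w φ k ψ := by
  classical
  let Q : ℕ → Prop := fun n => ∃ (w : Fin n → ℤ) (φ : Fin n → M),
    (∀ i, P (w i) (φ i)) ∧ IndependentModE4E6 P w φ
  have hQ₀ : Q 0 := ⟨Fin.elim0, Fin.elim0, fun i => i.elim0, fun _ _ _ _ _ _ _ _ i => i.elim0⟩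
  obtain ⟨w, φ, hφ, h⟩ := Nat.findGreatest_spec (Nat.zero_le s) hQ₀
  refine ⟨_, w, φ, Nat.findGreatest_le s, hφ, h, fun k ψ hψ => ?_⟩
  by_contra hspan
  have hφ' : ∀ i, P ((Fin.cons k w : Fin _ → ℤ) i) ((Fin.cons ψ φ : Fin _ → M) i) :=
    Fin.cases hψ hφ
  have hcons := h.cons hP hspan
  have hle := Nat.le_findGreatest (P := Q) (hs _ _ _ hφ' (hcons.levelOneIndependent hP hφ'))
    ⟨_, _, hφ', hcons⟩
  omega

lemma IsRegularGradedModule.exists_eq_sum (hP : IsRegularGradedModule P)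
    (hspan : ∀ k ψ, P k ψ → InSpanModE4E6 P w φ k ψ) {ψ : M} (hψ : P k ψ) :
    ∃ g : ι → ℍ → ℂ, (∀ i, IsLevelOneForm (k - w i) (g i)) ∧ ψ = ∑ i, g i • φ i := by
  obtain ⟨K, hK⟩ := hP.exists_forall_lt_eq_zero
  obtain ⟨m, hm⟩ : ∃ m : ℕ, k < K + m := ⟨(k - K + 1).toNat, by omega⟩
  induction m generalizing k ψ with
  | zero =>
    have hψ₀ : ψ = 0 := hK k ψ (by simpa using hm) hψ
    exact ⟨0, fun _ => IsLevelOneForm.zero _, by simp [hψ₀]⟩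
  | succ m ih =>
    obtain ⟨c, α, β, hα, hβ, hc, rfl⟩ := hspan k ψ hψ
    obtain ⟨g, hg, rfl⟩ := ih hα (by push_cast at hm; linarith)
    obtain ⟨g', hg', rfl⟩ := ih hβ (by push_cast at hm; linarith)
    have hconst : ∀ i, IsLevelOneForm (k - w i) (c i • 1) := fun i => by
      rcases eq_or_ne (c i) 0 with h₀ | h₀
      · simpa [h₀] using IsLevelOneForm.zero _
      · exact (IsLevelOneForm.one.smul _).of_weight_eq (by rw [hc i h₀, sub_self])
    refine ⟨fun i => c i • 1 + E4 * g i + E6 * g' i, fun i => ((hconst i).add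
      ((isLevelOneForm_E4.mul (hg i)).of_weight_eq (by ring))).add
      ((isLevelOneForm_E6.mul (hg' i)).of_weight_eq (by ring)), ?_⟩
    simp only [Finset.smul_sum, ← Finset.sum_add_distrib, add_smul, mul_smul, smul_assoc,
      one_smul]

theorem IsRegularGradedModule.exists_isGradedBasis (hP : IsRegularGradedModule P) {s : ℕ}
    (hs : ∀ (n : ℕ) (w : Fin n → ℤ) (φ : Fin n → M), (∀ i, P (w i) (φ i)) →
      LevelOneIndependent w φ → n ≤ s) :
    ∃ (n : ℕ) (w : Fin n → ℤ) (φ : Fin n → M), n ≤ s ∧ IsGradedBasis P w φ := by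
  obtain ⟨n, w, φ, hn, hφ, h, hspan⟩ := hP.exists_independentModE4E6 hs
  exact ⟨n, w, φ, hn, hφ, h.levelOneIndependent hP hφ, fun _ _ => hP.exists_eq_sum hspan⟩

end GradedModules

section FreelyGenerates

variable {P : ℤ → (ℍ → CV → ℂ) → Prop} {n : ℕ} {w : Fin n → ℤ} {φ : Fin n → ℍ → CV → ℂ} {k : ℤ}

lemma forall_apply_eq_sum_iff {ψ : ℍ → CV → ℂ} (G : (i : Fin n) → MForm (k - w i)) :
    (∀ τ z, ψ τ z = ∑ i, G i τ * φ i τ z) ↔ ψ = ∑ i, (G i : ℍ → ℂ) • φ i := by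
  simp [funext_iff, Finset.sum_apply]

lemma FreelyGenerates.isGradedBasis (h : FreelyGenerates P w φ) (hP : ∀ k, P k 0) :
    IsGradedBasis P w φ where
  mem := h.1
  independent := by
    intro k g hg hsum i
    choose G hG using fun i => (hg i).exists_mForm
    simp only [← hG] at hsum ⊢
    have hG₀ : G = 0 := (h.2 k 0 (hP k)).unique ((forall_apply_eq_sum_iff G).mpr hsum.symm)
      fun τ z => by simp
    simp [hG₀]
  exists_eq_sum := fun k ψ hψ => by
    obtain ⟨G, hG, -⟩ := h.2 k ψ hψ
    exact ⟨fun i => G i, fun i => isLevelOneForm_coe _, (forall_apply_eq_sum_iff G).mp hG⟩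

lemma IsGradedBasis.freelyGenerates (h : IsGradedBasis P w φ) : FreelyGenerates P w φ := by
  refine ⟨h.mem, fun k ψ hψ => ?_⟩
  obtain ⟨g, hg, hψg⟩ := h.exists_eq_sum k ψ hψ
  choose G hG using fun i => (hg i).exists_mForm
  simp only [← hG] at hψg
  refine ⟨G, (forall_apply_eq_sum_iff G).mpr hψg, fun G' hG' => ?_⟩
  replace hG' := (forall_apply_eq_sum_iff G').mp hG'
  have hdiff := h.independent k (fun i => ⇑(G' i - G i)) (fun i => isLevelOneForm_coe _) (by
    simp only [FunLike.coe_sub, sub_smul, Finset.sum_sub_distrib]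
    rw [← hG', ← hψg, sub_self])
  funext i
  exact sub_eq_zero.mp (DFunLike.coe_injective (hdiff i))

end FreelyGenerates

/-! ### The graded modules of Jacobi forms -/

section JacobiModules

variable {B : Matrix (Fin 24) (Fin 24) ℤ} {k : ℤ} {t : ℕ} {φ ψ : ℍ → CV → ℂ} {a : ℕ → ℂ}
  {f : ℕ → LV → ℂ}

lemma eq_zero_of_cauchyProduct_eq_zero (ha : a 0 = 1) {l : LV} (n : ℕ)
    (h : ∀ m ≤ n, cauchyProduct a f m l = 0) : f n l = 0 := by
  induction n using Nat.strong_induction_on with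
  | _ n ih =>
    have hn := h n le_rfl
    rw [cauchyProduct, Finset.sum_eq_single (0, n)] at hn
    · simpa [ha] using hn
    · rintro ⟨i, j⟩ hij hne
      have hsum : i + j = n := Finset.HasAntidiagonal.mem_antidiagonal.mp hij
      have hlt : j < n := by
        rcases Nat.eq_zero_or_pos i with rfl | hi
        · exact absurd (by rw [← hsum, zero_add]) hne
        · omega
      simp [ih j hlt fun m hm => h m (hm.trans hlt.le)]
    · exact fun hmem => absurd (by simp) hmem

lemma exists_hasSum_E4 : ∃ a : ℕ → ℂ, a 0 = 1 ∧
    ∀ τ : ℍ, HasSum (fun n : ℕ => a n * eC (n * τ)) (E4 τ) :=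
  constCoeff_E4 ▸ isLevelOneForm_E4.exists_hasSum

lemma exists_hasSum_E6 : ∃ a : ℕ → ℂ, a 0 = 1 ∧
    ∀ τ : ℍ, HasSum (fun n : ℕ => a n * eC (n * τ)) (E6 τ) :=
  constCoeff_E6 ▸ isLevelOneForm_E6.exists_hasSum

-- `E₄²φ - E₆ψ` has no `q⁰`-term, and `E₄(E₄²φ - E₆ψ) = (E₄³ - E₆²)φ = 1728Δφ`.
lemma IsWeakJacobiForm.exists_eq_E4_smul (hφ : IsWeakJacobiForm B k t φ)
    (hψ : IsWeakJacobiForm B (k + 2) t ψ) (hB : IsNiemeier B) (h : E6 • φ = E4 • ψ) :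
    ∃ α, IsWeakJacobiForm B (k - 4) t α ∧ φ = E4 • α := by
  obtain ⟨f, hf⟩ := hφ
  obtain ⟨g, hg⟩ := hψ
  obtain ⟨a, ha₀, ha⟩ := exists_hasSum_E4
  obtain ⟨b, hb₀, hb⟩ := exists_hasSum_E6
  have hfg : ∀ l, f 0 l = g 0 l := fun l => by
    have hcoeff := (h ▸ hf.smul_levelOneForm hB isLevelOneForm_E6 hb).coeff_unique
      (hg.smul_levelOneForm hB isLevelOneForm_E4 ha) hB
    simpa [cauchyProduct_zero_left, ha₀, hb₀] using congrFun (congrFun hcoeff 0) l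
  have hE4 := (hf.smul_levelOneForm hB isLevelOneForm_E4 ha).smul_levelOneForm hB
    isLevelOneForm_E4 ha
  have hE6 := (hg.smul_levelOneForm hB isLevelOneForm_E6 hb).smul hB (-1)
  rw [show (6 : ℤ) + (k + 2) = 4 + (4 + k) by ring] at hE6
  obtain ⟨α, f', hα, hdiv⟩ := ((hE4.add hE6 hB).smul hB 1728⁻¹).exists_eq_discrForm_smul hB
    fun l => by simp [cauchyProduct_zero_left, ha₀, hb₀, hfg]
  rw [show 4 + (4 + k) - 12 = k - 4 by ring] at hα
  refine ⟨α, ⟨f', hα⟩, ?_⟩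
  funext τ z
  have hdivτ := congrFun (congrFun hdiv τ) z
  have hτ := congrFun (congrFun h τ) z
  simp only [Pi.smul_apply', Pi.smul_apply, smul_eq_mul, Pi.add_apply] at hdivτ hτ ⊢
  refine mul_left_cancel₀ (mul_ne_zero (by norm_num : (1728 : ℂ) ≠ 0) (discrForm_ne_zero τ)) ?_
  linear_combination φ τ z * mul_discrForm_eq τ + 1728 * E4 τ * hdivτ - E6 τ * hτ

lemma IsWeakJacobiForm.eq_zero_of_E4_smul (hφ : IsWeakJacobiForm B k t φ) (hB : IsNiemeier B)
    (h : E4 • φ = 0) : φ = 0 := by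
  obtain ⟨f, hf⟩ := hφ
  obtain ⟨a, ha₀, ha⟩ := exists_hasSum_E4
  have hcoeff := (h ▸ hf.smul_levelOneForm hB isLevelOneForm_E4 ha).coeff_unique
    (hB.isJacobiFormWith_zero k t) hB
  refine hf.eq_zero_of_coeff_eq_zero ?_
  funext n l
  exact eq_zero_of_cauchyProduct_eq_zero ha₀ n fun m _ => by rw [hcoeff]; rfl

lemma IsHolJacobiForm.isWeakJacobiForm (hφ : IsHolJacobiForm B k t φ) :
    IsWeakJacobiForm B k t φ :=
  hφ.imp fun _ h => h.1

lemma IsHolJacobiForm.of_E4_smul (h : IsHolJacobiForm B (k + 4) t (E4 • φ))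
    (hφ : IsWeakJacobiForm B k t φ) (hB : IsNiemeier B) : IsHolJacobiForm B k t φ := by
  obtain ⟨f, hf⟩ := hφ
  obtain ⟨g, hg, hsupport⟩ := h
  obtain ⟨a, ha₀, ha⟩ := exists_hasSum_E4
  have hcoeff := (hf.smul_levelOneForm hB isLevelOneForm_E4 ha).coeff_unique hg hB
  refine ⟨f, hf, fun n l hnl => eq_zero_of_cauchyProduct_eq_zero ha₀ n fun m hm => ?_⟩
  rw [hcoeff]
  refine hsupport m l (lt_of_le_of_lt ?_ hnl)
  gcongr

lemma IsNiemeier.isRegularGradedModule_weak (hB : IsNiemeier B) (ht : 1 ≤ t) :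
    IsRegularGradedModule fun k φ => IsWeakJacobiForm B k t φ where
  zero k := ⟨0, hB.isJacobiFormWith_zero k t⟩
  add := fun ⟨_, hf⟩ ⟨_, hg⟩ => ⟨_, hf.add hg hB⟩
  levelOneForm_smul := fun hg ⟨_, hf⟩ =>
    have ⟨_, _, ha⟩ := hg.exists_hasSum
    ⟨_, hf.smul_levelOneForm hB hg ha⟩
  eq_zero_of_E4_smul := fun hφ => hφ.eq_zero_of_E4_smul hB
  exists_eq_E4_smul := fun hφ hψ => hφ.exists_eq_E4_smul hψ hB
  exists_forall_lt_eq_zero := hB.exists_forall_lt_eq_zero ht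

lemma IsNiemeier.isRegularGradedModule_hol (hB : IsNiemeier B) (ht : 1 ≤ t) :
    IsRegularGradedModule fun k φ => IsHolJacobiForm B k t φ where
  zero k := ⟨0, hB.isJacobiFormWith_zero k t, fun _ _ _ => rfl⟩
  add := fun ⟨_, hf, hfsupport⟩ ⟨_, hg, hgsupport⟩ =>
    ⟨_, hf.add hg hB, fun n l h => by simp [hfsupport n l h, hgsupport n l h]⟩
  levelOneForm_smul := fun hg hφ => hφ.smul_levelOneForm hB hg
  eq_zero_of_E4_smul := fun hφ => hφ.isWeakJacobiForm.eq_zero_of_E4_smul hB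
  exists_eq_E4_smul := fun {k φ ψ} hφ hψ h => by
    obtain ⟨α, hα, rfl⟩ := hφ.isWeakJacobiForm.exists_eq_E4_smul hψ.isWeakJacobiForm hB h
    exact ⟨α, .of_E4_smul (by rwa [sub_add_cancel]) hα hB, rfl⟩
  exists_forall_lt_eq_zero :=
    (hB.exists_forall_lt_eq_zero ht).imp fun _ h k φ hk hφ => h k φ hk hφ.isWeakJacobiForm

end JacobiModules

/-! ### The `q⁰`-terms and the upper bound for the rank -/

section UpperBound

lemma IsLevelOneForm.eq_zero_of_mul_eq_zero {k m : ℤ} {g h : ℍ → ℂ} (hg : IsLevelOneForm k g)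
    (hh : IsLevelOneForm m h) (hh₀ : constCoeff h ≠ 0) (hgh : g * h = 0) : g = 0 := by
  obtain ⟨G, rfl⟩ := hg
  obtain ⟨H, rfl⟩ := hh
  have hmul := ModularForm.qExpansion_mul one_pos one_mem_strictPeriods_SL G H
  rw [show ⇑(G.mul H) = ⇑G * ⇑H from rfl, hgh, UpperHalfPlane.qExpansion_zero] at hmul
  rcases mul_eq_zero.mp hmul.symm with hG | hH
  · funext τ
    have hsum := ModularForm.hasSum_qExpansion G one_pos one_mem_strictPeriods_SL τ
    rw [hG] at hsum
    exact hsum.unique (by simp)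
  · exact absurd (by simp [constCoeff, hH]) hh₀

lemma exists_isLevelOneForm_constCoeff_eq {m : ℤ} (hm : Even m) {c : ℂ} (h : c ≠ 0 → 4 ≤ m) :
    ∃ g, IsLevelOneForm m g ∧ constCoeff g = c := by
  rcases eq_or_ne c 0 with rfl | hc
  · exact ⟨0, IsLevelOneForm.zero m, by simpa using (IsLevelOneForm.zero m).constCoeff_smul 0⟩
  · obtain ⟨g, hg, hg₀⟩ := exists_isLevelOneForm_constCoeff_eq_one (h hc) hm
    exact ⟨c • g, hg.smul c, by rw [hg.constCoeff_smul, hg₀, mul_one]⟩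

section Update

variable {M : Type*} [AddCommGroup M] [Module (ℍ → ℂ) M] {ι : Type*} [Fintype ι] [DecidableEq ι]
  {w : ι → ℤ} {φ : ι → M} {k : ℤ} {i₀ : ι} {χ : M} {Γ : ι → ℍ → ℂ}

lemma sum_smul_eq_of_discrForm_smul (hχ : ∑ i, Γ i • φ i = discrForm • χ) (g : ι → ℍ → ℂ) :
    ∑ i, (Function.update (discrForm • g) i₀ 0 i + g i₀ * Γ i) • φ i =
      discrForm • ∑ i, g i • Function.update φ i₀ χ i := by
  simp only [add_smul, Finset.sum_add_distrib, mul_smul]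
  rw [← Finset.smul_sum, hχ, ← Finset.add_sum_erase _ _ (Finset.mem_univ i₀),
    ← Finset.add_sum_erase _ (fun i => g i • _) (Finset.mem_univ i₀), Function.update_self,
    Function.update_self, zero_smul, zero_add, smul_add, add_comm, smul_comm, Finset.smul_sum]
  congr 1
  refine Finset.sum_congr rfl fun i hi => ?_
  have hne := Finset.ne_of_mem_erase hi
  rw [Function.update_of_ne hne, Function.update_of_ne hne, Pi.smul_apply, smul_assoc]

lemma LevelOneIndependent.update (h : LevelOneIndependent w φ)
    (hΓ : ∀ i, IsLevelOneForm (k - w i) (Γ i)) (hΓ₀ : constCoeff (Γ i₀) ≠ 0)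
    (hχ : ∑ i, Γ i • φ i = discrForm • χ) :
    LevelOneIndependent (Function.update w i₀ (k - 12)) (Function.update φ i₀ χ) := by
  intro m g hg hsum
  have hg₀ : IsLevelOneForm (m - (k - 12)) (g i₀) := by simpa using hg i₀
  have hform : ∀ i, IsLevelOneForm (m + 12 - w i)
      (Function.update (discrForm • g) i₀ 0 i + g i₀ * Γ i) := fun i => by
    refine IsLevelOneForm.add ?_ ((hg₀.mul (hΓ i)).of_weight_eq (by ring))
    rcases eq_or_ne i i₀ with rfl | hi
    · simpa using IsLevelOneForm.zero _
    · have hgi : IsLevelOneForm (m - w i) (g i) := by simpa [hi] using hg i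
      simpa [hi] using (isLevelOneForm_discrForm.mul hgi).of_weight_eq (by ring)
  have hzero := h _ _ hform (by rw [sum_smul_eq_of_discrForm_smul hχ, hsum, smul_zero])
  have hgi₀ : g i₀ = 0 :=
    hg₀.eq_zero_of_mul_eq_zero (hΓ i₀) hΓ₀ (by simpa using hzero i₀)
  intro i
  rcases eq_or_ne i i₀ with rfl | hi
  · exact hgi₀
  · have hgi : discrForm * g i = 0 := by simpa [hi, hgi₀] using hzero i
    funext τ
    simpa [discrForm_ne_zero] using congrFun hgi τ

end Update

variable {B : Matrix (Fin 24) (Fin 24) ℤ} {k : ℤ} {t : ℕ} {ι : Type*} [Fintype ι] {w : ι → ℤ}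
  {φ : ι → ℍ → CV → ℂ} {f : ι → ℕ → LV → ℂ}

lemma IsJacobiFormWith.sum (hf : ∀ i, IsJacobiFormWith B k t (φ i) (f i)) (hB : IsNiemeier B) :
    IsJacobiFormWith B k t (∑ i, φ i) (∑ i, f i) := by
  classical
  have hsum : ∀ s : Finset ι, IsJacobiFormWith B k t (∑ i ∈ s, φ i) (∑ i ∈ s, f i) := fun s => by
    induction s using Finset.induction_on with
    | empty => simpa using hB.isJacobiFormWith_zero k t
    | insert i s hi ih =>
      rw [Finset.sum_insert hi, Finset.sum_insert hi]
      exact (hf i).add ih hB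
  exact hsum Finset.univ

lemma IsNiemeier.exists_sum_smul_eq_discrForm_smul (hB : IsNiemeier B)
    (hf : ∀ i, IsJacobiFormWith B (w i) t (φ i) (f i)) {Γ : ι → ℍ → ℂ}
    (hΓ : ∀ i, IsLevelOneForm (k - w i) (Γ i))
    (h₀ : ∀ l, ∑ i, constCoeff (Γ i) * f i 0 l = 0) :
    ∃ χ, IsWeakJacobiForm B (k - 12) t χ ∧ ∑ i, Γ i • φ i = discrForm • χ := by
  choose a ha₀ ha using fun i => (hΓ i).exists_hasSum
  have hmul : ∀ i, IsJacobiFormWith B k t (Γ i • φ i) (cauchyProduct (a i) (f i)) := fun i => by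
    simpa using (hf i).smul_levelOneForm hB (hΓ i) (ha i)
  obtain ⟨χ, f', hχ, hdiv⟩ := (IsJacobiFormWith.sum hmul hB).exists_eq_discrForm_smul hB
    fun l => by simpa only [Finset.sum_apply, cauchyProduct_zero_left, ha₀] using h₀ l
  exact ⟨χ, ⟨f', hχ⟩, hdiv⟩

lemma LevelOneIndependent.even_weight (h : LevelOneIndependent w φ)
    (hφ : ∀ i, IsWeakJacobiForm B (w i) t (φ i)) (i : ι) : Even (w i) := by
  obtain ⟨f, hf⟩ := hφ i
  by_contra hodd
  exact h.ne_zero i (hf.eq_zero_of_odd (Int.not_even_iff_odd.mp hodd))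

lemma IsNiemeier.exists_sum_mul_coeff_zero_eq_zero (hB : IsNiemeier B) (ht : 1 ≤ t)
    (hf : ∀ i, IsJacobiFormWith B (w i) t (φ i) (f i)) (hι : sRank B t < Fintype.card ι) :
    ∃ c : ι → ℂ, c ≠ 0 ∧ ∀ l, ∑ i, c i * f i 0 l = 0 := by
  have : Finite (minimalSet B t) := hB.finite_minimalSet ht
  let F : ι → Quot (fun v u : minimalSet B t => conjModT B t v.1 u.1) → ℂ := fun i =>
    Quot.lift (fun v => f i 0 v.1) fun v u h => (hf i).coeff_eq_of_conjModT hB ht v.2 u.2 h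
  let _ := Fintype.ofFinite (Quot fun v u : minimalSet B t => conjModT B t v.1 u.1)
  have hdependent : ¬LinearIndependent ℂ F := fun h => by
    have hcard := h.fintype_card_le_finrank
    rw [Module.finrank_fintype_fun_eq_card, ← Nat.card_eq_fintype_card (α := Quot _)] at hcard
    exact absurd hι (not_lt.mpr hcard)
  obtain ⟨c, hc, i, hi⟩ := Fintype.not_linearIndependent_iff.mp hdependent
  refine ⟨c, fun h => hi (congrFun h i), fun l => ?_⟩
  by_cases hl : l ∈ minimalSet B t
  · simpa [F] using congrFun hc (Quot.mk _ ⟨l, hl⟩)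
  · refine Finset.sum_eq_zero fun i _ => ?_
    have hil : f i 0 l = 0 :=
      not_not.mp fun h => hl ((hf i).mem_minimalSet_of_coeff_ne_zero hB h)
    rw [hil, mul_zero]

-- A linear relation between the `q⁰`-terms lifts to a combination divisible by `Δ`; dividing by
-- `Δ` replaces a `φ i₀` of maximal weight in the relation by a form of weight `w i₀ + 4 - 12`.
lemma IsNiemeier.exists_levelOneIndependent_sum_weight_lt (hB : IsNiemeier B) (ht : 1 ≤ t)
    (hφ : ∀ i, IsWeakJacobiForm B (w i) t (φ i)) (h : LevelOneIndependent w φ)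
    (hι : sRank B t < Fintype.card ι) :
    ∃ (w' : ι → ℤ) (φ' : ι → ℍ → CV → ℂ), (∀ i, IsWeakJacobiForm B (w' i) t (φ' i)) ∧
      LevelOneIndependent w' φ' ∧ ∑ i, w' i < ∑ i, w i := by
  classical
  choose f hf using hφ
  have heven := h.even_weight fun i => ⟨f i, hf i⟩
  obtain ⟨c, hc, hcf⟩ := hB.exists_sum_mul_coeff_zero_eq_zero ht hf hι
  obtain ⟨i₁, hi₁⟩ := Function.ne_iff.mp hc
  obtain ⟨i₀, hi₀, hmax⟩ := Finset.exists_max_image (Finset.univ.filter fun i => c i ≠ 0) w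
    ⟨i₁, by simpa using hi₁⟩
  simp only [Finset.mem_filter, Finset.mem_univ, true_and] at hi₀ hmax
  choose Γ hΓ hΓ₀ using fun i => exists_isLevelOneForm_constCoeff_eq (m := w i₀ + 4 - w i)
    (((heven i₀).add (by decide)).sub (heven i)) (c := c i)
    fun hci => by have := hmax i hci; linarith
  obtain ⟨χ, hχ, hdiv⟩ := hB.exists_sum_smul_eq_discrForm_smul hf hΓ (by simpa [hΓ₀] using hcf)
  refine ⟨Function.update w i₀ (w i₀ + 4 - 12), Function.update φ i₀ χ, fun i => ?_,
    h.update hΓ (by rwa [hΓ₀]) hdiv, ?_⟩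
  · rcases eq_or_ne i i₀ with rfl | hi
    · simpa using hχ
    · simpa [hi] using ⟨f i, hf i⟩
  · refine Finset.sum_lt_sum (fun i _ => ?_) ⟨i₀, Finset.mem_univ _, ?_⟩
    · rcases eq_or_ne i i₀ with rfl | hi
      · simp only [Function.update_self]; linarith
      · simp [hi]
    · simp only [Function.update_self]; linarith

theorem IsNiemeier.card_le_sRank (hB : IsNiemeier B) (ht : 1 ≤ t)
    (hφ : ∀ i, IsWeakJacobiForm B (w i) t (φ i)) (h : LevelOneIndependent w φ) :
    Fintype.card ι ≤ sRank B t := by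
  by_contra! hι
  obtain ⟨K, hK⟩ := hB.exists_forall_lt_eq_zero ht
  obtain ⟨m, hm⟩ : ∃ m : ℕ, ∑ i, (w i - K) < m := ⟨(∑ i, (w i - K)).toNat + 1, by omega⟩
  induction m generalizing w φ with
  | zero =>
    refine absurd (Finset.sum_nonneg fun i _ => ?_) (not_le.mpr hm)
    by_contra! hlt
    exact h.ne_zero i (hK _ _ (by linarith) (hφ i))
  | succ m ih =>
    obtain ⟨w', φ', hφ', h', hlt⟩ := hB.exists_levelOneIndependent_sum_weight_lt ht hφ h hι
    refine ih hφ' h' ?_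
    simp only [Finset.sum_sub_distrib] at hm ⊢
    push_cast at hm
    linarith

lemma exists_even_forall_le_sub {κ : Type*} [Finite κ] (w : κ → ℤ) (c : ℤ) :
    ∃ k : ℤ, Even k ∧ ∀ i, c ≤ k - w i := by
  obtain ⟨b, hb⟩ := Finite.exists_le fun i => c + w i
  refine ⟨2 * |b|, even_two_mul _, fun i => ?_⟩
  linarith [hb i, le_abs_self b, abs_nonneg b]

theorem IsGradedBasis.linearIndependent_coeff_zero
    (h : IsGradedBasis (fun k φ => IsWeakJacobiForm B k t φ) w φ) (hB : IsNiemeier B)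
    (hf : ∀ i, IsJacobiFormWith B (w i) t (φ i) (f i)) :
    LinearIndependent ℂ fun i => f i 0 := by
  rw [Fintype.linearIndependent_iff]
  intro c hc i
  have heven := h.independent.even_weight h.mem
  obtain ⟨k, hk, hkw⟩ := exists_even_forall_le_sub w 4
  choose Γ hΓ hΓ₀ using fun i => exists_isLevelOneForm_constCoeff_eq (hk.sub (heven i))
    (c := c i) fun _ => hkw i
  obtain ⟨χ, hχ, hdiv⟩ := hB.exists_sum_smul_eq_discrForm_smul hf hΓ fun l => by
    simpa [hΓ₀] using congrFun hc l
  obtain ⟨g, hg, rfl⟩ := h.exists_eq_sum _ χ hχ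
  have hgΔ : ∀ i, IsLevelOneForm (k - w i) (discrForm * g i) := fun i =>
    (isLevelOneForm_discrForm.mul (hg i)).of_weight_eq (by ring)
  have hzero := h.independent k (fun i => Γ i + (-1 : ℂ) • (discrForm * g i))
    (fun i => (hΓ i).add ((hgΔ i).smul _)) (by
      simp only [add_smul, Finset.sum_add_distrib, hdiv, _root_.neg_smul, one_smul, mul_smul,
        Finset.sum_neg_distrib, Finset.smul_sum, add_neg_cancel])
  have hΓi : Γ i = discrForm * g i := by
    rw [eq_neg_of_add_eq_zero_left (hzero i), neg_one_smul, neg_neg]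
  rw [← hΓ₀, hΓi, isLevelOneForm_discrForm.constCoeff_mul (hg i), constCoeff_discrForm, zero_mul]

end UpperBound

/-! ### Taylor expansion of exponential series -/

section Taylor

lemma coeff_eq_of_hasSum_pow_mul {c d : ℕ → ℂ} {F : ℂ → ℂ}
    (hc : ∀ s, HasSum (fun m => s ^ m * c m) (F s))
    (hd : ∀ s, HasSum (fun m => s ^ m * d m) (F s)) : c = d := by
  have hasFPowerSeriesAt {e : ℕ → ℂ} (he : ∀ s, HasSum (fun m => s ^ m * e m) (F s)) :
      HasFPowerSeriesAt F (FormalMultilinearSeries.ofScalars ℂ e) 0 := by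
    rw [hasFPowerSeriesAt_iff]
    exact Filter.Eventually.of_forall fun s => by simpa using he s
  have heq := (hasFPowerSeriesAt hc).eq_formalMultilinearSeries (hasFPowerSeriesAt hd)
  funext m
  simpa using congrArg (fun p => FormalMultilinearSeries.coeff p m) heq

variable {J : Type*} {e α : J → ℂ}

lemma summable_mul_pow_div_factorial
    (hs : ∀ R : ℝ, Summable fun j => ‖e j‖ * Real.exp (R * ‖α j‖)) (s : ℂ) :
    Summable fun p : J × ℕ => e p.1 * ((s * α p.1) ^ p.2 / p.2.factorial) := by
  have hrow (j : J) : HasSum (fun m : ℕ => ‖e j * ((s * α j) ^ m / m.factorial)‖)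
      (‖e j‖ * Real.exp (‖s‖ * ‖α j‖)) := by
    have hexp := (NormedSpace.expSeries_div_hasSum_exp (𝔸 := ℝ) (‖s‖ * ‖α j‖)).mul_left ‖e j‖
    rw [← Real.exp_eq_exp_ℝ] at hexp
    exact hexp.congr_fun fun m => by simp [mul_pow]
  refine Summable.of_norm ((summable_prod_of_nonneg fun _ => norm_nonneg _).mpr
    ⟨fun j => (hrow j).summable, (hs ‖s‖).congr fun j => (hrow j).tsum_eq.symm⟩)

lemma summable_pow_div_factorial_mul
    (hs : ∀ R : ℝ, Summable fun j => ‖e j‖ * Real.exp (R * ‖α j‖)) (m : ℕ) :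
    Summable fun j => α j ^ m / m.factorial * e j :=
  ((summable_mul_pow_div_factorial hs 1).prod_symm.prod_factor m).congr fun j => by
    simp [mul_comm]

lemma hasSum_pow_mul_tsum
    (hs : ∀ R : ℝ, Summable fun j => ‖e j‖ * Real.exp (R * ‖α j‖)) {s v : ℂ}
    (h : HasSum (fun j => e j * Complex.exp (s * α j)) v) :
    HasSum (fun m : ℕ => s ^ m * ∑' j, α j ^ m / m.factorial * e j) v := by
  have hdouble := (summable_mul_pow_div_factorial hs s).hasSum
  have hrows := hdouble.prod_fiberwise (g := fun j => e j * Complex.exp (s * α j)) fun j => by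
    have hexp := (NormedSpace.expSeries_div_hasSum_exp (𝔸 := ℂ) (s * α j)).mul_left (e j)
    rwa [← Complex.exp_eq_exp_ℂ] at hexp
  rw [hrows.unique h] at hdouble
  refine HasSum.prod_fiberwise ((Equiv.prodComm ℕ J).hasSum_iff.mpr hdouble) fun m => ?_
  refine ((summable_pow_div_factorial_mul hs m).hasSum.mul_left (s ^ m)).congr_fun fun j => ?_
  simp only [Function.comp_apply, Equiv.prodComm_apply, Prod.fst_swap, Prod.snd_swap, mul_pow]
  ring

lemma hasSum_tsum_fiber_mul {J K : Type*} (p : J → K) (c : J → ℂ) (e : K → ℂ) {v : ℂ}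
    (h : HasSum (fun j => c j * e (p j)) v) :
    HasSum (fun k => (∑' j : {j // p j = k}, c j) * e k) v := by
  have hsigma := (Equiv.sigmaFiberEquiv p).hasSum_iff.mpr h
  refine hsigma.sigma fun k => ?_
  convert! (hsigma.summable.sigma_factor k).hasSum using 1
  rw [← tsum_mul_right]
  exact tsum_congr fun j => by simp [Equiv.sigmaFiberEquiv, j.2]

end Taylor

/-! ### Products of theta functions -/

section ThetaProduct

variable {B σ : Matrix (Fin 24) (Fin 24) ℤ} {N : ℕ} {a : Fin N → ℤ} {b : Fin N → ℂ} {t : ℕ}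

/-- Half of the total norm `∑ (jᵢ, jᵢ)` of a tuple of lattice vectors, the exponent of `q` in a
term of a product of theta functions. -/
def halfNorm (B : Matrix (Fin 24) (Fin 24) ℤ) (j : Fin N → LV) : ℕ :=
  ∑ i, (pairZ B (j i) (j i) / 2).toNat

/-- The rate `2πi ∑ bᵢ (jᵢ, y)` at which the terms of `thetaProduct B a b y` vary with the auxiliary
variable. -/
def thetaRate (B : Matrix (Fin 24) (Fin 24) ℤ) (b : Fin N → ℂ) (y : CV) (j : Fin N → LV) : ℂ :=
  2 * π * Complex.I * ∑ i, b i * pairC B (liftC (j i)) y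

/-- The product `∏ Θ(τ, aᵢ z + s bᵢ y)`. When `∑ aᵢ² = t` and `∑ aᵢ bᵢ = ∑ bᵢ² = 0`, its Taylor
coefficients in the auxiliary variable `s` transform like Jacobi forms of index `t`. -/
def thetaProduct (B : Matrix (Fin 24) (Fin 24) ℤ) (a : Fin N → ℤ) (b : Fin N → ℂ) (y : CV) (τ : ℍ)
    (z : CV) (s : ℂ) : ℂ :=
  ∏ i, thetaLeech B τ ((a i : ℂ) • z + (s * b i) • y)

lemma IsNiemeier.two_mul_halfNorm (hB : IsNiemeier B) (j : Fin N → LV) :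
    2 * (halfNorm B j : ℂ) = ∑ i, (pairZ B (j i) (j i) : ℂ) := by
  have hterm (l : LV) : 2 * ((pairZ B l l / 2).toNat : ℤ) = pairZ B l l := by
    obtain ⟨m, hm⟩ := (hB.even l).two_dvd
    have := hB.pairZ_self_nonneg l
    omega
  have hsum : 2 * (halfNorm B j : ℤ) = ∑ i, pairZ B (j i) (j i) := by
    rw [halfNorm, Nat.cast_sum, Finset.mul_sum]
    exact Finset.sum_congr rfl fun i _ => hterm (j i)
  exact_mod_cast hsum

lemma pairC_liftC_sum_smul (a : Fin N → ℤ) (j : Fin N → LV) (z : CV) :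
    pairC B (liftC (∑ i, a i • j i)) z = ∑ i, (a i : ℂ) * pairC B (liftC (j i)) z := by
  let evalHom : LV →+ ℂ :=
    { toFun l := pairC B (liftC l) z
      map_zero' := by rw [liftC_zero, pairC_zero_left]
      map_add' l l' := by rw [liftC_add, pairC_add_left] }
  refine (map_sum evalHom _ _).trans (Finset.sum_congr rfl fun i _ => ?_)
  rw [map_zsmul, zsmul_eq_mul]
  rfl

lemma IsNiemeier.prod_thetaTerm_eq (hB : IsNiemeier B) (a : Fin N → ℤ) (b : Fin N → ℂ) (y : CV)
    (τ : ℍ) (z : CV) (s : ℂ) (j : Fin N → LV) :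
    ∏ i, (eC ((pairZ B (j i) (j i) : ℂ) * τ / 2) *
        eC (pairC B (liftC (j i)) ((a i : ℂ) • z + (s * b i) • y))) =
      fterm B (halfNorm B j) (∑ i, a i • j i) τ z * Complex.exp (s * thetaRate B b y j) := by
  have hrate : Complex.exp (s * thetaRate B b y j) =
      eC (∑ i, s * b i * pairC B (liftC (j i)) y) := by
    rw [eC, thetaRate]
    congr 1
    simp only [mul_assoc s, ← Finset.mul_sum]
    ring
  have hnorm : ∑ i, (pairZ B (j i) (j i) : ℂ) * τ / 2 = halfNorm B j * τ := by
    rw [← Finset.sum_div, ← Finset.sum_mul, ← hB.two_mul_halfNorm]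
    ring
  rw [hrate, fterm, pairC_liftC_sum_smul, mul_assoc, ← eC_add, ← Finset.sum_add_distrib,
    Finset.prod_mul_distrib, ← eC_sum, ← eC_sum, hnorm]
  simp only [pairC_add_right, pairC_smul_right]

lemma IsNiemeier.hasSum_thetaProduct (hB : IsNiemeier B) (a : Fin N → ℤ) (b : Fin N → ℂ) (y : CV)
    (τ : ℍ) (z : CV) (s : ℂ) :
    HasSum (fun j : Fin N → LV => fterm B (halfNorm B j) (∑ i, a i • j i) τ z *
      Complex.exp (s * thetaRate B b y j)) (thetaProduct B a b y τ z s) := by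
  simp only [← hB.prod_thetaTerm_eq, thetaProduct, thetaLeech_eq_tsum]
  exact hasSum_prod_pi (f := fun i l => eC ((pairZ B l l : ℂ) * τ / 2) *
    eC (pairC B (liftC l) ((a i : ℂ) • z + (s * b i) • y))) fun i => hB.summable_norm_thetaTerm τ _

lemma norm_thetaRate_le (b : Fin N → ℂ) (y : CV) (j : Fin N → LV) :
    ‖thetaRate B b y j‖ ≤ ∑ i, 2 * π * (‖b i‖ * formNorm B y) * l1Norm (j i) := by
  have htwo_pi : ‖(2 * π * Complex.I : ℂ)‖ = 2 * π := by simp [abs_of_pos Real.pi_pos]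
  rw [thetaRate, norm_mul, htwo_pi]
  simp only [mul_assoc, ← Finset.mul_sum]
  gcongr
  refine (norm_sum_le _ _).trans (Finset.sum_le_sum fun i _ => ?_)
  rw [norm_mul]
  exact mul_le_mul_of_nonneg_left (norm_pairC_liftC_le y (j i)) (norm_nonneg _)

lemma exp_mul_norm_thetaRate_le (b : Fin N → ℂ) (y : CV) (j : Fin N → LV) (R : ℝ) :
    Real.exp (R * ‖thetaRate B b y j‖) ≤
      ∏ i, Real.exp (|R| * (2 * π * (‖b i‖ * formNorm B y)) * l1Norm (j i)) := by
  rw [← Real.exp_sum, Real.exp_le_exp]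
  calc R * ‖thetaRate B b y j‖
      ≤ |R| * ‖thetaRate B b y j‖ := mul_le_mul_of_nonneg_right (le_abs_self R) (norm_nonneg _)
    _ ≤ |R| * ∑ i, 2 * π * (‖b i‖ * formNorm B y) * l1Norm (j i) :=
        mul_le_mul_of_nonneg_left (norm_thetaRate_le b y j) (abs_nonneg _)
    _ = _ := by simp only [Finset.mul_sum, mul_assoc]

lemma IsNiemeier.summable_norm_fterm_mul_exp (hB : IsNiemeier B) (a : Fin N → ℤ) (b : Fin N → ℂ)
    (y : CV) (τ : ℍ) (z : CV) (R : ℝ) :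
    Summable fun j : Fin N → LV => ‖fterm B (halfNorm B j) (∑ i, a i • j i) τ z‖ *
      Real.exp (R * ‖thetaRate B b y j‖) := by
  let slope (i : Fin N) : ℝ :=
    2 * π * formNorm B ((a i : ℂ) • z) + |R| * (2 * π * (‖b i‖ * formNorm B y))
  have hmajorant := summable_norm_prod_pi
    (f := fun i l => ‖eC ((pairZ B l l : ℂ) * τ / 2)‖ * Real.exp (slope i * l1Norm l)) fun i => by
      simpa only [norm_mul, Real.norm_eq_abs, abs_norm, Real.abs_exp] using
        hB.summable_norm_thetaCoeff_mul_exp τ (slope i)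
  refine hmajorant.of_nonneg_of_le (fun _ => by positivity) fun j => ?_
  have hfterm := hB.prod_thetaTerm_eq a b y τ z 0 j
  simp only [zero_mul, Complex.exp_zero, mul_one, zero_smul, add_zero] at hfterm
  rw [← hfterm, norm_prod, norm_prod]
  refine (mul_le_mul_of_nonneg_left (exp_mul_norm_thetaRate_le b y j R)
    (Finset.prod_nonneg fun _ _ => norm_nonneg _)).trans ?_
  rw [← Finset.prod_mul_distrib]
  refine Finset.prod_le_prod (fun i _ => by positivity) fun i _ => ?_
  rw [norm_mul, norm_mul, norm_norm, Real.norm_eq_abs, Real.abs_exp, mul_assoc, add_mul,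
    Real.exp_add]
  gcongr
  exact norm_eC_pairC_le (j i) _

lemma IsNiemeier.thetaProduct_actC (hB : IsNiemeier B) (hσ : σ ∈ ConwayGroup B) (y : CV) (τ : ℍ)
    (z : CV) (s : ℂ) :
    thetaProduct B a b (actC σ y) τ (actC σ z) s = thetaProduct B a b y τ z s :=
  Finset.prod_congr rfl fun i _ => by
    rw [← actC_smul, ← actC_smul, ← actC_add, hB.theta_actC hσ]

lemma IsNiemeier.thetaProduct_add (hB : IsNiemeier B) (ha : ∑ i, (a i : ℂ) ^ 2 = t)
    (hab : ∑ i, (a i : ℂ) * b i = 0) (y : CV) (x x' : LV) (τ : ℍ) (z : CV) (s : ℂ) :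
    thetaProduct B a b y τ (z + (τ : ℂ) • liftC x + liftC x') s =
      eC (t * (-((pairZ B x x : ℂ) * τ / 2) - pairC B (liftC x) z)) *
        thetaProduct B a b y τ z s := by
  have hfactor (i : Fin N) :
      thetaLeech B τ ((a i : ℂ) • (z + (τ : ℂ) • liftC x + liftC x') + (s * b i) • y) =
        eC ((a i : ℂ) ^ 2 * (-((pairZ B x x : ℂ) * τ / 2) - pairC B (liftC x) z) -
            (a i : ℂ) * b i * (s * pairC B (liftC x) y)) *
          thetaLeech B τ ((a i : ℂ) • z + (s * b i) • y) := by
    have harg : (a i : ℂ) • (z + (τ : ℂ) • liftC x + liftC x') + (s * b i) • y =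
        ((a i : ℂ) • z + (s * b i) • y) + (τ : ℂ) • liftC (a i • x) + liftC (a i • x') := by
      rw [liftC_smul, liftC_smul]
      module
    rw [harg, hB.theta_add, pairZ_smul_left, pairZ_smul_right, liftC_smul, pairC_smul_left,
      pairC_add_right, pairC_smul_right, pairC_smul_right]
    congr 2
    push_cast
    ring
  simp only [thetaProduct, hfactor, Finset.prod_mul_distrib, ← eC_sum, Finset.sum_sub_distrib,
    ← Finset.sum_mul, ha, hab, zero_mul, sub_zero]

lemma IsNiemeier.theta_smul_add_smul (hB : IsNiemeier B) (A : SL(2, ℤ)) (τ : ℍ) (z y : CV)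
    (a b s : ℂ) :
    thetaLeech B (A • τ) (a • (jfactor A τ)⁻¹ • z + (s * b) • y) =
      jfactor A τ ^ 12 * eC (a ^ 2 * (slc A * pairC B z z / (2 * jfactor A τ)) +
          a * b * (s * slc A * pairC B z y) +
          b ^ 2 * (jfactor A τ * s ^ 2 * slc A * pairC B y y / 2)) *
        thetaLeech B τ (a • z + (jfactor A τ * s * b) • y) := by
  have hj := jfactor_ne_zero A τ
  have harg : a • (jfactor A τ)⁻¹ • z + (s * b) • y =
      (jfactor A τ)⁻¹ • (a • z + (jfactor A τ * s * b) • y) := by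
    rw [smul_add, smul_comm, smul_smul _ (jfactor A τ * s * b)]
    congr 2
    field_simp
  rw [harg, hB.transformsUnder_theta A]
  congr 2
  simp only [pairC_add_left, pairC_add_right, pairC_smul_left, pairC_smul_right,
    pairC_comm hB.symm y z]
  congr 1
  push_cast
  field_simp
  ring

lemma IsNiemeier.thetaProduct_smul (hB : IsNiemeier B) (ha : ∑ i, (a i : ℂ) ^ 2 = t)
    (hab : ∑ i, (a i : ℂ) * b i = 0) (hb : ∑ i, b i ^ 2 = 0) (y : CV) (A : SL(2, ℤ)) (τ : ℍ)
    (z : CV) (s : ℂ) :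
    thetaProduct B a b y (A • τ) ((jfactor A τ)⁻¹ • z) s =
      jfactor A τ ^ (12 * N) * eC (t * slc A * pairC B z z / (2 * jfactor A τ)) *
        thetaProduct B a b y τ z (jfactor A τ * s) := by
  simp only [thetaProduct, hB.theta_smul_add_smul, Finset.prod_mul_distrib, ← eC_sum,
    Finset.sum_add_distrib, ← Finset.sum_mul, ha, hab, hb, zero_mul, add_zero, Finset.prod_const,
    Finset.card_univ, Fintype.card_fin, ← pow_mul]
  rw [← mul_div_assoc, ← mul_assoc (t : ℂ)]

end ThetaProduct

/-! ### Averaged Taylor coefficients of theta products -/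

section AveragedTaylorCoeff

variable {B : Matrix (Fin 24) (Fin 24) ℤ} {N : ℕ} {a : Fin N → ℤ} {b : Fin N → ℂ} {t : ℕ}

/-- The `m`-th Taylor coefficient at `s = 0` of the average of `thetaProduct B a b (σ y) τ z s` over
`σ ∈ Co₀`, up to the factor `|Co₀|`. -/
def averagedTaylorCoeff (hB : IsNiemeier B) (a : Fin N → ℤ) (b : Fin N → ℂ) (y : CV) (m : ℕ)
    (τ : ℍ) (z : CV) : ℂ :=
  ∑ σ ∈ hB.finite_conwayGroup.toFinset, ∑' j : Fin N → LV,
    thetaRate B b (actC σ y) j ^ m / m.factorial * fterm B (halfNorm B j) (∑ i, a i • j i) τ z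

lemma hasSum_averagedTaylorCoeff (hB : IsNiemeier B) (a : Fin N → ℤ) (b : Fin N → ℂ) (y : CV)
    (τ : ℍ) (z : CV) (s : ℂ) :
    HasSum (fun m => s ^ m * averagedTaylorCoeff hB a b y m τ z)
      (∑ σ ∈ hB.finite_conwayGroup.toFinset, thetaProduct B a b (actC σ y) τ z s) := by
  simp only [averagedTaylorCoeff, Finset.mul_sum]
  exact hasSum_sum fun σ _ => hasSum_pow_mul_tsum (hB.summable_norm_fterm_mul_exp a b _ τ z)
    (hB.hasSum_thetaProduct a b _ τ z s)

lemma IsNiemeier.sum_thetaProduct_actC (hB : IsNiemeier B) {ρ : Matrix (Fin 24) (Fin 24) ℤ}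
    (hρ : ρ ∈ ConwayGroup B) (y : CV) (τ : ℍ) (z : CV) (s : ℂ) :
    ∑ σ ∈ hB.finite_conwayGroup.toFinset, thetaProduct B a b (actC σ y) τ (actC ρ z) s =
      ∑ σ ∈ hB.finite_conwayGroup.toFinset, thetaProduct B a b (actC σ y) τ z s := by
  refine (Finset.sum_bij' (fun σ _ => ρ * σ) (fun σ _ => ρ⁻¹ * σ) ?_ ?_ ?_ ?_ ?_).symm
  · simpa using fun σ hσ => mul_mem_conwayGroup hρ hσ
  · simpa using fun σ hσ => mul_mem_conwayGroup (inv_mem_conwayGroup hρ) hσ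
  · intro σ _
    rw [← mul_assoc, nonsing_inv_mul _ hρ.1, one_mul]
  · intro σ _
    rw [← mul_assoc, mul_nonsing_inv _ hρ.1, one_mul]
  · intro σ _
    rw [actC_mul, hB.thetaProduct_actC hρ]

lemma averagedTaylorCoeff_actC (hB : IsNiemeier B) {ρ : Matrix (Fin 24) (Fin 24) ℤ}
    (hρ : ρ ∈ ConwayGroup B) (y : CV) (m : ℕ) (τ : ℍ) (z : CV) :
    averagedTaylorCoeff hB a b y m τ (actC ρ z) = averagedTaylorCoeff hB a b y m τ z :=
  congrFun (coeff_eq_of_hasSum_pow_mul (c := fun m => averagedTaylorCoeff hB a b y m τ (actC ρ z))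
    (d := fun m => averagedTaylorCoeff hB a b y m τ z)
    (hasSum_averagedTaylorCoeff hB a b y τ _) fun s => by
      rw [hB.sum_thetaProduct_actC hρ]
      exact hasSum_averagedTaylorCoeff hB a b y τ z s) m

lemma averagedTaylorCoeff_add (hB : IsNiemeier B) (ha : ∑ i, (a i : ℂ) ^ 2 = t)
    (hab : ∑ i, (a i : ℂ) * b i = 0) (y : CV) (m : ℕ) (x x' : LV) (τ : ℍ) (z : CV) :
    averagedTaylorCoeff hB a b y m τ (z + (τ : ℂ) • liftC x + liftC x') =
      eC (t * (-((pairZ B x x : ℂ) * τ / 2) - pairC B (liftC x) z)) *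
        averagedTaylorCoeff hB a b y m τ z := by
  refine congrFun (coeff_eq_of_hasSum_pow_mul
    (c := fun m => averagedTaylorCoeff hB a b y m τ (z + (τ : ℂ) • liftC x + liftC x'))
    (d := fun m => eC (t * (-((pairZ B x x : ℂ) * τ / 2) - pairC B (liftC x) z)) *
      averagedTaylorCoeff hB a b y m τ z)
    (hasSum_averagedTaylorCoeff hB a b y τ _) fun s => ?_) m
  simp only [hB.thetaProduct_add ha hab, ← Finset.mul_sum, mul_left_comm (s ^ _)]
  exact (hasSum_averagedTaylorCoeff hB a b y τ z s).mul_left _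

-- `cτ + d` rescales the auxiliary variable, so the `m`-th coefficient gains weight `m`.
lemma transformsUnder_averagedTaylorCoeff (hB : IsNiemeier B) (ha : ∑ i, (a i : ℂ) ^ 2 = t)
    (hab : ∑ i, (a i : ℂ) * b i = 0) (hb : ∑ i, b i ^ 2 = 0) (y : CV) (m : ℕ) (A : SL(2, ℤ)) :
    TransformsUnder B (12 * N + m : ℕ) t (averagedTaylorCoeff hB a b y m) A := by
  intro τ z
  have hcoeff := congrFun (coeff_eq_of_hasSum_pow_mul
    (c := fun m => averagedTaylorCoeff hB a b y m (A • τ) ((jfactor A τ)⁻¹ • z))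
    (d := fun m => jfactor A τ ^ (12 * N) * eC (t * slc A * pairC B z z / (2 * jfactor A τ)) *
      (jfactor A τ ^ m * averagedTaylorCoeff hB a b y m τ z))
    (hasSum_averagedTaylorCoeff hB a b y _ _) fun s => by
      simp only [hB.thetaProduct_smul ha hab hb, ← Finset.mul_sum]
      refine ((hasSum_averagedTaylorCoeff hB a b y τ z (jfactor A τ * s)).mul_left _).congr_fun
        fun m => ?_
      rw [mul_pow]
      ring) m
  rw [hcoeff, zpow_natCast, pow_add]
  ring

lemma exists_hasSum_fterm_averagedTaylorCoeff (hB : IsNiemeier B) (a : Fin N → ℤ) (b : Fin N → ℂ)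
    (y : CV) (m : ℕ) : ∃ f : ℕ → LV → ℂ, ∀ (τ : ℍ) (z : CV),
      HasSum (fun p : ℕ × LV => f p.1 p.2 * fterm B p.1 p.2 τ z)
        (averagedTaylorCoeff hB a b y m τ z) := by
  refine ⟨fun n l => ∑ σ ∈ hB.finite_conwayGroup.toFinset,
    ∑' j : {j : Fin N → LV // (halfNorm B j, ∑ i, a i • j i) = (n, l)},
      thetaRate B b (actC σ y) j ^ m / m.factorial, fun τ z => ?_⟩
  simp only [Finset.sum_mul]
  exact hasSum_sum fun σ _ => hasSum_tsum_fiber_mul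
    (fun j : Fin N → LV => (halfNorm B j, ∑ i, a i • j i))
    (fun j => thetaRate B b (actC σ y) j ^ m / m.factorial) (fun p => fterm B p.1 p.2 τ z)
    (summable_pow_div_factorial_mul (hB.summable_norm_fterm_mul_exp a b _ τ z) m).hasSum

lemma isWeakJacobiForm_averagedTaylorCoeff (hB : IsNiemeier B) (ha : ∑ i, (a i : ℂ) ^ 2 = t)
    (hab : ∑ i, (a i : ℂ) * b i = 0) (hb : ∑ i, b i ^ 2 = 0) (y : CV) (m : ℕ) :
    IsWeakJacobiForm B (12 * N + m : ℕ) t (averagedTaylorCoeff hB a b y m) := by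
  obtain ⟨f, hf⟩ := exists_hasSum_fterm_averagedTaylorCoeff hB a b y m
  exact ⟨f, hB.isJacobiFormWith (fun σ hσ => averagedTaylorCoeff_actC hB hσ y m)
    (averagedTaylorCoeff_add hB ha hab y m)
    (transformsUnder_averagedTaylorCoeff hB ha hab hb y m) hf⟩

lemma IsNiemeier.sum_thetaProduct_mem (hB : IsNiemeier B) {W : Submodule ℂ (CV → ℂ)}
    [FiniteDimensional ℂ W] {τ : ℍ} (hW : ∀ k ψ, IsWeakJacobiForm B k t ψ → ψ τ ∈ W)
    (ha : ∑ i, (a i : ℂ) ^ 2 = t) (hab : ∑ i, (a i : ℂ) * b i = 0) (hb : ∑ i, b i ^ 2 = 0)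
    (y : CV) :
    (fun z => ∑ σ ∈ hB.finite_conwayGroup.toFinset, thetaProduct B a b (actC σ y) τ z 1) ∈ W := by
  have hsum : HasSum (fun m => averagedTaylorCoeff hB a b y m τ) fun z =>
      ∑ σ ∈ hB.finite_conwayGroup.toFinset, thetaProduct B a b (actC σ y) τ z 1 :=
    Pi.hasSum.mpr fun z => by simpa using hasSum_averagedTaylorCoeff hB a b y τ z 1
  exact W.closed_of_finiteDimensional.mem_of_tendsto hsum (Filter.Eventually.of_forall fun s =>
    W.sum_mem fun m _ => hW _ _ (isWeakJacobiForm_averagedTaylorCoeff hB ha hab hb y m))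

end AveragedTaylorCoeff

/-! ### Powers of the theta function at torsion points -/

section ThetaPowers

variable {B : Matrix (Fin 24) (Fin 24) ℤ} {t : ℕ}

lemma eC_ofReal_mul_I (x : ℝ) : eC (x * Complex.I) = (Real.exp (-2 * π * x) : ℝ) := by
  rw [eC]
  push_cast
  congr 1
  linear_combination (2 * π * x : ℂ) * Complex.I_sq

lemma IsNiemeier.theta_I_ne_zero (hB : IsNiemeier B) (r : ℝ) (v : LV) :
    thetaLeech B UpperHalfPlane.I ((r * Complex.I) • liftC v) ≠ 0 := by
  have hterm (l : LV) : eC ((pairZ B l l : ℂ) * (UpperHalfPlane.I : ℍ) / 2) *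
      eC (pairC B (liftC l) ((r * Complex.I) • liftC v)) =
      (Real.exp (-2 * π * (pairZ B l l / 2 + r * pairZ B l v)) : ℝ) := by
    rw [← eC_ofReal_mul_I, ← eC_add, pairC_smul_right, pairC_liftC, UpperHalfPlane.coe_I]
    push_cast
    congr 1
    ring
  have hsum := hB.hasSum_theta UpperHalfPlane.I ((r * Complex.I) • liftC v)
  simp only [hterm] at hsum
  have hsummable := Complex.summable_ofReal.mp hsum.summable
  rw [← hsum.tsum_eq, ← Complex.ofReal_tsum]
  exact Complex.ofReal_ne_zero.mpr
    (hsummable.tsum_pos (fun _ => (Real.exp_pos _).le) 0 (Real.exp_pos _)).ne'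

lemma IsNiemeier.exists_hasSum_theta_I_pow (hB : IsNiemeier B) (ht : 1 ≤ t) :
    ∃ p : LV → ℂ, (∀ l, p l ≠ 0) ∧ ∀ z,
      HasSum (fun l => p l * eC (pairC B (liftC l) z)) (thetaLeech B UpperHalfPlane.I z ^ t) := by
  have hsum (z : CV) : HasSum (fun j : Fin t → LV => ((Real.exp (-2 * π * halfNorm B j) : ℝ) : ℂ) *
      eC (pairC B (liftC (∑ i, j i)) z)) (thetaLeech B UpperHalfPlane.I z ^ t) := by
    have hprod := hB.hasSum_thetaProduct (fun _ : Fin t => 1) 0 0 UpperHalfPlane.I z 0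
    simp only [thetaProduct, zero_mul, Complex.exp_zero, mul_one, zero_smul, add_zero,
      Int.cast_one, one_smul, Finset.prod_const, Finset.card_univ, Fintype.card_fin] at hprod
    refine hprod.congr_fun fun j => ?_
    rw [fterm, UpperHalfPlane.coe_I, ← eC_ofReal_mul_I, ofReal_natCast]
  refine ⟨_, fun l => ?_, fun z => hasSum_tsum_fiber_mul (fun j : Fin t → LV => ∑ i, j i) _
    (fun l => eC (pairC B (liftC l) z)) (hsum z)⟩
  have hsummable : Summable fun j : Fin t → LV => Real.exp (-2 * π * halfNorm B j) := by
    have hzero := (hsum 0).summable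
    simp only [pairC_zero_right, eC_zero, mul_one] at hzero
    exact Complex.summable_ofReal.mp hzero
  have hsingle : ∑ i, (Pi.single ⟨0, ht⟩ l : Fin t → LV) i = l := by simp
  rw [← Complex.ofReal_tsum]
  exact Complex.ofReal_ne_zero.mpr (ne_of_gt ((hsummable.subtype {j | ∑ i, j i = l}).tsum_pos
    (fun j => (Real.exp_pos _).le) ⟨Pi.single ⟨0, ht⟩ l, hsingle⟩ (Real.exp_pos _)))

-- `b = (c, -t, 1, …, 1)` and `a = (0, 1, …, 1)` satisfy `∑ aᵢ bᵢ = 0`, and `z - t y` differs from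
-- `z + y` by a lattice vector.
lemma IsNiemeier.thetaProduct_cons_cons (hB : IsNiemeier B) {y : CV} {u : LV}
    (hy : (t + 1 : ℂ) • y = liftC u) (c : ℂ) (τ : ℍ) (z : CV) :
    thetaProduct B (Fin.cons 0 fun _ : Fin (t + 1) => 1)
        (Fin.cons c (Fin.cons (-(t : ℂ)) fun _ => 1)) y τ z 1 =
      thetaLeech B τ (c • y) * thetaLeech B τ (z + y) ^ (t + 1) := by
  have hshift : thetaLeech B τ (z + -(t : ℂ) • y) = thetaLeech B τ (z + y) := by
    have harg : z + -(t : ℂ) • y = z + y + (τ : ℂ) • liftC 0 + liftC (-u) := by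
      rw [liftC_neg, ← hy, liftC_zero]
      module
    rw [harg, hB.theta_add]
    simp [pairZ_zero_left, liftC_zero, pairC_zero_left, eC_zero]
  simp only [thetaProduct, Fin.prod_univ_succ, Fin.cons_zero, Fin.cons_succ, Int.cast_zero,
    Int.cast_one, zero_smul, zero_add, one_smul, one_mul, hshift, Finset.prod_const,
    Finset.card_univ, Fintype.card_fin, pow_succ']

lemma IsNiemeier.sum_theta_pow_mem (hB : IsNiemeier B) (ht : 1 ≤ t) {W : Submodule ℂ (CV → ℂ)}
    [FiniteDimensional ℂ W]
    (hW : ∀ k ψ, IsWeakJacobiForm B k t ψ → ψ UpperHalfPlane.I ∈ W) (v : LV) :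
    (fun z => ∑ σ ∈ hB.finite_conwayGroup.toFinset,
      thetaLeech B UpperHalfPlane.I (z + (t : ℂ)⁻¹ • liftC (σ.mulVec v)) ^ t) ∈ W := by
  obtain ⟨t, rfl⟩ := Nat.exists_eq_add_of_le' ht
  set r : ℝ := √(t * (t + 1))
  have hr : (r : ℂ) ^ 2 = t * (t + 1) := by
    have hreal : r ^ 2 = (t : ℝ) * (t + 1) := Real.sq_sqrt (by positivity)
    exact_mod_cast congrArg Complex.ofReal hreal
  have ht' : (t + 1 : ℂ) ≠ 0 := by exact_mod_cast t.succ_ne_zero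
  set y : CV := ((t + 1 : ℕ) : ℂ)⁻¹ • liftC v
  have hmem := hB.sum_thetaProduct_mem hW (a := Fin.cons 0 fun _ : Fin (t + 1) => 1)
    (b := Fin.cons (r * Complex.I) (Fin.cons (-(t : ℂ)) fun _ => 1)) (by simp [Fin.sum_univ_succ])
    (by simp [Fin.sum_univ_succ])
    (by simp [Fin.sum_univ_succ, mul_pow, hr]; ring) y
  have hscale : thetaLeech B UpperHalfPlane.I ((r * Complex.I) • y) ≠ 0 := by
    convert! hB.theta_I_ne_zero (r / (t + 1)) v using 2
    simp only [y, smul_smul]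
    congr 1
    push_cast
    ring
  convert! W.smul_mem (thetaLeech B UpperHalfPlane.I ((r * Complex.I) • y))⁻¹ hmem using 1
  funext z
  rw [Pi.smul_apply, smul_eq_mul, Finset.mul_sum]
  refine Finset.sum_congr rfl fun σ hσ => ?_
  have hact : actC σ y = ((t + 1 : ℕ) : ℂ)⁻¹ • liftC (σ.mulVec v) := by
    rw [actC_smul, actC_liftC]
  rw [hB.thetaProduct_cons_cons (u := σ.mulVec v) (by simp [hact, smul_smul, ht']), ← actC_smul,
    hB.theta_actC (by simpa using hσ), inv_mul_cancel_left₀ hscale, hact]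

end ThetaPowers

/-! ### The lower bound for the rank -/

section LowerBound

variable {B : Matrix (Fin 24) (Fin 24) ℤ} {k : ℤ} {t : ℕ} {φ : ℍ → CV → ℂ}

lemma IsNiemeier.coeff_eq_of_hasSum_eC_pairC (hB : IsNiemeier B) {c d : LV → ℂ} {F : CV → ℂ}
    (hc : ∀ z, HasSum (fun l => c l * eC (pairC B (liftC l) z)) (F z))
    (hd : ∀ z, HasSum (fun l => d l * eC (pairC B (liftC l) z)) (F z)) : c = d := by
  have extend {e : LV → ℂ} (he : ∀ z, HasSum (fun l => e l * eC (pairC B (liftC l) z)) (F z))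
      (τ : ℍ) (z : CV) : HasSum (fun p : ℕ × LV => (if p.1 = 0 then e p.2 else 0) *
        fterm B p.1 p.2 τ z) (F z) := by
    refine ((Prod.mk_right_injective (0 : ℕ)).hasSum_iff fun p hp => ?_).mp
      ((he z).congr_fun fun l => by simp [fterm, eC_zero])
    have hp0 : p.1 ≠ 0 := fun h0 => hp ⟨p.2, by rw [← h0]⟩
    simp [hp0]
  have heq := hB.coeff_unique (φ := fun _ z => F z) (f := fun n l => if n = 0 then c l else 0)
    (g := fun n l => if n = 0 then d l else 0) (extend hc) (extend hd)
  simpa using congrFun heq 0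

lemma IsWeakJacobiForm.exists_hasSum_eC_pairC (hφ : IsWeakJacobiForm B k t φ) (τ : ℍ) :
    ∃ d : LV → ℂ, ∀ z, HasSum (fun l => d l * eC (pairC B (liftC l) z)) (φ τ z) := by
  obtain ⟨f, hf⟩ := hφ
  refine ⟨_, fun z => hasSum_tsum_fiber_mul (Prod.snd : ℕ × LV → LV)
    (fun p => f p.1 p.2 * eC (p.1 * τ)) (fun l => eC (pairC B (liftC l) z)) ?_⟩
  exact (hf.expansion τ z).congr_fun fun p => by rw [fterm, mul_assoc]

/-- The character `v ↦ e((x, v) / t)` of the lattice; it depends only on the class of `x`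
modulo `t`. -/
def latticeChar (B : Matrix (Fin 24) (Fin 24) ℤ) (t : ℕ) (x : LV) : Multiplicative LV →* ℂ where
  toFun v := eC ((t : ℂ)⁻¹ * pairC B (liftC x) (liftC v.toAdd))
  map_one' := by simp [liftC_zero, pairC_zero_right, eC_zero]
  map_mul' v u := by rw [toAdd_mul, liftC_add, pairC_add_right, mul_add, eC_add]

lemma latticeChar_apply (x : LV) (v : Multiplicative LV) :
    latticeChar B t x v = eC ((t : ℂ)⁻¹ * pairC B (liftC x) (liftC v.toAdd)) := rfl

lemma dvd_pairZ_of_latticeChar_eq (ht : 1 ≤ t) {x x' : LV}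
    (h : latticeChar B t x = latticeChar B t x') (v : LV) :
    (t : ℤ) ∣ pairZ B (x' - x) v := by
  have hv := DFunLike.congr_fun h (Multiplicative.ofAdd v)
  simp only [latticeChar_apply, toAdd_ofAdd] at hv
  have hone : eC ((t : ℂ)⁻¹ * pairC B (liftC (x' - x)) (liftC v)) = 1 := by
    rw [sub_eq_add_neg, liftC_add, pairC_add_left, mul_add, eC_add, ← hv, ← eC_add, ← mul_add,
      ← pairC_add_left, liftC_neg, add_neg_cancel, pairC_zero_left, mul_zero, eC_zero]
  obtain ⟨n, hn⟩ := eC_eq_one_iff.mp hone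
  have ht' : (t : ℂ) ≠ 0 := by exact_mod_cast (by lia : t ≠ 0)
  refine ⟨n, ?_⟩
  rw [pairC_liftC, inv_mul_eq_iff_eq_mul₀ ht'] at hn
  exact_mod_cast hn

lemma IsNiemeier.exists_sub_eq_smul_of_latticeChar_eq (hB : IsNiemeier B) (ht : 1 ≤ t) {x x' : LV}
    (h : latticeChar B t x = latticeChar B t x') : ∃ w : LV, x' - x = (t : ℤ) • w := by
  choose u hu using fun i => dvd_pairZ_of_latticeChar_eq ht h (Pi.single i 1)
  have hvecMul : (x' - x) ᵥ* B = (t : ℤ) • u := by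
    funext i
    have hi := hu i
    rw [pairZ, dotProduct_mulVec, dotProduct_single, mul_one] at hi
    exact hi
  refine ⟨u ᵥ* B⁻¹, ?_⟩
  rw [← smul_vecMul, ← hvecMul, vecMul_vecMul,
    mul_nonsing_inv _ (by rw [hB.det_eq_one]; exact isUnit_one), vecMul_one]

lemma linearIndependent_sum_of_forall_eq {R M ι κ α : Type*} [Ring R] [IsDomain R] [CharZero R]
    [AddCommGroup M] [Module R M] {e : κ → M} (he : LinearIndependent R e) (g : ι → α → κ)
    {S : Finset α} {s₀ : α} (hs₀ : s₀ ∈ S) (hg : ∀ i i', ∀ s ∈ S, g i' s = g i s₀ → i' = i) :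
    LinearIndependent R fun i => ∑ s ∈ S, e (g i s) := by
  classical
  rw [linearIndependent_iff']
  intro Q c hc i hi
  have hzero : ∑ i ∈ Q, ∑ s ∈ S, Finsupp.single (g i s) (c i) = 0 := by
    refine linearIndependent_iff.mp he _ ?_
    simpa only [map_sum, Finsupp.linearCombination_single, ← Finset.smul_sum] using hc
  have heval := DFunLike.congr_fun hzero (g i s₀)
  simp only [Finsupp.finsetSum_apply, Finsupp.single_apply, Finsupp.coe_zero,
    Pi.zero_apply] at heval
  rw [Finset.sum_eq_single_of_mem i hi fun i' _ hne => Finset.sum_eq_zero fun s hs =>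
    if_neg fun h => hne (hg i i' s hs h), ← Finset.sum_filter, Finset.sum_const,
    nsmul_eq_mul, mul_eq_zero, Nat.cast_eq_zero, Finset.card_eq_zero] at heval
  exact heval.resolve_left (Finset.ne_empty_of_mem (Finset.mem_filter.mpr ⟨hs₀, rfl⟩))

lemma natCard_le_card_of_mem_span {R M ι κ : Type*} [Ring R] [StrongRankCondition R]
    [AddCommGroup M] [Module R M] [Fintype ι] {v : κ → M} {w : ι → M} (hv : LinearIndependent R v)
    (hw : ∀ j, v j ∈ Submodule.span R (Set.range w)) : Nat.card κ ≤ Fintype.card ι := by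
  classical
  have hcard := linearIndependent_le_span' v hv (Set.range w) (Set.range_subset_iff.mpr hw)
  calc Nat.card κ ≤ Cardinal.toNat (Fintype.card (Set.range w)) :=
        Cardinal.toNat_le_toNat hcard Cardinal.natCast_lt_aleph0
    _ = Fintype.card (Set.range w) := Cardinal.toNat_natCast _
    _ ≤ Fintype.card ι := Fintype.card_range_le w

/-- The average of `latticeChar` over the automorphism group, up to normalization: the function
`v ↦ ∑ σ, e((x, σ v) / t)`. -/
def averagedChar (hB : IsNiemeier B) (t : ℕ) (x : LV) : Multiplicative LV → ℂ :=
  ∑ σ ∈ hB.finite_conwayGroup.toFinset, ⇑(latticeChar B t (σ⁻¹.mulVec x))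

lemma linearIndependent_averagedChar (hB : IsNiemeier B) (ht : 1 ≤ t) :
    LinearIndependent ℂ fun q : Quot fun v u : minimalSet B t => conjModT B t v.1 u.1 =>
      averagedChar hB t q.out.1 := by
  have hchar := linearIndependent_monoidHom (Multiplicative LV) ℂ
  refine linearIndependent_sum_of_forall_eq hchar
    (fun (q : Quot fun v u : minimalSet B t => conjModT B t v.1 u.1)
      (σ : Matrix (Fin 24) (Fin 24) ℤ) => latticeChar B t (σ⁻¹.mulVec q.out.1))
    (S := hB.finite_conwayGroup.toFinset) (s₀ := 1)
    (hB.finite_conwayGroup.mem_toFinset.mpr one_mem_conwayGroup) ?_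
  intro q q' σ hσ h
  rw [inv_one, one_mulVec] at h
  obtain ⟨w, hw⟩ := hB.exists_sub_eq_smul_of_latticeChar_eq ht h
  rw [← Quot.out_eq q, ← Quot.out_eq q']
  exact (Quot.sound ⟨σ⁻¹, inv_mem_conwayGroup (hB.finite_conwayGroup.mem_toFinset.mp hσ),
    w, hw⟩).symm

lemma IsNiemeier.hasSum_sum_theta_pow (hB : IsNiemeier B) {p : LV → ℂ}
    (hp : ∀ z, HasSum (fun l => p l * eC (pairC B (liftC l) z))
      (thetaLeech B UpperHalfPlane.I z ^ t)) (v : LV) (z : CV) :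
    HasSum (fun l => p l * averagedChar hB t l (Multiplicative.ofAdd v) *
        eC (pairC B (liftC l) z))
      (∑ σ ∈ hB.finite_conwayGroup.toFinset,
        thetaLeech B UpperHalfPlane.I (z + (t : ℂ)⁻¹ • liftC (σ.mulVec v)) ^ t) := by
  refine (hasSum_sum fun σ _ => hp (z + (t : ℂ)⁻¹ • liftC (σ.mulVec v))).congr_fun fun l => ?_
  rw [averagedChar, Finset.sum_apply, Finset.mul_sum, Finset.sum_mul]
  refine Finset.sum_congr rfl fun σ hσ => ?_
  have hσ' : σ ∈ ConwayGroup B := by simpa using hσ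
  have hpair : pairZ B (σ⁻¹.mulVec l) v = pairZ B l (σ.mulVec v) := by
    rw [← pairZ_mulVec hσ', mulVec_mulVec_inv hσ']
  rw [latticeChar_apply, toAdd_ofAdd, pairC_add_right, pairC_smul_right, eC_add, pairC_liftC,
    pairC_liftC, hpair]
  ring

section Span

variable {ι : Type*} [Fintype ι] {F : ι → CV → ℂ} {d : ι → LV → ℂ}

lemma IsNiemeier.exists_mul_averagedChar_eq_sum (hB : IsNiemeier B) (ht : 1 ≤ t)
    (hd : ∀ i z, HasSum (fun l => d i l * eC (pairC B (liftC l) z)) (F i z))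
    (hF : ∀ k ψ, IsWeakJacobiForm B k t ψ → ψ UpperHalfPlane.I ∈ Submodule.span ℂ (Set.range F))
    {p : LV → ℂ} (hp : ∀ z, HasSum (fun l => p l * eC (pairC B (liftC l) z))
      (thetaLeech B UpperHalfPlane.I z ^ t)) (v : Multiplicative LV) :
    ∃ c : ι → ℂ, ∀ l, p l * averagedChar hB t l v = ∑ i, c i * d i l := by
  have : FiniteDimensional ℂ (Submodule.span ℂ (Set.range F)) :=
    FiniteDimensional.span_of_finite ℂ (Set.finite_range F)
  obtain ⟨c, hc⟩ := (Submodule.mem_span_range_iff_exists_fun ℂ).mp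
    (hB.sum_theta_pow_mem ht hF v.toAdd)
  refine ⟨c, congrFun (hB.coeff_eq_of_hasSum_eC_pairC (hB.hasSum_sum_theta_pow hp v.toAdd)
    fun z => ?_)⟩
  rw [← congrFun hc z, Finset.sum_apply]
  simp only [Finset.sum_mul, Pi.smul_apply, smul_eq_mul, mul_assoc]
  exact hasSum_sum fun i _ => (hd i z).mul_left (c i)

lemma IsNiemeier.sRank_le_card (hB : IsNiemeier B) (ht : 1 ≤ t)
    (hd : ∀ i z, HasSum (fun l => d i l * eC (pairC B (liftC l) z)) (F i z))
    (hF : ∀ k ψ, IsWeakJacobiForm B k t ψ →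
      ψ UpperHalfPlane.I ∈ Submodule.span ℂ (Set.range F)) :
    sRank B t ≤ Fintype.card ι := by
  obtain ⟨p, hp0, hp⟩ := hB.exists_hasSum_theta_I_pow ht
  choose c hc using hB.exists_mul_averagedChar_eq_sum ht hd hF hp
  have hspan (x : LV) : averagedChar hB t x ∈
      Submodule.span ℂ (Set.range fun i v => c v i) := by
    refine (Submodule.mem_span_range_iff_exists_fun ℂ).mpr ⟨fun i => (p x)⁻¹ * d i x, ?_⟩
    funext v
    rw [(eq_inv_mul_iff_mul_eq₀ (hp0 x)).mpr (hc v x), Finset.sum_apply, Finset.mul_sum]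
    refine Finset.sum_congr rfl fun i _ => ?_
    simp only [Pi.smul_apply, smul_eq_mul]
    ring
  exact natCard_le_card_of_mem_span (linearIndependent_averagedChar hB ht) fun q => hspan q.out.1

end Span

end LowerBound

/-! ### Freeness -/

section Freeness

variable {B : Matrix (Fin 24) (Fin 24) ℤ} {t N : ℕ} {P : ℤ → (ℍ → CV → ℂ) → Prop}

lemma IsGradedBasis.sRank_le_card {ι : Type*} [Fintype ι] {w : ι → ℤ} {φ : ι → ℍ → CV → ℂ}
    (h : IsGradedBasis P w φ) (hB : IsNiemeier B) (ht : 1 ≤ t)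
    (hweak : ∀ k ψ, P k ψ → IsWeakJacobiForm B k t ψ)
    (hdiscr : ∀ k ψ, IsWeakJacobiForm B k t ψ → P (k + 12 * N) (discrForm ^ N • ψ)) :
    sRank B t ≤ Fintype.card ι := by
  choose d hd using fun i => (hweak _ _ (h.mem i)).exists_hasSum_eC_pairC UpperHalfPlane.I
  refine hB.sRank_le_card ht hd fun k ψ hψ => ?_
  obtain ⟨g, -, hg⟩ := h.exists_eq_sum _ _ (hdiscr k ψ hψ)
  have hI : (discrForm ^ N) UpperHalfPlane.I • ψ UpperHalfPlane.I =
      ∑ i, g i UpperHalfPlane.I • φ i UpperHalfPlane.I := by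
    simpa only [Pi.smul_apply', Finset.sum_apply] using congrFun hg UpperHalfPlane.I
  have hne : (discrForm ^ N) UpperHalfPlane.I ≠ 0 := pow_ne_zero N (discrForm_ne_zero _)
  rw [← Submodule.smul_mem_iff _ hne, hI]
  exact Submodule.sum_mem _ fun i _ =>
    Submodule.smul_mem _ _ (Submodule.subset_span (Set.mem_range_self i))

theorem IsRegularGradedModule.exists_freelyGenerates (hP : IsRegularGradedModule P)
    (hB : IsNiemeier B) (ht : 1 ≤ t) (hweak : ∀ k ψ, P k ψ → IsWeakJacobiForm B k t ψ)
    (hdiscr : ∀ k ψ, IsWeakJacobiForm B k t ψ → P (k + 12 * N) (discrForm ^ N • ψ)) :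
    ∃ (w : Fin (sRank B t) → ℤ) (φ : Fin (sRank B t) → ℍ → CV → ℂ), FreelyGenerates P w φ := by
  obtain ⟨n, w, φ, hn, h⟩ := hP.exists_isGradedBasis (s := sRank B t) fun n w φ hφ hind => by
    simpa using hB.card_le_sRank ht (fun i => hweak _ _ (hφ i)) hind
  have hle : sRank B t ≤ n := by simpa using h.sRank_le_card hB ht hweak hdiscr
  obtain rfl := hn.antisymm hle
  exact ⟨w, φ, h.freelyGenerates⟩

end Freeness

theorem conway_weak_jacobi_free_of_rank_s_general
    (B : Matrix (Fin 24) (Fin 24) ℤ) (hB : IsNiemeier B) (t : ℕ) (ht : 1 ≤ t) :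
    (∃ (w : Fin (sRank B t) → ℤ) (φ : Fin (sRank B t) → UpperHalfPlane → CV → ℂ),
      FreelyGenerates (fun k ψ => IsWeakJacobiForm B k t ψ) w φ) ∧
    (∀ (n : ℕ) (w : Fin n → ℤ) (φ : Fin n → UpperHalfPlane → CV → ℂ)
        (f : Fin n → ℕ → LV → ℂ),
      (∀ i, IsJacobiFormWith B (w i) t (φ i) (f i)) →
      FreelyGenerates (fun k ψ => IsWeakJacobiForm B k t ψ) w φ →
      (∀ (i : Fin n) (ℓ : LV), f i 0 ℓ ≠ 0 → ℓ ∈ minimalSet B t) ∧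
        LinearIndependent ℂ (fun i : Fin n => f i 0)) ∧
    (∃ (w : Fin (sRank B t) → ℤ) (φ : Fin (sRank B t) → UpperHalfPlane → CV → ℂ),
      FreelyGenerates (fun k ψ => IsHolJacobiForm B k t ψ) w φ) := by
  have hweak := hB.isRegularGradedModule_weak ht
  refine ⟨?_, fun n w φ f hf h => ⟨fun i l hl => ?_, ?_⟩, ?_⟩
  · exact hweak.exists_freelyGenerates (N := 0) hB ht (fun _ _ h => h) (by simp)
  · exact (hf i).mem_minimalSet_of_coeff_ne_zero hB hl
  · exact (h.isGradedBasis hweak.zero).linearIndependent_coeff_zero hB hf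
  · obtain ⟨N, hN⟩ := hB.exists_isHolJacobiForm_discrForm_pow_smul ht
    exact (hB.isRegularGradedModule_hol ht).exists_freelyGenerates hB ht
      (fun _ _ h => h.isWeakJacobiForm) hN

/-- Theorem (Sun–Wang): For every `t ≥ 1`, the space `J^{w,Co₀}_{*,Λ,t}` of Conway invariant
weak Jacobi forms of integral weight and index `t` is a free module of rank `s(t)` over
`M_*(SL₂(ℤ)) = ℂ[E₄,E₆]`; the `q⁰`-terms of any set of free generators are `ℂ`-linear
combinations of the basic Conway orbits of index `t` (i.e. supported on `S_t`) and are
linearly independent over `ℂ`; and `J^{Co₀}_{*,Λ,t}` is also a free module of the same rank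
`s(t)` over `ℂ[E₄,E₆]`. -/
theorem conway_weak_jacobi_free_of_rank_s
    (B : Matrix (Fin 24) (Fin 24) ℤ) (hB : IsLeech B) (t : ℕ) (ht : 1 ≤ t) :
    (∃ (w : Fin (sRank B t) → ℤ) (φ : Fin (sRank B t) → UpperHalfPlane → CV → ℂ),
      FreelyGenerates (fun k ψ => IsWeakJacobiForm B k t ψ) w φ) ∧
    (∀ (n : ℕ) (w : Fin n → ℤ) (φ : Fin n → UpperHalfPlane → CV → ℂ)
        (f : Fin n → ℕ → LV → ℂ),
      (∀ i, IsJacobiFormWith B (w i) t (φ i) (f i)) →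
      FreelyGenerates (fun k ψ => IsWeakJacobiForm B k t ψ) w φ →
      (∀ (i : Fin n) (ℓ : LV), f i 0 ℓ ≠ 0 → ℓ ∈ minimalSet B t) ∧
        LinearIndependent ℂ (fun i : Fin n => f i 0)) ∧
    (∃ (w : Fin (sRank B t) → ℤ) (φ : Fin (sRank B t) → UpperHalfPlane → CV → ℂ),
      FreelyGenerates (fun k ψ => IsHolJacobiForm B k t ψ) w φ) :=
  conway_weak_jacobi_free_of_rank_s_general B hB.isNiemeier t ht

end
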